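/- Let 1 ≤ n < N be integers. Define K_1 : (ℝ^N)^{n+2} → [0,∞) by K_1(x_0,…,x_{n+1}) := H^{n+1}(Δ(x_0,…,x_{n+1})) / ∏_{0 ≤ i < j ≤ n+1} |x_i − x_j| when the points x_0,…,x_{n+1} are pairwise distinct, and K_1(x_0,…,x_{n+1}) := 0 otherwise. If E ⊂ ℝ^N is a Borel set with M_{K_1^2}(E) := ∫_E ⋯ ∫_E K_1^2(x_0,…,x_{n+1}) dH^n(x_0)⋯dH^n(x_{n+1}) < ∞, then E is n-rectifiable. -/

import Mathlib

open MeasureTheory Metric Set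
open scoped NNReal ENNReal

noncomputable section

/-- The integral Menger curvature `M_{K^p}(μ) = ∫⋯∫ K^p dμ ⋯ dμ`. -/
def MengerEnergy (N n : ℕ) (p : ℝ) (K : (Fin (n + 2) → EuclideanSpace ℝ (Fin N)) → ℝ)
    (μ : Measure (EuclideanSpace ℝ (Fin N))) : ℝ≥0∞ :=
  ∫⁻ z, ENNReal.ofReal (K z ^ p) ∂(Measure.pi fun _ : Fin (n + 2) => μ)

/-- `E` is `n`-rectifiable: up to an `H^n`-null set it is covered by countably many
Lipschitz images of `ℝ^n`. -/
def IsNRectifiable (N n : ℕ) (E : Set (EuclideanSpace ℝ (Fin N))) : Prop :=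
  ∃ f : ℕ → EuclideanSpace ℝ (Fin n) → EuclideanSpace ℝ (Fin N),
    (∀ i, ∃ L : ℝ≥0, LipschitzWith L (f i)) ∧
    μH[(n : ℝ)] (E \ ⋃ i, Set.range (f i)) = 0

open Classical

/-- The explicit higher-dimensional Menger curvature integrand
`K₁(x₀,…,x_{n+1}) = H^{n+1}(Δ(x₀,…,x_{n+1})) / ∏_{i<j} |x_i − x_j|` for pairwise-distinct
points, and `0` otherwise. -/
def K1 (N n : ℕ) (x : Fin (n + 2) → EuclideanSpace ℝ (Fin N)) : ℝ :=
  if Function.Injective x then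
    (μH[((n : ℝ) + 1)] (convexHull ℝ (Set.range x))).toReal /
      ∏ i : Fin (n + 2), ∏ j ∈ Finset.univ.filter (fun j => i < j), dist (x i) (x j)
  else 0

/-!
Up to a constant factor, `K1 x ^ 2` is the Gram determinant of the edges of the simplex `x` divided
by the squares of all its side lengths. When one face of `x` is nondegenerate, it therefore bounds
the squared distance, relative to the size of `x`, of the opposite vertex from the plane of that
face.

The part of `E` seen by the curvature is a countable union of sets of finite measure, and the rest
is flat. By exhaustion, it is enough to find a Lipschitz image of `ℝ ^ n` meeting a given set of
finite positive measure and finite curvature in positive measure. Restricting to a small ball in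
which the set is dense, one may assume that the upper density is bounded and that the pointwise
curvature is small. At every scale and place where the set is still dense, averaging the curvature
over nondegenerate simplices then gives a plane which is close to the set.

At a point `x`, stop at the first scale, coming down from the diameter, where the set is sparse
around `x` or leaves a cone of slope `α` around the plane of the top scale. Points which never stop
lie on a Lipschitz graph. A covering by balls shows that few points stop because of sparsity.
The points which stop because of steepness have slopes of size `α` at the stopping scale, while the
slope at the top scale is small. Along a dyadic subdivision of a coordinate line, the parallelogram
law turns the difference of the squared slopes into a sum of squared second differences over all
scales. These are bounded by the curvature at each scale, and their sum by the total curvature, so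
few points stop for this reason either.
-/

namespace Menger

/-! ### Quantitative linear independence and Gram determinants -/

/-- Quantitative linear independence: every coefficient of a linear combination of the vectors
`u i` is at most `c⁻¹` times the norm of the combination. -/
def LinIndepWith {ι V : Type*} [Fintype ι] [NormedAddCommGroup V] [NormedSpace ℝ V] (c : ℝ)
    (u : ι → V) : Prop :=
  ∀ (a : ι → ℝ) (i : ι), c * |a i| ≤ ‖∑ j, a j • u j‖

namespace LinIndepWith

variable {ι V : Type*} [Fintype ι] [NormedAddCommGroup V] [NormedSpace ℝ V] {c : ℝ} {u : ι → V}

lemma linearIndependent (h : LinIndepWith c u) (hc : 0 < c) : LinearIndependent ℝ u := by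
  refine Fintype.linearIndependent_iff.2 fun a ha i => ?_
  have := h a i
  rw [ha, norm_zero] at this
  exact abs_eq_zero.1 (le_antisymm (by nlinarith [abs_nonneg (a i)]) (abs_nonneg _))

lemma le_norm (h : LinIndepWith c u) (i : ι) : c ≤ ‖u i‖ := by
  simpa [Pi.single_apply] using h (Pi.single i 1) i

lemma castSucc {k : ℕ} {u : Fin (k + 1) → V} (h : LinIndepWith c u) :
    LinIndepWith c (fun j : Fin k => u j.castSucc) := by
  intro a i
  simpa [Fin.sum_univ_castSucc] using h (Fin.snoc a 0) i.castSucc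

lemma of_norm_sum_le {V' : Type*} [NormedAddCommGroup V'] [NormedSpace ℝ V'] {e : ℝ}
    {u' : ι → V'} (h : LinIndepWith c u) (hc : Fintype.card ι * e ≤ c / 2)
    (hu : ∀ a : ι → ℝ, ‖∑ j, a j • u j‖ ≤ ‖∑ j, a j • u' j‖ + ∑ j, |a j| * e) :
    LinIndepWith (c / 2) u' := by
  intro a i
  rcases lt_or_ge c 0 with hneg | hc0
  · exact (mul_nonpos_of_nonpos_of_nonneg (by linarith) (abs_nonneg _)).trans (norm_nonneg _)
  obtain ⟨i₀, -, hmax⟩ :=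
    Finset.exists_max_image Finset.univ (fun j => |a j|) ⟨i, Finset.mem_univ i⟩
  have hle : ∀ j, |a j| ≤ |a i₀| := fun j => hmax j (Finset.mem_univ j)
  have herror : ∑ j, |a j| * e ≤ c / 2 * |a i₀| := by
    rcases lt_or_ge e 0 with he | he
    · exact (Finset.sum_nonpos fun j _ => mul_nonpos_of_nonneg_of_nonpos (abs_nonneg _) he.le).trans
        (by positivity)
    calc ∑ j, |a j| * e ≤ ∑ _j : ι, |a i₀| * e :=
        Finset.sum_le_sum fun j _ => mul_le_mul_of_nonneg_right (hle j) he
      _ = Fintype.card ι * e * |a i₀| := by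
        rw [Finset.sum_const, Finset.card_univ, nsmul_eq_mul]; ring
      _ ≤ _ := by gcongr
  linarith [h a i₀, hu a, mul_le_mul_of_nonneg_left (hle i) (show 0 ≤ c / 2 by linarith)]

lemma perturb {e : ℝ} {u' : ι → V} (h : LinIndepWith c u) (hu : ∀ j, ‖u j - u' j‖ ≤ e)
    (hc : Fintype.card ι * e ≤ c / 2) : LinIndepWith (c / 2) u' := by
  refine h.of_norm_sum_le hc fun a => ?_
  have hdiff : ‖∑ j, a j • u j - ∑ j, a j • u' j‖ ≤ ∑ j, |a j| * e := by
    rw [← Finset.sum_sub_distrib]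
    refine norm_sum_le_of_le _ fun j _ => ?_
    rw [← smul_sub, norm_smul, Real.norm_eq_abs]
    gcongr
    exact hu j
  linarith [norm_sub_norm_le (∑ j, a j • u j) (∑ j, a j • u' j)]

end LinIndepWith

section Gram

variable {V : Type*} [NormedAddCommGroup V] [InnerProductSpace ℝ V]

lemma gram_sum_smul {ι κ : Type*} [Fintype ι] (A : Matrix κ ι ℝ) (v : ι → V) :
    Matrix.gram ℝ (fun i => ∑ j, A i j • v j) = A * Matrix.gram ℝ v * A.transpose := by
  ext i i'
  simp only [Matrix.gram_apply, Matrix.mul_apply, Matrix.transpose_apply, sum_inner, inner_sum,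
    inner_smul_left, inner_smul_right, Finset.mul_sum, Finset.sum_mul, conj_trivial]
  exact Finset.sum_congr rfl fun j _ => Finset.sum_congr rfl fun j' _ => by ring

lemma det_gram_comp_equiv {ι κ : Type*} [Fintype ι] [Fintype κ] [DecidableEq ι]
    [DecidableEq κ] (e : ι ≃ κ) (v : κ → V) :
    (Matrix.gram ℝ (v ∘ e)).det = (Matrix.gram ℝ v).det := by
  rw [← Matrix.det_submatrix_equiv_self e (Matrix.gram ℝ v)]
  rfl

lemma det_gram_sumElim_of_orthogonal {ι : Type*} [Fintype ι] [DecidableEq ι] {u : ι → V} {e : V}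
    (h : ∀ i, inner ℝ e (u i) = 0) :
    (Matrix.gram ℝ (Sum.elim u fun _ : Unit => e)).det = ‖e‖ ^ 2 * (Matrix.gram ℝ u).det := by
  have hblock : Matrix.gram ℝ (Sum.elim u fun _ : Unit => e) =
      Matrix.fromBlocks (Matrix.gram ℝ u) 0 0 (Matrix.of fun _ _ => ‖e‖ ^ 2) := by
    ext (i | i) (j | j)
    · rfl
    · simpa [Matrix.gram_apply, real_inner_comm] using h i
    · simpa [Matrix.gram_apply] using h j
    · simp [Matrix.gram_apply]
  rw [hblock, Matrix.det_fromBlocks_zero₂₁, Matrix.det_unique (n := Unit), mul_comm,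
    Matrix.of_apply]

lemma det_gram_sumElim_add_sum {ι : Type*} [Fintype ι] [DecidableEq ι] (u : ι → V) (e : V)
    (a : ι → ℝ) :
    (Matrix.gram ℝ (Sum.elim u fun _ : Unit => e + ∑ j, a j • u j)).det =
      (Matrix.gram ℝ (Sum.elim u fun _ : Unit => e)).det := by
  let P : Matrix (ι ⊕ Unit) (ι ⊕ Unit) ℝ :=
    Matrix.fromBlocks 1 0 (Matrix.of fun _ j => a j) 1
  have hP : P.det = 1 := by simp [P]
  have hcomb : (Sum.elim u fun _ : Unit => e + ∑ j, a j • u j) =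
      fun i => ∑ j, P i j • (Sum.elim u fun _ : Unit => e) j := by
    funext i
    rcases i with i | i
    · simp [P, Matrix.one_apply]
    · simp [P, add_comm]
  rw [hcomb, gram_sum_smul, Matrix.det_mul, Matrix.det_mul, Matrix.det_transpose, hP, one_mul,
    mul_one]

lemma exists_orthogonal_residual {ι : Type*} [Fintype ι] (u : ι → V) (w : V) :
    ∃ a : ι → ℝ, ∀ j, inner ℝ (w - ∑ i, a i • u i) (u j) = 0 := by
  let W := Submodule.span ℝ (Set.range u)
  have : FiniteDimensional ℝ W := FiniteDimensional.span_of_finite ℝ (Set.finite_range u)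
  obtain ⟨a, ha⟩ := (Submodule.mem_span_range_iff_exists_fun ℝ).1
    (Submodule.starProjection_apply_mem W w)
  refine ⟨a, fun j => ?_⟩
  rw [ha, real_inner_comm]
  exact Submodule.sub_starProjection_mem_orthogonal (K := W) w _ (Submodule.subset_span ⟨j, rfl⟩)

lemma exists_det_gram_snoc {k : ℕ} (u : Fin k → V) (w : V) :
    ∃ a : Fin k → ℝ, (Matrix.gram ℝ (Fin.snoc u w : Fin (k + 1) → V)).det =
      ‖w - ∑ j, a j • u j‖ ^ 2 * (Matrix.gram ℝ u).det := by
  obtain ⟨a, ha⟩ := exists_orthogonal_residual u w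
  let σ : Fin k ⊕ Unit ≃ Fin (k + 1) :=
    (Equiv.sumCongr (Equiv.refl _) (Equiv.ofUnique Unit (Fin 1))).trans finSumFinEquiv
  have hσ : (Fin.snoc u w : Fin (k + 1) → V) ∘ σ = Sum.elim u fun _ : Unit => w := by
    funext i
    rcases i with i | _
    · exact Fin.snoc_castSucc (α := fun _ => V) w u i
    · exact Fin.snoc_last (α := fun _ => V) w u
  have hw : w = w - ∑ j, a j • u j + ∑ j, a j • u j := (sub_add_cancel _ _).symm
  refine ⟨a, ?_⟩
  rw [← det_gram_comp_equiv σ, hσ, ← det_gram_sumElim_of_orthogonal ha,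
    ← det_gram_sumElim_add_sum u (w - ∑ j, a j • u j) a, ← hw]

namespace LinIndepWith

variable {k : ℕ} {c : ℝ}

lemma pow_le_det_gram {u : Fin k → V} (h : LinIndepWith c u) (hc : 0 ≤ c) :
    c ^ (2 * k) ≤ (Matrix.gram ℝ u).det := by
  induction k with
  | zero => simp
  | succ k ih =>
    obtain ⟨a, ha⟩ := exists_det_gram_snoc (Fin.init u) (u (Fin.last k))
    rw [Fin.snoc_init_self] at ha
    have hinit : c ^ (2 * k) ≤ (Matrix.gram ℝ (Fin.init u)).det := ih h.castSucc
    have hresidual : c ≤ ‖u (Fin.last k) - ∑ j, a j • Fin.init u j‖ := by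
      have := h (Fin.snoc (fun j => - a j) 1) (Fin.last k)
      simp only [Fin.snoc_last, abs_one, mul_one, Fin.sum_univ_castSucc, Fin.snoc_castSucc,
        one_smul, neg_smul, Finset.sum_neg_distrib] at this
      rwa [neg_add_eq_sub] at this
    rw [ha]
    calc c ^ (2 * (k + 1)) = c ^ 2 * c ^ (2 * k) := by ring
      _ ≤ _ := by gcongr

lemma exists_le_det_gram_snoc {u : Fin k → V} (h : LinIndepWith c u) (hc : 0 ≤ c) (w : V) :
    ∃ a : Fin k → ℝ, ‖w - ∑ j, a j • u j‖ ^ 2 * c ^ (2 * k) ≤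
      (Matrix.gram ℝ (Fin.snoc u w : Fin (k + 1) → V)).det := by
  obtain ⟨a, ha⟩ := exists_det_gram_snoc u w
  exact ⟨a, by rw [ha]; gcongr; exact h.pow_le_det_gram hc⟩

end LinIndepWith

end Gram

/-! ### The curvature integrand in terms of Gram determinants -/

section Edges

/-- The edges of the simplex `x` issuing from its vertex `x 0`. -/
def edges {V : Type*} [AddGroup V] {n : ℕ} (x : Fin (n + 1) → V) : Fin n → V :=
  fun j => x j.succ - x 0

lemma edges_snoc {V : Type*} [AddGroup V] {n : ℕ} (t : Fin (n + 1) → V) (z : V) :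
    edges (Fin.snoc t z : Fin (n + 2) → V) = Fin.snoc (edges t) (z - t 0) := by
  funext i
  have h0 : (Fin.snoc t z : Fin (n + 2) → V) 0 = t 0 := by simp
  refine Fin.lastCases ?_ (fun i => ?_) i
  · simp only [edges, h0, Fin.snoc_last, Fin.succ_last]
  · simp only [edges, h0, Fin.snoc_castSucc, Fin.succ_castSucc]

lemma affineIndependent_iff_linearIndependent_edges {V : Type*} [AddCommGroup V] [Module ℝ V]
    {n : ℕ} (x : Fin (n + 1) → V) : AffineIndependent ℝ x ↔ LinearIndependent ℝ (edges x) := by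
  rw [affineIndependent_iff_linearIndependent_vsub ℝ x 0,
    ← linearIndependent_equiv (finSuccAboveEquiv 0)]
  rfl

end Edges

section Volume

/-- The vertices `0, e₀, …, e_{d-1}` of the corner simplex of `ℝ^d`. -/
def corner (d : ℕ) : Fin (d + 1) → EuclideanSpace ℝ (Fin d) :=
  Fin.cons 0 fun i => EuclideanSpace.single i 1

lemma affineSpan_corner (d : ℕ) : affineSpan ℝ (Set.range (corner d)) = ⊤ := by
  rw [AffineSubspace.affineSpan_eq_top_iff_vectorSpan_eq_top_of_nonempty ℝ _ _
    (Set.range_nonempty _), eq_top_iff,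
    ← (EuclideanSpace.basisFun (Fin d) ℝ).toBasis.span_eq, Submodule.span_le]
  rintro _ ⟨i, rfl⟩
  have h := vsub_mem_vectorSpan ℝ (Set.mem_range_self (f := corner d) i.succ)
    (Set.mem_range_self (f := corner d) 0)
  simpa [corner] using h

/-- The `d`-dimensional Hausdorff measure of the corner simplex of `ℝ^d`. Its value depends on the
normalization of `μH`, and only its positivity matters. -/
def cornerVolume (d : ℕ) : ℝ := (μH[(d : ℝ)] (convexHull ℝ (Set.range (corner d)))).toReal

lemma cornerVolume_pos (d : ℕ) : 0 < cornerVolume d := by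
  have : (μH[(d : ℝ)] : Measure (EuclideanSpace ℝ (Fin d))).IsAddHaarMeasure := by
    simpa using MeasureTheory.isAddHaarMeasure_hausdorffMeasure (E := EuclideanSpace ℝ (Fin d))
  refine ENNReal.toReal_pos (ne_of_gt ?_) (ne_of_lt ?_)
  · have h := interior_convexHull_nonempty_iff_affineSpan_eq_top.2 (affineSpan_corner d)
    exact (isOpen_interior.measure_pos _ h).trans_le (measure_mono interior_subset)
  · exact ((Set.finite_range _).isCompact_convexHull ℝ).measure_lt_top

variable {V : Type*} [NormedAddCommGroup V] [InnerProductSpace ℝ V]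

/-- The linear map taking the corner simplex to the simplex `x`, up to a translation. -/
def simplexMap {d : ℕ} (x : Fin (d + 1) → V) : EuclideanSpace ℝ (Fin d) →ₗ[ℝ] V :=
  (EuclideanSpace.basisFun (Fin d) ℝ).toBasis.constr ℝ (edges x)

lemma simplexMap_single {d : ℕ} (x : Fin (d + 1) → V) (i : Fin d) :
    simplexMap x (EuclideanSpace.single i 1) = edges x i := by
  have h := (EuclideanSpace.basisFun (Fin d) ℝ).toBasis.constr_basis ℝ (edges x) i
  rwa [OrthonormalBasis.coe_toBasis, EuclideanSpace.basisFun_apply] at h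

lemma convexHull_range_eq_image_corner {d : ℕ} (x : Fin (d + 1) → V) :
    convexHull ℝ (Set.range x) =
      (fun v => x 0 + v) '' (simplexMap x '' convexHull ℝ (Set.range (corner d))) := by
  have hx : x = (fun v => x 0 + v) ∘ simplexMap x ∘ corner d := by
    funext i
    refine Fin.cases ?_ (fun i => ?_) i
    · simp [corner]
    · simp [corner, simplexMap_single, edges]
  conv_lhs => rw [hx, Set.range_comp, Set.range_comp]
  rw [LinearMap.image_convexHull]
  exact convexHull_vadd (𝕜 := ℝ) (x 0) _

lemma hausdorffMeasure_convexHull_range_sq [MeasurableSpace V] [BorelSpace V] {d : ℕ}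
    (x : Fin (d + 1) → V) :
    (μH[(d : ℝ)] (convexHull ℝ (Set.range x))).toReal ^ 2 =
      cornerVolume d ^ 2 * (Matrix.gram ℝ (edges x)).det := by
  have himage := (simplexMap x).hausdorffMeasure_image (convexHull ℝ (Set.range (corner d)))
  have hgram : (simplexMap x).normDet ^ 2 = _ :=
    (simplexMap x).normDet_sq_eq_det_gram (EuclideanSpace.basisFun (Fin d) ℝ)
  simp only [EuclideanSpace.basisFun_apply, simplexMap_single] at hgram
  rw [finrank_euclideanSpace_fin] at himage
  rw [convexHull_range_eq_image_corner,
    (isometry_add_left (x 0)).hausdorffMeasure_image (Or.inl (by positivity)), himage,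
    ENNReal.toReal_mul, ENNReal.toReal_ofReal (simplexMap x).normDet_nonneg, mul_pow, hgram,
    cornerVolume, mul_comm]

end Volume

section PairDist

/-- The product of the distances of all pairs of points. -/
def pairDist {X : Type*} [PseudoMetricSpace X] {k : ℕ} (x : Fin k → X) : ℝ :=
  ∏ i : Fin k, ∏ j ∈ Finset.univ.filter (fun j => i < j), dist (x i) (x j)

variable {X : Type*} {k : ℕ}

lemma pairDist_nonneg [PseudoMetricSpace X] (x : Fin k → X) : 0 ≤ pairDist x :=
  Finset.prod_nonneg fun _ _ => Finset.prod_nonneg fun _ _ => dist_nonneg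

lemma pairDist_eq_zero [PseudoMetricSpace X] {x : Fin k → X} {i j : Fin k} (hij : i ≠ j)
    (h : x i = x j) : pairDist x = 0 := by
  wlog hlt : i < j generalizing i j
  · exact this hij.symm h.symm (lt_of_le_of_ne (not_lt.1 hlt) hij.symm)
  exact Finset.prod_eq_zero (Finset.mem_univ i)
    (Finset.prod_eq_zero (by simpa using hlt) (by simp [h]))

lemma pairDist_pos [MetricSpace X] {x : Fin k → X} (hx : Function.Injective x) :
    0 < pairDist x :=
  Finset.prod_pos fun _ _ => Finset.prod_pos fun _ hj =>
    dist_pos.2 fun he => (Finset.mem_filter.1 hj).2.ne (hx he)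

lemma two_mul_sum_card_lt (k : ℕ) :
    2 * ∑ i : Fin k, (Finset.univ.filter (fun j => i < j)).card = k * (k - 1) := by
  simp_rw [Finset.filter_lt_eq_Ioi, Fin.card_Ioi]
  rw [Fin.sum_univ_eq_sum_range (fun i => k - 1 - i), Finset.sum_range_reflect (fun i => i),
    mul_comm, Finset.sum_range_id_mul_two]

lemma pairDist_sq_le [PseudoMetricSpace X] {x : Fin k → X} {D : ℝ}
    (h : ∀ i j, dist (x i) (x j) ≤ D) : pairDist x ^ 2 ≤ D ^ (k * (k - 1)) := by
  have hle : pairDist x ≤ D ^ (∑ i : Fin k, (Finset.univ.filter (fun j => i < j)).card) := by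
    rw [← Finset.prod_pow_eq_pow_sum]
    refine Finset.prod_le_prod (fun _ _ => Finset.prod_nonneg fun _ _ => dist_nonneg)
      fun i _ => ?_
    rw [← Finset.prod_const]
    exact Finset.prod_le_prod (fun _ _ => dist_nonneg) fun j _ => h i j
  rw [← two_mul_sum_card_lt, mul_comm, pow_mul]
  exact pow_le_pow_left₀ (pairDist_nonneg x) hle 2

end PairDist

section CurvSq

variable {V : Type*} [NormedAddCommGroup V] [InnerProductSpace ℝ V] {n : ℕ}

/-- The square of the Menger curvature integrand `K₁`, up to the constant factor
`cornerVolume (n + 1) ^ 2`. -/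
def curvSq (x : Fin (n + 2) → V) : ℝ :=
  (Matrix.gram ℝ (edges x)).det / pairDist x ^ 2

lemma K1_sq {N : ℕ} (x : Fin (n + 2) → EuclideanSpace ℝ (Fin N)) :
    K1 N n x ^ 2 = cornerVolume (n + 1) ^ 2 * curvSq x := by
  unfold K1 curvSq
  split_ifs with h
  · have hvol := hausdorffMeasure_convexHull_range_sq x
    push_cast at hvol
    rw [div_pow, hvol, pairDist, mul_div_assoc]
  · obtain ⟨i, j, hij, hne⟩ := Function.not_injective_iff.1 h
    rw [pairDist_eq_zero hne hij]
    simp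

lemma curvSq_nonneg (x : Fin (n + 2) → V) : 0 ≤ curvSq x :=
  div_nonneg (Matrix.posSemidef_gram _ _).det_nonneg (sq_nonneg _)

lemma curvSq_pos {x : Fin (n + 2) → V} (hx : AffineIndependent ℝ x) : 0 < curvSq x :=
  div_pos (Matrix.posDef_gram_of_linearIndependent
    ((affineIndependent_iff_linearIndependent_edges x).1 hx)).det_pos
    (pow_pos (pairDist_pos hx.injective) 2)

lemma det_gram_edges_le {x : Fin (n + 2) → V} {D : ℝ} (h : ∀ i j, dist (x i) (x j) ≤ D) :
    (Matrix.gram ℝ (edges x)).det ≤ D ^ ((n + 2) * (n + 1)) * curvSq x := by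
  by_cases hx : AffineIndependent ℝ x
  · have hpos := pow_pos (pairDist_pos hx.injective) 2
    rw [curvSq, ← mul_div_assoc, le_div_iff₀ hpos, mul_comm]
    exact mul_le_mul_of_nonneg_right (pairDist_sq_le h) (Matrix.posSemidef_gram _ _).det_nonneg
  · rw [affineIndependent_iff_linearIndependent_edges,
      ← Matrix.det_gram_ne_zero_iff_linearIndependent (𝕜 := ℝ), not_not] at hx
    rw [hx]
    exact mul_nonneg (pow_nonneg (dist_nonneg.trans (h 0 0)) _) (curvSq_nonneg x)

/-- This is how integral bounds on the curvature control the distance of points from planes. -/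
lemma LinIndepWith.exists_le_curvSq {c D : ℝ} {t : Fin (n + 1) → V} (h : LinIndepWith c (edges t))
    (hc : 0 ≤ c) {z : V} (hD : ∀ i j,
      dist ((Fin.snoc t z : Fin (n + 2) → V) i) ((Fin.snoc t z : Fin (n + 2) → V) j) ≤ D) :
    ∃ a : Fin n → ℝ, ‖z - t 0 - ∑ j, a j • edges t j‖ ^ 2 * c ^ (2 * n) ≤
      D ^ ((n + 2) * (n + 1)) * curvSq (Fin.snoc t z : Fin (n + 2) → V) := by
  obtain ⟨a, ha⟩ := h.exists_le_det_gram_snoc hc (z - t 0)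
  exact ⟨a, ha.trans (by rw [← edges_snoc]; exact det_gram_edges_le hD)⟩

end CurvSq

/-! ### Separated families, large pieces and strips -/

lemma sum_pow_finrank_le_of_separated {W ι : Type*} [NormedAddCommGroup W] [NormedSpace ℝ W]
    [FiniteDimensional ℝ W] {I : Finset ι} {q : ι → W} {r : ι → ℝ} {c : W} {ρ : ℝ} (hρ : 0 ≤ ρ)
    (hr : ∀ i ∈ I, 0 ≤ r i) (hsep : ∀ i ∈ I, ∀ j ∈ I, i ≠ j → r i + r j < dist (q i) (q j))
    (hball : ∀ i ∈ I, dist (q i) c + r i ≤ ρ) :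
    ∑ i ∈ I, r i ^ Module.finrank ℝ W ≤ ρ ^ Module.finrank ℝ W := by
  let : MeasurableSpace W := borel W
  have : BorelSpace W := ⟨rfl⟩
  let μ : Measure W := Measure.addHaar
  have hpos : 0 < μ.real (ball (0 : W) 1) :=
    ENNReal.toReal_pos (measure_ball_pos μ _ one_pos).ne' measure_ball_lt_top.ne
  have hsum : μ.real (⋃ i ∈ I, closedBall (q i) (r i)) = ∑ i ∈ I, μ.real (closedBall (q i) (r i)) :=
    measureReal_biUnion_finset
      (fun i hi j hj hij => closedBall_disjoint_closedBall (hsep i hi j hj hij))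
      (fun i _ => measurableSet_closedBall) (fun i _ => measure_closedBall_lt_top.ne)
  have hle : μ.real (⋃ i ∈ I, closedBall (q i) (r i)) ≤ μ.real (closedBall c ρ) := by
    refine measureReal_mono (iUnion₂_subset fun i hi => ?_) measure_closedBall_lt_top.ne
    exact closedBall_subset_closedBall' (by linarith [hball i hi])
  rw [hsum, Measure.addHaar_real_closedBall μ c hρ,
    Finset.sum_congr rfl fun i hi => Measure.addHaar_real_closedBall μ (q i) (hr i hi),
    ← Finset.sum_mul] at hle
  exact le_of_mul_le_mul_right hle hpos

lemma exists_separated_finset_cover {X : Type*} [PseudoMetricSpace X] {A : Set X} {r B : ℝ}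
    (hr : 0 ≤ r)
    (hB : ∀ I : Finset X, ↑I ⊆ A → (I : Set X).Pairwise (fun x y => r < dist x y) → I.card ≤ B) :
    ∃ I : Finset X, ↑I ⊆ A ∧ (I : Set X).Pairwise (fun x y => r < dist x y) ∧
      A ⊆ ⋃ x ∈ I, closedBall x r := by
  by_contra! hcon
  have hlarge : ∀ k : ℕ, ∃ I : Finset X, I.card = k ∧ ↑I ⊆ A ∧
      (I : Set X).Pairwise fun x y => r < dist x y := by
    intro k
    induction k with
    | zero => exact ⟨∅, by simp⟩
    | succ k ih =>
      obtain ⟨I, hcard, hIA, hI⟩ := ih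
      obtain ⟨y, hyA, hy⟩ := not_subset.1 (hcon I hIA hI)
      simp only [mem_iUnion, mem_closedBall, not_exists, not_le] at hy
      have hyI : y ∉ I := fun h => absurd (hy y h) (by rw [dist_self]; exact not_lt.2 hr)
      refine ⟨insert y I, by rw [Finset.card_insert_of_notMem hyI, hcard], ?_, ?_⟩
      · rw [Finset.coe_insert]
        exact insert_subset hyA hIA
      · rw [Finset.coe_insert]
        exact hI.insert fun x hx _ => ⟨hy x hx, by rw [dist_comm]; exact hy x hx⟩
  obtain ⟨k, hk⟩ := exists_nat_gt B
  obtain ⟨I, rfl, hIA, hI⟩ := hlarge k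
  exact absurd (hB I hIA hI) (not_le.2 hk)

lemma exists_fin_cover_closedBall (V : Type*) [NormedAddCommGroup V] [NormedSpace ℝ V]
    [FiniteDimensional ℝ V] {κ : ℝ} (hκ : 0 < κ) :
    ∃ M : ℕ, 0 < M ∧ ∀ (x : V) (s : ℝ), 0 < s →
      ∃ c : Fin M → V, closedBall x s ⊆ ⋃ i, closedBall (c i) (κ * s) := by
  obtain ⟨T, -, hT, hcov⟩ := (isCompact_closedBall (0 : V) 1).finite_cover_balls hκ
  have hne : T.Nonempty := by
    obtain ⟨c, hc, -⟩ := mem_iUnion₂.1 (hcov (mem_closedBall_self zero_le_one))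
    exact ⟨c, hc⟩
  let e := hT.toFinset.equivFin
  refine ⟨hT.toFinset.card, Finset.card_pos.2 (by simpa using hne), fun x s hs =>
    ⟨fun i => x + s • (e.symm i : V), fun y hy => ?_⟩⟩
  have hunit : s⁻¹ • (y - x) ∈ closedBall (0 : V) 1 := by
    rw [mem_closedBall_zero_iff, norm_smul, Real.norm_eq_abs, abs_of_pos (inv_pos.2 hs),
      inv_mul_le_iff₀ hs, mul_one, ← dist_eq_norm]
    exact hy
  obtain ⟨c, hc, hyc⟩ := mem_iUnion₂.1 (hcov hunit)
  refine mem_iUnion.2 ⟨e ⟨c, by simpa using hc⟩, ?_⟩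
  have hscale : y - (x + s • c) = s • (s⁻¹ • (y - x) - c) := by
    rw [smul_sub, smul_inv_smul₀ hs.ne']; abel
  rw [mem_ball, dist_eq_norm] at hyc
  simp only [mem_closedBall, Equiv.symm_apply_apply]
  rw [dist_eq_norm, hscale, norm_smul, Real.norm_eq_abs, abs_of_pos hs, mul_comm]
  gcongr

lemma exists_large_inter_closedBall (V : Type*) [NormedAddCommGroup V] [NormedSpace ℝ V]
    [FiniteDimensional ℝ V] [MeasurableSpace V] {κ : ℝ} (hκ : 0 < κ) :
    ∃ M : ℝ, 0 < M ∧ ∀ (μ : Measure V) (A : Set V) (x : V) (s b : ℝ), 0 < s →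
      A ⊆ closedBall x s → ENNReal.ofReal b ≤ μ A →
      ∃ y, ENNReal.ofReal (b / M) ≤ μ (A ∩ closedBall y (κ * s)) := by
  obtain ⟨M, hM, hcov⟩ := exists_fin_cover_closedBall V hκ
  refine ⟨M, by positivity, fun μ A x s b hs hA hb => ?_⟩
  obtain ⟨c, hc⟩ := hcov x s hs
  by_contra! hcon
  have : Nonempty (Fin M) := ⟨⟨0, hM⟩⟩
  have hcovA : μ A ≤ ∑ i, μ (A ∩ closedBall (c i) (κ * s)) := by
    refine (measure_mono ?_).trans (measure_iUnion_fintype_le μ _)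
    rw [← inter_iUnion]
    exact subset_inter le_rfl (hA.trans hc)
  have hsmall : ∑ i, μ (A ∩ closedBall (c i) (κ * s)) < ∑ _i : Fin M, ENNReal.ofReal (b / M) :=
    ENNReal.sum_lt_sum_of_nonempty Finset.univ_nonempty fun i _ => hcon _
  rw [Finset.sum_const, Finset.card_univ, Fintype.card_fin, nsmul_eq_mul, ← ENNReal.ofReal_natCast,
    ← ENNReal.ofReal_mul (by positivity), mul_div_cancel₀ _ (by positivity)] at hsmall
  exact absurd (hb.trans hcovA) (not_le.2 hsmall)

/-- Upper Ahlfors regularity with dimension `n` and constant `C₀`. -/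
def UpperRegular {X : Type*} [PseudoMetricSpace X] [MeasurableSpace X] (n : ℕ) (C₀ : ℝ)
    (μ : Measure X) : Prop :=
  ∀ y r, 0 < r → μ (closedBall y r) ≤ ENNReal.ofReal (C₀ * r ^ n)

section Strip

variable {V : Type*} [NormedAddCommGroup V] [InnerProductSpace ℝ V]

/-- The points of `closedBall x s` at distance at most `w` from the affine subspace `p + W`. -/
def strip (W : Submodule ℝ V) [W.HasOrthogonalProjection] (p x : V) (s w : ℝ) : Set V :=
  {y | y ∈ closedBall x s ∧ ‖(y - p) - W.starProjection (y - p)‖ ≤ w}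

variable {W : Submodule ℝ V} {p x : V} {s w : ℝ}

lemma measurableSet_strip [MeasurableSpace V] [BorelSpace V] [W.HasOrthogonalProjection] :
    MeasurableSet (strip W p x s w) := by
  have h : IsClosed {y : V | ‖(y - p) - W.starProjection (y - p)‖ ≤ w} :=
    isClosed_le (by fun_prop) continuous_const
  exact (isClosed_closedBall.inter h).measurableSet

lemma le_norm_sub_of_notMem_strip [W.HasOrthogonalProjection] {y v : V} (hyx : y ∈ closedBall x s)
    (hy : y ∉ strip W p x s w) (hv : v ∈ W) : w ≤ ‖(y - p) - v‖ := by
  have hfar : w < ‖(y - p) - W.starProjection (y - p)‖ := not_le.1 fun h => hy ⟨hyx, h⟩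
  rw [W.starProjection_minimal] at hfar
  exact hfar.le.trans (ciInf_le ⟨0, by rintro _ ⟨_, rfl⟩; exact norm_nonneg _⟩ (⟨v, hv⟩ : W))

lemma dist_le_dist_orthogonalProjectionOnto_add [W.HasOrthogonalProjection] {y y' : V}
    (hy : y ∈ strip W p x s w) (hy' : y' ∈ strip W p x s w) :
    dist y y' ≤ dist (W.orthogonalProjectionOnto y) (W.orthogonalProjectionOnto y') + 2 * w := by
  have hsplit : y - y' = ((y - p) - W.starProjection (y - p)) -
      ((y' - p) - W.starProjection (y' - p)) + (W.starProjection y - W.starProjection y') := by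
    simp only [map_sub]; abel
  rw [dist_eq_norm, dist_eq_norm, hsplit]
  refine (norm_add_le_of_le (norm_sub_le_of_le hy.2 hy'.2) le_rfl).trans (le_of_eq ?_)
  rw [W.starProjection_apply, W.starProjection_apply, ← Submodule.coe_sub, Submodule.coe_norm]
  ring

lemma card_mul_pow_le_of_subset_strip [FiniteDimensional ℝ W] (hs : 0 ≤ s) (hw : 0 ≤ w)
    {I : Finset V} (hI : ↑I ⊆ strip W p x s w)
    (hsep : (I : Set V).Pairwise fun y y' => 4 * w < dist y y') :
    I.card * w ^ Module.finrank ℝ W ≤ (s + w) ^ Module.finrank ℝ W := by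
  rw [← nsmul_eq_mul, ← Finset.sum_const]
  refine sum_pow_finrank_le_of_separated (q := fun y => W.orthogonalProjectionOnto y)
    (c := W.orthogonalProjectionOnto x) (by positivity) (fun _ _ => hw)
    (fun y hy y' hy' hne => ?_) fun y hy => ?_
  · linarith [hsep hy hy' hne, dist_le_dist_orthogonalProjectionOnto_add (hI hy) (hI hy')]
  · have h := W.norm_orthogonalProjectionOnto_apply_le (y - x)
    rw [map_sub, ← dist_eq_norm, ← dist_eq_norm] at h
    linarith [mem_closedBall.1 (hI hy).1]

lemma measure_strip_le [MeasurableSpace V] [FiniteDimensional ℝ W] {n : ℕ} {C₀ : ℝ}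
    {μ : Measure V} (hμ : UpperRegular n C₀ μ) (hC₀ : 0 ≤ C₀) (hW : Module.finrank ℝ W + 1 ≤ n)
    {τ : ℝ} (hs : 0 < s) (hτ : 0 < τ) (hτ1 : τ ≤ 1) :
    μ (strip W p x s (τ * s)) ≤ ENNReal.ofReal (C₀ * 8 ^ n * τ * s ^ n) := by
  have hτs : 0 < τ * s := mul_pos hτ hs
  have hcard : ∀ I : Finset V, ↑I ⊆ strip W p x s (τ * s) →
      (I : Set V).Pairwise (fun y y' => 4 * (τ * s) < dist y y') →
      (I.card : ℝ) ≤ (2 / τ) ^ (n - 1) := by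
    intro I hI hsep
    have h2τ : 1 ≤ 2 / τ := by rw [le_div_iff₀ hτ]; linarith
    refine le_trans ?_ (pow_le_pow_right₀ h2τ (by omega : Module.finrank ℝ W ≤ n - 1))
    refine le_of_mul_le_mul_right (a := (τ * s) ^ Module.finrank ℝ W) ?_ (by positivity)
    refine (card_mul_pow_le_of_subset_strip hs.le hτs.le hI hsep).trans ?_
    rw [← mul_pow, show 2 / τ * (τ * s) = s + s by field_simp; ring]
    gcongr
    nlinarith
  obtain ⟨I, hI, hsep, hcov⟩ := exists_separated_finset_cover (by positivity) hcard
  calc μ (strip W p x s (τ * s))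
      ≤ ∑ y ∈ I, μ (closedBall y (4 * (τ * s))) :=
        (measure_mono hcov).trans (measure_biUnion_finset_le _ _)
    _ ≤ ∑ _y ∈ I, ENNReal.ofReal (C₀ * (4 * (τ * s)) ^ n) :=
        Finset.sum_le_sum fun y _ => hμ y _ (by positivity)
    _ = ENNReal.ofReal (I.card * (C₀ * (4 * (τ * s)) ^ n)) := by
        rw [Finset.sum_const, nsmul_eq_mul, ← ENNReal.ofReal_natCast,
          ← ENNReal.ofReal_mul (by positivity)]
    _ ≤ ENNReal.ofReal ((2 / τ) ^ (n - 1) * (C₀ * (4 * (τ * s)) ^ n)) := by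
        gcongr
        exact hcard I hI hsep
    _ ≤ ENNReal.ofReal (C₀ * 8 ^ n * τ * s ^ n) := by
        obtain ⟨m, rfl⟩ : ∃ m, n = m + 1 := ⟨n - 1, by omega⟩
        gcongr ENNReal.ofReal ?_
        rw [add_tsub_cancel_right, show (8 : ℝ) ^ (m + 1) = 2 * (2 ^ m * 4 ^ (m + 1)) by
          rw [show (8 : ℝ) = 2 * 4 by norm_num, mul_pow, pow_succ 2]; ring]
        calc _ = C₀ * (2 ^ m * 4 ^ (m + 1)) * τ * s ^ (m + 1) := by
              rw [div_pow, mul_pow, mul_pow, pow_succ τ]; field_simp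
          _ ≤ _ := by
              gcongr C₀ * ?_ * τ * s ^ (m + 1)
              linarith [show (0 : ℝ) ≤ 2 ^ m * 4 ^ (m + 1) by positivity]

end Strip

/-! ### Selecting nondegenerate simplices -/

namespace LinIndepWith

variable {V : Type*} [NormedAddCommGroup V] [NormedSpace ℝ V] {k : ℕ} {c : ℝ}

lemma mul_abs_le_norm_sum_add_smul {u : Fin k → V} {w : V}
    (hd : ∀ a : Fin k → ℝ, c ≤ ‖w - ∑ j, a j • u j‖) (a : Fin k → ℝ) (b : ℝ) :
    c * |b| ≤ ‖∑ j, a j • u j + b • w‖ := by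
  rcases eq_or_ne b 0 with rfl | hb
  · simp
  have hfactor : ∑ j, a j • u j + b • w = b • (w - ∑ j, (-(a j / b)) • u j) := by
    have hj : ∀ j, b • (-(a j / b)) • u j = -(a j • u j) := fun j => by
      rw [smul_smul, ← neg_smul]; congr 1; field_simp
    simp only [smul_sub, Finset.smul_sum, hj, Finset.sum_neg_distrib]
    abel
  rw [hfactor, norm_smul, Real.norm_eq_abs, mul_comm]
  gcongr
  exact hd _

lemma snoc {c' c'' D : ℝ} {u : Fin k → V} {w : V} (h : LinIndepWith c u) (hw : ‖w‖ ≤ D)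
    (hc' : 0 < c') (hd : ∀ a : Fin k → ℝ, c' ≤ ‖w - ∑ j, a j • u j‖) (hle : c'' ≤ c')
    (hmul : c'' * (c' + D) ≤ c * c') : LinIndepWith c'' (Fin.snoc u w : Fin (k + 1) → V) := by
  intro a i
  simp only [Fin.sum_univ_castSucc, Fin.snoc_castSucc, Fin.snoc_last]
  set b := a (Fin.last k)
  set y := ∑ j, a j.castSucc • u j with hy
  have hD : 0 ≤ D := (norm_nonneg _).trans hw
  have hlast : c' * |b| ≤ ‖y + b • w‖ := mul_abs_le_norm_sum_add_smul hd _ b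
  refine Fin.lastCases ?_ (fun i => ?_) i
  · exact (mul_le_mul_of_nonneg_right hle (abs_nonneg _)).trans hlast
  · have hinit : c * |a i.castSucc| ≤ ‖y + b • w‖ + |b| * D := by
      refine (h (fun j => a j.castSucc) i).trans ?_
      rw [← hy, ← add_sub_cancel_right y (b • w)]
      refine norm_sub_le_of_le (by rw [add_sub_cancel_right]) ?_
      rw [norm_smul, Real.norm_eq_abs]
      gcongr
    refine le_of_mul_le_mul_right (a := c' + D) ?_ (by positivity)
    calc c'' * |a i.castSucc| * (c' + D) = c'' * (c' + D) * |a i.castSucc| := by ring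
      _ ≤ c * c' * |a i.castSucc| := by gcongr
      _ = c' * (c * |a i.castSucc|) := by ring
      _ ≤ c' * (‖y + b • w‖ + |b| * D) := by gcongr
      _ = c' * ‖y + b • w‖ + c' * |b| * D := by ring
      _ ≤ c' * ‖y + b • w‖ + ‖y + b • w‖ * D := by gcongr
      _ = ‖y + b • w‖ * (c' + D) := by ring

lemma edges_perturb {e : ℝ} {t t' : Fin (k + 1) → V} (h : LinIndepWith c (edges t))
    (ht : ∀ j, dist (t j) (t' j) ≤ e) (he : k * (2 * e) ≤ c / 2) :
    LinIndepWith (c / 2) (edges t') := by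
  refine h.perturb (fun j => ?_) (by rwa [Fintype.card_fin])
  have hsub : t j.succ - t 0 - (t' j.succ - t' 0) = (t j.succ - t' j.succ) - (t 0 - t' 0) := by
    abel
  have hj := ht j.succ
  have h0 := ht 0
  rw [dist_eq_norm] at hj h0
  rw [edges, edges, hsub]
  linarith [norm_sub_le (t j.succ - t' j.succ) (t 0 - t' 0)]

end LinIndepWith

section Selection

variable {V : Type*} [NormedAddCommGroup V] [InnerProductSpace ℝ V] [MeasurableSpace V]

/-- The box `∏ S j` consists of `τ s`-nondegenerate `k`-simplices of `E` in `closedBall x s`, and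
its sides have `μ`-measure at least `m * s ^ n`. -/
structure IsSelection (n : ℕ) (τ m : ℝ) (μ : Measure V) (E : Set V) (x : V) (s : ℝ) {k : ℕ}
    (S : Fin (k + 1) → Set V) : Prop where
  measurableSet : ∀ j, MeasurableSet (S j)
  subset : ∀ j, S j ⊆ E ∩ closedBall x s
  le_measure : ∀ j, ENNReal.ofReal (m * s ^ n) ≤ μ (S j)
  linIndepWith : ∀ t : Fin (k + 1) → V, (∀ j, t j ∈ S j) → LinIndepWith (τ * s) (edges t)

namespace IsSelection

variable {k n : ℕ} {τ m s : ℝ} {μ : Measure V} {E : Set V} {x : V} {S : Fin (k + 1) → Set V}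

lemma nonempty (h : IsSelection n τ m μ E x s S) (hm : 0 < m) (hs : 0 < s) (j : Fin (k + 1)) :
    (S j).Nonempty := by
  refine nonempty_of_measure_ne_zero (μ := μ) (ne_of_gt (lt_of_lt_of_le ?_ (h.le_measure j)))
  rw [ENNReal.ofReal_pos]; positivity

lemma mono_measure (h : IsSelection n τ m μ E x s S) {m' : ℝ} (hm : m' ≤ m) (hs : 0 ≤ s) :
    IsSelection n τ m' μ E x s S :=
  { h with le_measure := fun j => (ENNReal.ofReal_le_ofReal (by gcongr)).trans (h.le_measure j) }

end IsSelection

variable [FiniteDimensional ℝ V] {k n : ℕ} {C₀ δ τ m s : ℝ} {μ : Measure V} {x : V}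

lemma IsSelection.snoc {E : Set V} {S : Fin (k + 1) → Set V}
    (h : IsSelection n τ m μ E x s S) {τ' τ'' κ : ℝ} (hs : 0 < s) (hτ' : 0 < τ')
    (hle : τ'' ≤ τ') (hmul : τ'' * (τ' + 2) ≤ τ * τ') (hκ0 : 0 ≤ κ)
    (hκ : (k + 1) * (4 * κ) ≤ τ'' / 2) (hS : ∀ j, ∃ c, S j ⊆ closedBall c (κ * s))
    {t : Fin (k + 1) → V} (ht : ∀ j, t j ∈ S j) {A : Set V} (hA : MeasurableSet A)
    (hAE : A ⊆ E ∩ closedBall x s) (hmA : ENNReal.ofReal (m * s ^ n) ≤ μ A)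
    (hAt : Disjoint A (strip (Submodule.span ℝ (range (edges t))) (t 0) x s (τ' * s))) :
    IsSelection n (τ'' / 2) m μ E x s (Fin.snoc S A : Fin (k + 2) → Set V) := by
  refine ⟨Fin.lastCases (by simpa using hA) (by simpa using h.measurableSet),
    Fin.lastCases (by simpa using hAE) (by simpa using h.subset),
    Fin.lastCases (by simpa using hmA) (by simpa using h.le_measure), fun t' ht' => ?_⟩
  have hinit : ∀ j : Fin (k + 1), t' j.castSucc ∈ S j := fun j => by simpa using ht' j.castSucc
  have hlast : t' (Fin.last (k + 1)) ∈ A := by simpa using ht' (Fin.last (k + 1))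
  set y := t' (Fin.last (k + 1))
  have hnorm : ‖y - t 0‖ ≤ 2 * s := by
    rw [← dist_eq_norm]
    linarith [dist_triangle_right y (t 0) x, mem_closedBall.1 (hAE hlast).2,
      mem_closedBall.1 (h.subset 0 (ht 0)).2]
  have hstar : LinIndepWith (τ'' * s) (edges (Fin.snoc t y : Fin (k + 2) → V)) := by
    rw [edges_snoc]
    refine (h.linIndepWith t ht).snoc hnorm (c' := τ' * s) (by positivity)
      (fun a => le_norm_sub_of_notMem_strip (hAE hlast).2 (hAt.notMem_of_mem_left hlast)
        (Submodule.sum_mem _ fun j _ => Submodule.smul_mem _ _ (Submodule.subset_span ⟨j, rfl⟩)))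
      (by gcongr) ?_
    linarith [mul_le_mul_of_nonneg_right hmul (mul_self_nonneg s)]
  rw [div_mul_eq_mul_div]
  refine hstar.edges_perturb (e := 2 * (κ * s)) (fun j => ?_) ?_
  · revert j
    refine Fin.lastCases ?_ fun j => ?_
    · rw [Fin.snoc_last, dist_self]; positivity
    · obtain ⟨c, hc⟩ := hS j
      rw [Fin.snoc_castSucc]
      linarith [dist_triangle_right (t j) (t' j.castSucc) c, mem_closedBall.1 (hc (ht j)),
        mem_closedBall.1 (hc (hinit j))]
  · push_cast
    linarith [mul_le_mul_of_nonneg_right hκ hs.le]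

lemma le_measure_diff_strip (hμ : UpperRegular n C₀ μ) (hC₀ : 0 ≤ C₀) {W : Submodule ℝ V}
    (hW : Module.finrank ℝ W + 1 ≤ n) (hs : 0 < s) (hτ : 0 < τ)
    (hτ1 : τ ≤ 1) (hδτ : C₀ * 8 ^ n * τ ≤ δ / 2) {A : Set V} (p : V)
    (hA : ENNReal.ofReal (δ * s ^ n) ≤ μ A) :
    ENNReal.ofReal (δ / 2 * s ^ n) ≤ μ (A \ strip W p x s (τ * s)) := by
  have hδ : 0 ≤ δ / 2 := (by positivity : 0 ≤ C₀ * 8 ^ n * τ).trans hδτ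
  have hstrip : μ (strip W p x s (τ * s)) ≤ ENNReal.ofReal (δ / 2 * s ^ n) :=
    (measure_strip_le hμ hC₀ hW hs hτ hτ1).trans (by gcongr)
  refine (ENNReal.add_le_add_iff_right (a := ENNReal.ofReal (δ / 2 * s ^ n))
    ENNReal.ofReal_ne_top).1 ?_
  calc _ = ENNReal.ofReal (δ * s ^ n) := by
        rw [← ENNReal.ofReal_add (by positivity) (by positivity)]; congr 1; ring
    _ ≤ μ A := hA
    _ ≤ μ (A \ strip W p x s (τ * s)) + μ (strip W p x s (τ * s)) := by
        rw [add_comm]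
        refine (measure_le_inter_add_sdiff μ A (strip W p x s (τ * s))).trans ?_
        gcongr
        exact inter_subset_right
    _ ≤ _ := by gcongr

lemma exists_isSelection_zero (V : Type*) [NormedAddCommGroup V] [InnerProductSpace ℝ V]
    [FiniteDimensional ℝ V] [MeasurableSpace V] [BorelSpace V] (n : ℕ) (τ : ℝ) {δ κ : ℝ}
    (hδ : 0 < δ) (hκ : 0 < κ) :
    ∃ m : ℝ, 0 < m ∧ ∀ (μ : Measure V) (E : Set V), MeasurableSet E → ∀ (x : V) (s : ℝ), 0 < s →
      ENNReal.ofReal (δ * s ^ n) ≤ μ (E ∩ closedBall x s) →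
      ∃ S : Fin 1 → Set V, IsSelection n τ m μ E x s S ∧
        ∀ j, ∃ c, S j ⊆ closedBall c (κ * s) := by
  obtain ⟨M, hM, hlarge⟩ := exists_large_inter_closedBall V hκ
  refine ⟨δ / M, by positivity, fun μ E hE x s hs hx => ?_⟩
  obtain ⟨y, hy⟩ := hlarge μ _ x s _ hs inter_subset_right hx
  refine ⟨fun _ => E ∩ closedBall x s ∩ closedBall y (κ * s), ⟨fun _ =>
    (hE.inter measurableSet_closedBall).inter measurableSet_closedBall, fun _ => inter_subset_left,
    fun _ => ?_, fun t _ a i => i.elim0⟩, fun _ => ⟨y, inter_subset_right⟩⟩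
  rwa [div_mul_eq_mul_div]

lemma exists_isSelection_succ [BorelSpace V] (hk : k + 1 ≤ n) (hC₀ : 0 ≤ C₀) {τ' τ'' κ M : ℝ}
    (hm : 0 < m) (hτ' : 0 < τ') (hτ'1 : τ' ≤ 1) (hδτ : C₀ * 8 ^ n * τ' ≤ δ / 2)
    (hle : τ'' ≤ τ') (hmul : τ'' * (τ' + 2) ≤ τ * τ') (hκ0 : 0 ≤ κ)
    (hκ : (k + 1) * (4 * κ) ≤ τ'' / 2) (hμ : UpperRegular n C₀ μ)
    (hlarge : ∀ (A : Set V) (x : V) (s b : ℝ), 0 < s → A ⊆ closedBall x s →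
      ENNReal.ofReal b ≤ μ A → ∃ y, ENNReal.ofReal (b / M) ≤ μ (A ∩ closedBall y (κ * s)))
    {E : Set V} (hE : MeasurableSet E) (hs : 0 < s)
    (hx : ENNReal.ofReal (δ * s ^ n) ≤ μ (E ∩ closedBall x s)) {S : Fin (k + 1) → Set V}
    (hS : IsSelection n τ m μ E x s S) (hSκ : ∀ j, ∃ c, S j ⊆ closedBall c (κ * s)) :
    ∃ S : Fin (k + 2) → Set V, IsSelection n (τ'' / 2) (min m (δ / 2 / M)) μ E x s S ∧
      ∀ j, ∃ c, S j ⊆ closedBall c (κ * s) := by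
  choose t ht using hS.nonempty hm hs
  set W := Submodule.span ℝ (range (edges t))
  have hW : Module.finrank ℝ W + 1 ≤ n := by
    have := finrank_range_le_card (R := ℝ) (edges t)
    rw [Fintype.card_fin] at this
    exact (Nat.succ_le_succ this).trans hk
  obtain ⟨y, hy⟩ := hlarge ((E ∩ closedBall x s) \ strip W (t 0) x s (τ' * s)) x s _ hs
    (sdiff_subset.trans inter_subset_right)
    (le_measure_diff_strip hμ hC₀ hW hs hτ' hτ'1 hδτ (t 0) hx)
  refine ⟨_, (hS.mono_measure (min_le_left _ _) hs.le).snoc hs hτ' hle hmul hκ0 hκ hSκ ht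
    (A := ((E ∩ closedBall x s) \ strip W (t 0) x s (τ' * s)) ∩ closedBall y (κ * s)) ?_
    (inter_subset_left.trans sdiff_subset) (le_trans (ENNReal.ofReal_le_ofReal ?_) hy)
    (disjoint_sdiff_left.mono_left inter_subset_left),
    Fin.lastCases ⟨y, by simp⟩ fun j => by simpa using hSκ j⟩
  · exact ((hE.inter measurableSet_closedBall).diff measurableSet_strip).inter
      measurableSet_closedBall
  · calc min m (δ / 2 / M) * s ^ n ≤ δ / 2 / M * s ^ n := by gcongr; exact min_le_right _ _
      _ = δ / 2 * s ^ n / M := by ring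

lemma exists_isSelection (V : Type*) [NormedAddCommGroup V] [InnerProductSpace ℝ V]
    [FiniteDimensional ℝ V] [MeasurableSpace V] [BorelSpace V] (n : ℕ) {δ C₀ : ℝ} (hδ : 0 < δ)
    (hC₀ : 0 ≤ C₀) {k : ℕ} (hk : k ≤ n) :
    ∃ τ : ℝ, 0 < τ ∧ ∀ κ : ℝ, 0 < κ → ∃ m : ℝ, 0 < m ∧
      ∀ (μ : Measure V) (E : Set V), MeasurableSet E → UpperRegular n C₀ μ →
      ∀ (x : V) (s : ℝ), 0 < s → ENNReal.ofReal (δ * s ^ n) ≤ μ (E ∩ closedBall x s) →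
      ∃ S : Fin (k + 1) → Set V, IsSelection n τ m μ E x s S ∧
        ∀ j, ∃ c, S j ⊆ closedBall c (κ * s) := by
  induction k with
  | zero =>
    refine ⟨1, one_pos, fun κ hκ => ?_⟩
    obtain ⟨m, hm, h⟩ := exists_isSelection_zero V n 1 hδ hκ
    exact ⟨m, hm, fun μ E hE _ => h μ E hE⟩
  | succ k ih =>
    obtain ⟨τ, hτ, ih⟩ := ih (by omega)
    let τ' := min 1 (δ / 2 / (C₀ * 8 ^ n + 1))
    have hτ' : 0 < τ' := by positivity
    have hδτ : C₀ * 8 ^ n * τ' ≤ δ / 2 := by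
      have : τ' * (C₀ * 8 ^ n + 1) ≤ δ / 2 :=
        (le_div_iff₀ (by positivity)).1 (min_le_right _ _)
      linarith
    let τ'' := min τ' (τ * τ' / (τ' + 2))
    have : 0 < τ'' := by positivity
    refine ⟨τ'' / 2, by positivity, fun κ hκ => ?_⟩
    let κ' := min κ (τ'' / 2 / ((k + 1) * 4))
    have hκ' : 0 < κ' := by positivity
    obtain ⟨M, hM, hlarge⟩ := exists_large_inter_closedBall V hκ'
    obtain ⟨m, hm, ih⟩ := ih κ' hκ'
    refine ⟨min m (δ / 2 / M), by positivity, fun μ E hE hμ x s hs hx => ?_⟩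
    obtain ⟨S, hS, hSκ⟩ := ih μ E hE hμ x s hs hx
    obtain ⟨S', hS', hS'κ⟩ := exists_isSelection_succ hk hC₀ hm hτ' (min_le_left _ _) hδτ
      (min_le_left _ _) ((le_div_iff₀ (by positivity)).1 (min_le_right _ _)) hκ'.le
      (by rw [← mul_assoc, mul_comm]; exact (le_div_iff₀ (by positivity)).1 (min_le_right _ _))
      hμ (hlarge μ) hE hs hx hS hSκ
    refine ⟨S', hS', fun j => ?_⟩
    obtain ⟨c, hc⟩ := hS'κ j
    exact ⟨c, hc.trans (closedBall_subset_closedBall (by gcongr; exact min_le_left _ _))⟩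

end Selection

/-! ### Curvature at a point and at a scale -/

section Curvature

variable {V : Type*} [NormedAddCommGroup V] {n : ℕ}

/-- The simplices all of whose edges at the vertex `0` have length between `τ * s` and `2 * s`. -/
def shell (V : Type*) [NormedAddCommGroup V] (n : ℕ) (τ s : ℝ) : Set (Fin (n + 1) → V) :=
  {t | ∀ j, τ * s ≤ ‖edges t j‖ ∧ ‖edges t j‖ ≤ 2 * s}

lemma measurableSet_shell [MeasurableSpace V] [BorelSpace V] [SecondCountableTopology V] (n : ℕ)
    (τ s : ℝ) : MeasurableSet (shell V n τ s) := by
  have hedge : ∀ j : Fin n, Continuous fun t : Fin (n + 1) → V => ‖edges t j‖ := by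
    intro j; unfold edges; fun_prop
  refine IsClosed.measurableSet ?_
  simp only [shell, ofPred_forall, ofPred_and]
  exact isClosed_iInter fun j =>
    (isClosed_le continuous_const (hedge j)).inter (isClosed_le (hedge j) continuous_const)

lemma card_filter_geometric_le {τ R : ℝ} (hτ : 0 < τ) (hR : 0 < R) {J : ℕ} (hJ : 2 / τ < 2 ^ J)
    (M : ℕ) (D : ℝ) : ((Finset.range M).filter
      fun k => τ * (R * (1 / 2) ^ k) ≤ D ∧ D ≤ 2 * (R * (1 / 2) ^ k)).card ≤ J := by
  set F := (Finset.range M).filter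
    fun k => τ * (R * (1 / 2) ^ k) ≤ D ∧ D ≤ 2 * (R * (1 / 2) ^ k)
  rcases F.eq_empty_or_nonempty with h | h
  · simp [h]
  obtain ⟨k₀, hk₀, hmin⟩ := F.exists_min_image id h
  have hsub : F ⊆ Finset.Ico k₀ (k₀ + J) := by
    intro k hk
    obtain ⟨d, rfl⟩ := Nat.exists_eq_add_of_le (hmin k hk)
    refine Finset.mem_Ico.2 ⟨Nat.le_add_right _ _, Nat.add_lt_add_left ?_ _⟩
    have hle := (Finset.mem_filter.1 hk₀).2.1.trans (Finset.mem_filter.1 hk).2.2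
    have hτd : τ ≤ 2 * (1 / 2) ^ d := by
      refine le_of_mul_le_mul_right (a := R * (1 / 2) ^ k₀) ?_ (by positivity)
      rw [id_eq, pow_add] at hle
      linarith
    refine (pow_lt_pow_iff_right₀ (one_lt_two : (1 : ℝ) < 2)).1 (lt_of_le_of_lt ?_ hJ)
    rw [le_div_iff₀ hτ]
    calc (2 : ℝ) ^ d * τ ≤ 2 ^ d * (2 * (1 / 2) ^ d) := by gcongr
      _ = 2 := by rw [mul_left_comm, ← mul_pow]; norm_num
  exact (Finset.card_le_card hsub).trans (by simp)

variable [InnerProductSpace ℝ V] [MeasurableSpace V]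

/-- The part of the pointwise curvature at `z` coming from simplices of size about `s`. -/
def scaleCurv (n : ℕ) (μ : Measure V) (τ s : ℝ) (z : V) : ℝ≥0∞ :=
  ∫⁻ t in shell V n τ s, ENNReal.ofReal (curvSq (Fin.snoc t z : Fin (n + 2) → V))
    ∂(Measure.pi fun _ : Fin (n + 1) => μ)

/-- The pointwise curvature at `z`: the integral of the squared curvature over all simplices with
last vertex `z`. -/
def pointCurv (n : ℕ) (μ : Measure V) (z : V) : ℝ≥0∞ :=
  ∫⁻ t, ENNReal.ofReal (curvSq (Fin.snoc t z : Fin (n + 2) → V))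
    ∂(Measure.pi fun _ : Fin (n + 1) => μ)

lemma scaleCurv_le_pointCurv (n : ℕ) (μ : Measure V) (τ s : ℝ) (z : V) :
    scaleCurv n μ τ s z ≤ pointCurv n μ z := setLIntegral_le_lintegral _ _

variable [BorelSpace V] [SecondCountableTopology V]

lemma measurable_curvSq : Measurable (curvSq : (Fin (n + 2) → V) → ℝ) := by
  refine Measurable.div (Continuous.measurable ?_) (Continuous.measurable ?_)
  · refine Continuous.matrix_det (continuous_matrix fun i j => ?_)
    simp only [Matrix.gram_apply, edges]
    fun_prop
  · unfold pairDist
    fun_prop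

lemma measurable_curvSq_snoc_prod :
    Measurable fun p : V × (Fin (n + 1) → V) => curvSq (Fin.snoc p.2 p.1 : Fin (n + 2) → V) := by
  refine measurable_curvSq.comp (measurable_pi_iff.2 (Fin.lastCases ?_ fun i => ?_))
  · simpa using measurable_fst
  · simp only [Fin.snoc_castSucc]
    fun_prop

lemma measurable_curvSq_snoc (z : V) :
    Measurable fun t : Fin (n + 1) → V => curvSq (Fin.snoc t z : Fin (n + 2) → V) :=
  Measurable.of_uncurry_left (f := fun z t => curvSq (Fin.snoc t z : Fin (n + 2) → V))
    measurable_curvSq_snoc_prod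

/-- Every simplex belongs to at most `J` of the shells of the scales `R / 2 ^ k`. -/
lemma sum_scaleCurv_le (hn : 1 ≤ n) {τ R : ℝ} (hτ : 0 < τ) (hR : 0 < R) {J : ℕ}
    (hJ : 2 / τ < 2 ^ J) (μ : Measure V) (M : ℕ) (z : V) :
    ∑ k ∈ Finset.range M, scaleCurv n μ τ (R * (1 / 2) ^ k) z ≤ J * pointCurv n μ z := by
  have hmeas : Measurable fun t : Fin (n + 1) → V =>
      ENNReal.ofReal (curvSq (Fin.snoc t z : Fin (n + 2) → V)) :=
    (measurable_curvSq_snoc z).ennreal_ofReal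
  simp only [scaleCurv, pointCurv]
  rw [← lintegral_const_mul _ hmeas]
  simp_rw [← lintegral_indicator (measurableSet_shell (V := V) n τ _)]
  rw [← lintegral_finsetSum _ fun k _ => hmeas.indicator (measurableSet_shell n τ _)]
  refine lintegral_mono fun t => ?_
  simp only [indicator_apply]
  rw [← Finset.sum_filter, Finset.sum_const, nsmul_eq_mul]
  gcongr
  refine (Finset.card_le_card ?_).trans (card_filter_geometric_le hτ hR hJ M ‖edges t ⟨0, hn⟩‖)
  exact Finset.monotone_filter_right _ fun k _ hk => hk ⟨0, hn⟩

end Curvature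

namespace IsSelection

variable {V : Type*} [NormedAddCommGroup V] [InnerProductSpace ℝ V] [MeasurableSpace V]
  {n k : ℕ} {τ m s : ℝ} {μ : Measure V} {E : Set V} {x : V} {S : Fin (k + 1) → Set V}

lemma dist_le (hS : IsSelection n τ m μ E x s S) {t : Fin (k + 1) → V} (ht : ∀ j, t j ∈ S j)
    (j : Fin (k + 1)) : dist (t j) x ≤ s :=
  (hS.subset j (ht j)).2

lemma pi_subset_shell (hS : IsSelection n τ m μ E x s S) : Set.pi univ S ⊆ shell V k τ s := by
  intro t ht j
  have ht' : ∀ j, t j ∈ S j := fun j => ht j (mem_univ j)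
  refine ⟨(hS.linIndepWith t ht').le_norm j, ?_⟩
  rw [edges, ← dist_eq_norm]
  linarith [dist_triangle_right (t j.succ) (t 0) x, hS.dist_le ht' j.succ, hS.dist_le ht' 0]

lemma pow_le_measure_pi [SigmaFinite μ] (hS : IsSelection n τ m μ E x s S) (hm : 0 ≤ m)
    (hs : 0 ≤ s) :
    ENNReal.ofReal ((m * s ^ n) ^ (k + 1)) ≤
      Measure.pi (fun _ : Fin (k + 1) => μ) (Set.pi univ S) := by
  rw [Measure.pi_pi, ENNReal.ofReal_pow (by positivity)]
  calc ENNReal.ofReal (m * s ^ n) ^ (k + 1)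
      = ∏ _j : Fin (k + 1), ENNReal.ofReal (m * s ^ n) := by simp
    _ ≤ _ := Finset.prod_le_prod' fun j _ => hS.le_measure j

end IsSelection

section GoodSimplex

variable {V : Type*} [NormedAddCommGroup V] [InnerProductSpace ℝ V] {n : ℕ} {τ m s : ℝ} {x : V}

/-- The constant in the approximation of points by a plane spanned by a good simplex. -/
def apxConst (n : ℕ) (τ m : ℝ) : ℝ := 4 ^ ((n + 2) * (n + 1)) / (τ ^ (2 * n) * m ^ (n + 1))

lemma apxConst_pos (n : ℕ) (hτ : 0 < τ) (hm : 0 < m) : 0 < apxConst n τ m := by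
  unfold apxConst; positivity

lemma LinIndepWith.exists_norm_sub_sq_le {t : Fin (n + 1) → V} (h : LinIndepWith (τ * s) (edges t))
    (hτ : 0 < τ) (hm : 0 < m) (hs : 0 < s) (ht : ∀ j, dist (t j) x ≤ s) {z : V}
    (hz : dist z x ≤ 2 * s) {Q : ℝ}
    (hQ : curvSq (Fin.snoc t z : Fin (n + 2) → V) * (m * s ^ n) ^ (n + 1) ≤ Q) :
    ∃ a : Fin n → ℝ, ‖z - t 0 - ∑ j, a j • edges t j‖ ^ 2 ≤ apxConst n τ m * s ^ 2 * Q := by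
  have hdist : ∀ i, dist ((Fin.snoc t z : Fin (n + 2) → V) i) x ≤ 2 * s := by
    refine Fin.lastCases ?_ fun i => ?_
    · simpa using hz
    · simpa using (ht i).trans (by linarith)
  obtain ⟨a, ha⟩ := h.exists_le_curvSq (D := 4 * s) (by positivity) (z := z) fun i j => by
    linarith [hdist i, hdist j, dist_triangle_right ((Fin.snoc t z : Fin (n + 2) → V) i)
      ((Fin.snoc t z : Fin (n + 2) → V) j) x]
  refine ⟨a, le_of_mul_le_mul_right (a := (τ * s) ^ (2 * n) * (m * s ^ n) ^ (n + 1)) ?_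
    (by positivity)⟩
  have hconst : apxConst n τ m * s ^ 2 * Q * ((τ * s) ^ (2 * n) * (m * s ^ n) ^ (n + 1)) =
      (4 * s) ^ ((n + 2) * (n + 1)) * Q := by
    unfold apxConst
    rw [mul_pow 4 s, show (n + 2) * (n + 1) = 2 + 2 * n + n * (n + 1) by ring, pow_add s, pow_add s,
      mul_pow τ, mul_pow m, ← pow_mul]
    field_simp
  rw [hconst, ← mul_assoc]
  refine (mul_le_mul_of_nonneg_right ha (by positivity)).trans ?_
  rw [mul_assoc]
  gcongr

variable [MeasurableSpace V] [BorelSpace V] [SecondCountableTopology V]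

/-- The simplex is found by averaging the curvature over the box `∏ S j`. -/
lemma IsSelection.exists_good_simplex {μ : Measure V} [IsFiniteMeasure μ]
    {E : Set V} {S : Fin (n + 1) → Set V} (hS : IsSelection n τ m μ E x s S)
    (hτ : 0 < τ) (hm : 0 < m) (hs : 0 < s) {Z : Finset V} (hZ : ∀ z ∈ Z, z ∈ closedBall x (2 * s))
    (hfin : ∑ z ∈ Z, scaleCurv n μ τ s z ≠ ∞) :
    ∃ t : Fin (n + 1) → V, (∀ j, t j ∈ S j) ∧ ∀ z ∈ Z, ∃ a : Fin n → ℝ,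
      ‖z - t 0 - ∑ j, a j • edges t j‖ ^ 2 ≤
        apxConst n τ m * s ^ 2 * (∑ z ∈ Z, scaleCurv n μ τ s z).toReal := by
  let P : Measure (Fin (n + 1) → V) := Measure.pi fun _ => μ
  let f : (Fin (n + 1) → V) → ℝ≥0∞ := fun t =>
    ∑ z ∈ Z, ENNReal.ofReal (curvSq (Fin.snoc t z : Fin (n + 2) → V))
  have hmeas : ∀ z, Measurable fun t : Fin (n + 1) → V =>
      ENNReal.ofReal (curvSq (Fin.snoc t z : Fin (n + 2) → V)) := fun z =>
    (measurable_curvSq_snoc z).ennreal_ofReal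
  have hlow : ENNReal.ofReal ((m * s ^ n) ^ (n + 1)) ≤ P (Set.pi univ S) :=
    hS.pow_le_measure_pi hm.le hs.le
  have hP0 : P (Set.pi univ S) ≠ 0 :=
    (lt_of_lt_of_le (ENNReal.ofReal_pos.2 (by positivity)) hlow).ne'
  obtain ⟨t, ht, hft⟩ := exists_le_setLAverage hP0 (measure_ne_top P _)
    (Finset.measurable_sum _ fun z _ => hmeas z).aemeasurable (f := f)
  have ht' : ∀ j, t j ∈ S j := fun j => ht j (mem_univ j)
  have haverage : f t * P (Set.pi univ S) ≤ ∑ z ∈ Z, scaleCurv n μ τ s z := by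
    rw [setLAverage_eq] at hft
    refine (mul_le_mul_left hft _).trans ?_
    rw [ENNReal.div_mul_cancel hP0 (measure_ne_top P _)]
    refine (lintegral_mono_set hS.pi_subset_shell).trans_eq ?_
    exact lintegral_finsetSum _ fun z _ => hmeas z
  refine ⟨t, ht', fun z hz => (hS.linIndepWith t ht').exists_norm_sub_sq_le hτ hm hs
    (hS.dist_le ht') (hZ z hz) ?_⟩
  have hz' : ENNReal.ofReal (curvSq (Fin.snoc t z : Fin (n + 2) → V)) ≤ f t :=
    Finset.single_le_sum (f := fun z => ENNReal.ofReal (curvSq (Fin.snoc t z : Fin (n + 2) → V)))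
      (fun _ _ => zero_le) hz
  rw [← ENNReal.ofReal_le_iff_le_toReal hfin, ENNReal.ofReal_mul (curvSq_nonneg _)]
  exact (mul_le_mul' hz' hlow).trans haverage

end GoodSimplex

/-! ### Orthogonal splittings -/

section Split

variable {V X : Type*} [NormedAddCommGroup V] [NormedSpace ℝ V]
  [NormedAddCommGroup X] [NormedSpace ℝ X]

/-- The maps `π` and `σ` are the two components of an orthogonal splitting of `V`, up to an
isometric identification of the first summand with a subspace of `X`. -/
def IsSplit (π : V →ₗ[ℝ] X) (σ : V →ₗ[ℝ] V) : Prop :=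
  ∀ v, ‖v‖ ^ 2 = ‖π v‖ ^ 2 + ‖σ v‖ ^ 2

variable {π : V →ₗ[ℝ] X} {σ : V →ₗ[ℝ] V}

namespace IsSplit

lemma norm_fst_le (h : IsSplit π σ) (v : V) : ‖π v‖ ≤ ‖v‖ :=
  le_of_sq_le_sq (by linarith [h v, sq_nonneg ‖σ v‖]) (norm_nonneg _)

lemma norm_snd_le (h : IsSplit π σ) (v : V) : ‖σ v‖ ≤ ‖v‖ :=
  le_of_sq_le_sq (by linarith [h v, sq_nonneg ‖π v‖]) (norm_nonneg _)

lemma norm_le_add (h : IsSplit π σ) (v : V) : ‖v‖ ≤ ‖π v‖ + ‖σ v‖ :=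
  le_of_sq_le_sq (by nlinarith [h v, norm_nonneg (π v), norm_nonneg (σ v)])
    (by positivity)

lemma norm_le_two_mul (h : IsSplit π σ) {v : V} {α : ℝ} (hα : α ≤ 1 / 2)
    (hv : ‖σ v‖ ≤ α * ‖v‖) : ‖v‖ ≤ 2 * ‖π v‖ := by
  nlinarith [h.norm_le_add v, norm_nonneg v]

end IsSplit

lemma LinIndepWith.fst {ι : Type*} [Fintype ι] {c e : ℝ} {u : ι → V} (hu : LinIndepWith c u)
    (h : IsSplit π σ) (hσ : ∀ j, ‖σ (u j)‖ ≤ e) (hc : Fintype.card ι * e ≤ c / 2) :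
    LinIndepWith (c / 2) (fun j => π (u j)) := by
  refine hu.of_norm_sum_le hc fun a => (h.norm_le_add _).trans ?_
  simp only [map_sum, map_smul]
  gcongr
  refine norm_sum_le_of_le _ fun j _ => ?_
  rw [norm_smul, Real.norm_eq_abs]
  gcongr
  exact hσ j

variable {n : ℕ} [FiniteDimensional ℝ X]

lemma LinIndepWith.exists_sum_smul_eq {c : ℝ} {u : Fin n → X} (hu : LinIndepWith c u) (hc : 0 < c)
    (hX : Module.finrank ℝ X = n) (q : X) : ∃ b : Fin n → ℝ, ∑ j, b j • u j = q := by
  have hspan := (hu.linearIndependent hc).span_eq_top_of_card_eq_finrank' (by simp [hX])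
  exact (Submodule.mem_span_range_iff_exists_fun ℝ).1 (hspan ▸ Submodule.mem_top)

lemma LinIndepWith.exists_weights {c : ℝ} {p : Fin (n + 1) → X} (hp : LinIndepWith c (edges p))
    (hc : 0 < c) (hX : Module.finrank ℝ X = n) (q : X) :
    ∃ w : Fin (n + 1) → ℝ, ∑ j, w j = 1 ∧ ∑ j, w j • p j = q ∧
      ∑ j, |w j| ≤ 1 + 2 * n * (‖q - p 0‖ / c) := by
  obtain ⟨b, hb⟩ := hp.exists_sum_smul_eq hc hX (q - p 0)
  refine ⟨Fin.cons (1 - ∑ j, b j) b, by simp [Fin.sum_univ_succ], ?_, ?_⟩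
  · simp only [edges, smul_sub, Finset.sum_sub_distrib, ← Finset.sum_smul] at hb
    simp only [Fin.sum_univ_succ, Fin.cons_zero, Fin.cons_succ, sub_smul, one_smul]
    rw [sub_eq_sub_iff_add_eq_add] at hb
    rw [sub_add_eq_add_sub, sub_eq_iff_eq_add, ← hb, add_comm]
  · simp only [Fin.sum_univ_succ, Fin.cons_zero, Fin.cons_succ]
    have hsum : ∑ j, |b j| ≤ n * (‖q - p 0‖ / c) := by
      calc ∑ j, |b j| ≤ ∑ _j : Fin n, ‖q - p 0‖ / c := by
            gcongr with j
            rw [le_div_iff₀ hc, mul_comm, ← hb]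
            exact hp b j
        _ = _ := by simp
    have hhead : |1 - ∑ j, b j| ≤ 1 + ∑ j, |b j| := by
      refine (abs_sub _ _).trans ?_
      rw [abs_one]
      gcongr
      exact Finset.abs_sum_le_sum_abs _ _
    linarith

lemma LinIndepWith.norm_map_le {V : Type*} [NormedAddCommGroup V] [NormedSpace ℝ V] {c e : ℝ}
    {u : Fin n → X} (hu : LinIndepWith c u) (hc : 0 < c) (hX : Module.finrank ℝ X = n)
    {Λ : X →ₗ[ℝ] V} (hΛ : ∀ j, ‖Λ (u j)‖ ≤ e) (q : X) : ‖Λ q‖ ≤ n * e / c * ‖q‖ := by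
  obtain ⟨a, rfl⟩ := hu.exists_sum_smul_eq hc hX q
  set q := ∑ j, a j • u j with hq
  have hcoeff : ∀ j, |a j| ≤ ‖q‖ / c := fun j => by
    rw [le_div_iff₀ hc, mul_comm]; exact hu a j
  calc ‖Λ q‖ = ‖∑ j, a j • Λ (u j)‖ := by simp only [hq, map_sum, map_smul]
    _ ≤ ∑ _j : Fin n, ‖q‖ / c * e := by
        refine norm_sum_le_of_le _ fun j _ => ?_
        rw [norm_smul, Real.norm_eq_abs]
        exact mul_le_mul (hcoeff j) (hΛ j) (norm_nonneg _) (by positivity)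
    _ = n * e / c * ‖q‖ := by
        rw [Finset.sum_const, Finset.card_univ, Fintype.card_fin, nsmul_eq_mul]; ring

lemma LinIndepWith.exists_slope {V : Type*} [NormedAddCommGroup V] [NormedSpace ℝ V] {c e : ℝ}
    {u : Fin n → X} (hu : LinIndepWith c u) (hc : 0 < c) (hX : Module.finrank ℝ X = n)
    {v : Fin n → V} (hv : ∀ j, ‖v j‖ ≤ e) (hec : n * e ≤ c) :
    ∃ Λ : X →ₗ[ℝ] V, (∀ j, Λ (u j) = v j) ∧ ∀ q, ‖Λ q‖ ≤ ‖q‖ := by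
  let b := basisOfLinearIndependentOfCardEqFinrank' u (hu.linearIndependent hc) (by simp [hX])
  have hΛ : ∀ j, b.constr ℝ v (u j) = v j := fun j => by
    simpa [b] using b.constr_basis ℝ v j
  refine ⟨b.constr ℝ v, hΛ, fun q =>
    (hu.norm_map_le hc hX (fun j => by rw [hΛ j]; exact hv j) q).trans ?_⟩
  exact mul_le_of_le_one_left (norm_nonneg _) ((div_le_one hc).2 hec)

end Split

section SelectionSplit

variable {V X : Type*} [NormedAddCommGroup V] [InnerProductSpace ℝ V] [MeasurableSpace V]
  [NormedAddCommGroup X] [NormedSpace ℝ X] {π : V →ₗ[ℝ] X} {σ : V →ₗ[ℝ] V}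
  {n : ℕ} {τ m e s : ℝ} {μ : Measure V} {E : Set V} {x : V} {S : Fin (n + 1) → Set V}

namespace IsSelection

lemma norm_snd_edges_le (hS : IsSelection n τ m μ E x s S)
    (hcone : ∀ y ∈ E ∩ closedBall x s, ‖σ (y - x)‖ ≤ e * s)
    {t : Fin (n + 1) → V} (ht : ∀ j, t j ∈ S j) (j : Fin n) : ‖σ (edges t j)‖ ≤ 2 * e * s := by
  have hedge : edges t j = (t j.succ - x) - (t 0 - x) := by simp [edges]
  rw [hedge, map_sub]
  linarith [norm_sub_le (σ (t j.succ - x)) (σ (t 0 - x)), hcone _ (hS.subset _ (ht j.succ)),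
    hcone _ (hS.subset _ (ht 0))]

lemma linIndepWith_fst (hS : IsSelection n τ m μ E x s S)
    (hs : 0 < s) (h : IsSplit π σ) (he : 4 * n * e ≤ τ)
    (hcone : ∀ y ∈ E ∩ closedBall x s, ‖σ (y - x)‖ ≤ e * s)
    {t : Fin (n + 1) → V} (ht : ∀ j, t j ∈ S j) :
    LinIndepWith (τ * s / 2) (fun j => π (edges t j)) := by
  refine (hS.linIndepWith t ht).fst h (hS.norm_snd_edges_le hcone ht) ?_
  rw [Fintype.card_fin]
  nlinarith

lemma exists_affine_approx [BorelSpace V] [SecondCountableTopology V] [FiniteDimensional ℝ X]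
    [IsFiniteMeasure μ] (hX : Module.finrank ℝ X = n) (hS : IsSelection n τ m μ E x s S)
    (hτ : 0 < τ) (hm : 0 < m) (hs : 0 < s) (h : IsSplit π σ) (he : 4 * n * e ≤ τ)
    (hcone : ∀ y ∈ E ∩ closedBall x s, ‖σ (y - x)‖ ≤ e * s)
    (Z : Finset V) (hZ : ∀ z ∈ Z, z ∈ closedBall x (2 * s))
    (hfin : ∑ z ∈ Z, scaleCurv n μ τ s z ≠ ∞) :
    ∃ t : Fin (n + 1) → V, (∀ j, t j ∈ S j) ∧ ∃ (Λ : X →ₗ[ℝ] V) (c : V),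
      (∀ j, c + Λ (π (t j)) = σ (t j)) ∧
      ∀ z ∈ Z, ‖σ z - (c + Λ (π z))‖ ^ 2 ≤
        4 * apxConst n τ m * s ^ 2 * (∑ z ∈ Z, scaleCurv n μ τ s z).toReal := by
  obtain ⟨t, ht, happrox⟩ := hS.exists_good_simplex hτ hm hs hZ hfin
  obtain ⟨Λ, hΛ, hΛle⟩ := (hS.linIndepWith_fst hs h he hcone ht).exists_slope (by positivity) hX
    (hS.norm_snd_edges_le hcone ht) (by nlinarith)
  refine ⟨t, ht, Λ, σ (t 0) - Λ (π (t 0)), fun j => ?_, fun z hz => ?_⟩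
  · induction j using Fin.cases with
    | zero => simp
    | succ j =>
      have hj := hΛ j
      simp only [edges, map_sub] at hj
      rw [sub_add_eq_add_sub, add_sub_assoc, hj]; abel
  · obtain ⟨a, ha⟩ := happrox z hz
    set v := z - t 0 - ∑ j, a j • edges t j with hv
    have herror : σ z - (σ (t 0) - Λ (π (t 0)) + Λ (π z)) = σ v - Λ (π v) := by
      simp only [hv, map_sub, map_sum, map_smul, hΛ]; abel
    have hnorm : ‖σ v - Λ (π v)‖ ≤ 2 * ‖v‖ := by
      linarith [norm_sub_le (σ v) (Λ (π v)), hΛle (π v), h.norm_fst_le v, h.norm_snd_le v]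
    rw [herror]
    calc ‖σ v - Λ (π v)‖ ^ 2 ≤ (2 * ‖v‖) ^ 2 := by gcongr
      _ = 4 * ‖v‖ ^ 2 := by ring
      _ ≤ _ := by linarith

end IsSelection

end SelectionSplit

lemma norm_sum_sub_affine_le {X V : Type*} [NormedAddCommGroup V] [NormedSpace ℝ V]
    [AddCommGroup X] [Module ℝ X] {ι : Type*} [Fintype ι] {w : ι → ℝ} {p : ι → X} {v : ι → V}
    {A e : ℝ} (hw : ∑ j, w j = 1) (hA : ∑ j, |w j| ≤ A) (Λ : X →ₗ[ℝ] V) (c : V) (he : 0 ≤ e)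
    (h : ∀ j, ‖v j - (c + Λ (p j))‖ ≤ e) :
    ‖∑ j, w j • v j - (c + Λ (∑ j, w j • p j))‖ ≤ A * e := by
  have hcomb :
      ∑ j, w j • v j - (c + Λ (∑ j, w j • p j)) = ∑ j, w j • (v j - (c + Λ (p j))) := by
    simp only [smul_sub, smul_add, Finset.sum_sub_distrib, Finset.sum_add_distrib,
      ← Finset.sum_smul, hw, one_smul, map_sum, map_smul]
  rw [hcomb]
  calc _ ≤ ∑ j, |w j| * e := by
        refine norm_sum_le_of_le _ fun j _ => ?_
        rw [norm_smul, Real.norm_eq_abs]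
        gcongr
        exact h j
    _ = (∑ j, |w j|) * e := by rw [Finset.sum_mul]
    _ ≤ A * e := by gcongr

/-! ### Sets in a narrow cone -/

section Scene

variable {V X : Type*} [NormedAddCommGroup V] [InnerProductSpace ℝ V] [MeasurableSpace V]
  [NormedAddCommGroup X] [NormedSpace ℝ X]

/-- A set `E` which, above the stopping scale `h x` at each of its points `x`, is dense and lies in
a narrow cone around the kernel of `σ`, and which has small pointwise curvature. Density is encoded
by the existence of a selection of nondegenerate simplices. -/
structure Scene (n : ℕ) (μ : Measure V) (E : Set V) (π : V →ₗ[ℝ] X) (σ : V →ₗ[ℝ] V)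
    (h : V → ℝ) (R α τ κ η : ℝ) : Prop where
  finrank_eq : Module.finrank ℝ X = n
  split : IsSplit π σ
  R_pos : 0 < R
  α_pos : 0 < α
  α_le : α ≤ 1 / 6
  τ_pos : 0 < τ
  κ_pos : 0 < κ
  η_pos : 0 < η
  α_le_τ : 4 * n * α ≤ τ
  h_nonneg : ∀ x, 0 ≤ h x
  cone : ∀ x ∈ E, ∀ y ∈ E, h x / 10 < ‖y - x‖ → ‖σ (y - x)‖ ≤ α * ‖y - x‖
  selection : ∀ x ∈ E, ∀ s, h x < s → s ≤ R →
    ∃ S : Fin (n + 1) → Set V, IsSelection n τ κ μ E x s S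
  curvature : ∀ z ∈ E, pointCurv n μ z ≤ ENNReal.ofReal η

/-- A representation of `p` by an affine combination, with weights `w`, of the projections of
points `t j` of `E`; these points are `s`-close to a base point `x` of `E` over `p`. -/
structure IsNode {V X : Type*} [NormedAddCommGroup V] [NormedSpace ℝ V] [NormedAddCommGroup X]
    [NormedSpace ℝ X] {n : ℕ} (E : Set V) (π : V →ₗ[ℝ] X) (α A : ℝ) (p : X) (s : ℝ) (x : V)
    (t : Fin (n + 1) → V) (w : Fin (n + 1) → ℝ) : Prop where
  mem : x ∈ E
  norm_le : ‖π x - p‖ ≤ α * s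
  vertex_mem : ∀ j, t j ∈ E
  vertex_dist : ∀ j, ‖t j - x‖ ≤ s
  sum_eq : ∑ j, w j = 1
  combination : ∑ j, w j • π (t j) = p
  sum_abs_le : ∑ j, |w j| ≤ A

/-- There is a point of `E` over `p` with stopping scale small compared to `s`. -/
def Near {V X : Type*} [NormedAddCommGroup V] [NormedSpace ℝ V] [NormedAddCommGroup X]
    [NormedSpace ℝ X] (E : Set V) (π : V →ₗ[ℝ] X) (h : V → ℝ) (α : ℝ) (p : X) (s : ℝ) : Prop :=
  ∃ x ∈ E, ‖π x - p‖ ≤ α * s ∧ h x ≤ α * s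

/-- A choice of a node over every point, good at all the scales `R / 2 ^ k`, `k ≤ M`, at which the
point is near `E`. -/
def IsNodeFamily {V X : Type*} [NormedAddCommGroup V] [NormedSpace ℝ V] [NormedAddCommGroup X]
    [NormedSpace ℝ X] {n : ℕ} (E : Set V) (π : V →ₗ[ℝ] X) (h : V → ℝ) (α A R : ℝ) (M : ℕ)
    (x : X → V) (t : X → Fin (n + 1) → V) (w : X → Fin (n + 1) → ℝ) : Prop :=
  ∀ p, ∀ k ≤ M, Near E π h α p (R * (1 / 2) ^ k) →
    IsNode E π α A p (R * (1 / 2) ^ k) (x p) (t p) (w p)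

lemma IsNode.mono {V X : Type*} [NormedAddCommGroup V] [NormedSpace ℝ V] [NormedAddCommGroup X]
    [NormedSpace ℝ X] {n : ℕ} {E : Set V} {π : V →ₗ[ℝ] X} {α A : ℝ} {p : X} {s s' : ℝ} {x : V}
    {t : Fin (n + 1) → V} {w : Fin (n + 1) → ℝ} (hN : IsNode E π α A p s x t w) (hα : 0 ≤ α)
    (hs : s ≤ s') : IsNode E π α A p s' x t w :=
  { hN with
    norm_le := hN.norm_le.trans (by gcongr)
    vertex_dist := fun j => (hN.vertex_dist j).trans hs }

lemma Near.mono {V X : Type*} [NormedAddCommGroup V] [NormedSpace ℝ V] [NormedAddCommGroup X]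
    [NormedSpace ℝ X] {E : Set V} {π : V →ₗ[ℝ] X} {h : V → ℝ} {α : ℝ} {p : X} {s s' : ℝ}
    (hp : Near E π h α p s) (hα : 0 ≤ α) (hs : s ≤ s') : Near E π h α p s' := by
  obtain ⟨x, hx, hxp, hhx⟩ := hp
  exact ⟨x, hx, hxp.trans (by gcongr), hhx.trans (by gcongr)⟩

namespace Scene

variable {n : ℕ} {μ : Measure V} {E : Set V} {π : V →ₗ[ℝ] X} {σ : V →ₗ[ℝ] V} {h : V → ℝ}
  {R α τ κ η : ℝ}

lemma norm_snd_le (H : Scene n μ E π σ h R α τ κ η) {x y : V} {s : ℝ} (hx : x ∈ E) (hy : y ∈ E)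
    (hh : h x ≤ α * s) (hs : ‖y - x‖ ≤ s) : ‖σ (y - x)‖ ≤ α * s := by
  have := H.h_nonneg x
  by_cases hfar : h x / 10 < ‖y - x‖
  · exact (H.cone x hx y hy hfar).trans (mul_le_mul_of_nonneg_left hs H.α_pos.le)
  · exact (H.split.norm_snd_le _).trans (by linarith)

lemma norm_sub_le_of_fst (H : Scene n μ E π σ h R α τ κ η) {x y : V} {a : ℝ} (hx : x ∈ E)
    (hy : y ∈ E) (hh : h x ≤ a) (hs : 2 * ‖π (y - x)‖ ≤ a) : ‖y - x‖ ≤ a := by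
  have := H.h_nonneg x
  by_cases hfar : h x / 10 < ‖y - x‖
  · exact (H.split.norm_le_two_mul (by linarith [H.α_le]) (H.cone x hx y hy hfar)).trans hs
  · linarith

lemma h_lt (H : Scene n μ E π σ h R α τ κ η) {x : V} {s : ℝ} (hs : 0 < s)
    (hh : h x ≤ α * s) : h x < s := by
  nlinarith [H.α_le, H.α_pos]

lemma sum_scaleCurv_le_card (H : Scene n μ E π σ h R α τ κ η) (s : ℝ) {Z : Finset V}
    (hZ : ∀ z ∈ Z, z ∈ E) : ∑ z ∈ Z, scaleCurv n μ τ s z ≤ Z.card * ENNReal.ofReal η := by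
  rw [← nsmul_eq_mul]
  exact Finset.sum_le_card_nsmul _ _ _ fun z hz =>
    (scaleCurv_le_pointCurv n μ τ s z).trans (H.curvature z (hZ z hz))

lemma vertex_dist_le (H : Scene n μ E π σ h R α τ κ η) {x : V} {s A : ℝ} (hx : x ∈ E)
    (hs : 0 < s) (hh : h x ≤ α * s) {p : X} {x' : V} {t : Fin (n + 1) → V}
    {w : Fin (n + 1) → ℝ} (hN : IsNode E π α A p s x' t w) (hp : ‖π x - p‖ ≤ 2 * α * s)
    (j : Fin (n + 1)) : ‖t j - x‖ ≤ 2 * s := by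
  have hproj : ‖π (x' - x)‖ ≤ 3 * α * s := by
    rw [map_sub, ← sub_sub_sub_cancel_right (π x') (π x) p]
    linarith [norm_sub_le (π x' - p) (π x - p), hN.norm_le]
  have hbase : ‖x' - x‖ ≤ s :=
    H.norm_sub_le_of_fst hx hN.mem (H.h_lt hs hh).le (by nlinarith [H.α_le])
  linarith [norm_sub_le_norm_sub_add_norm_sub (t j) x' x, hN.vertex_dist j]

variable [BorelSpace V] [SecondCountableTopology V] [FiniteDimensional ℝ X] [IsFiniteMeasure μ]

lemma exists_affine (H : Scene n μ E π σ h R α τ κ η) {x : V} {s : ℝ} (hx : x ∈ E)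
    (hs : 0 < s) (hsR : s ≤ R) (hh : h x ≤ α * s) (Z : Finset V) (hZE : ∀ z ∈ Z, z ∈ E)
    (hZ : ∀ z ∈ Z, ‖z - x‖ ≤ 2 * s) :
    ∃ t : Fin (n + 1) → V, (∀ j, t j ∈ E ∧ ‖t j - x‖ ≤ s) ∧
      LinIndepWith (τ * s / 2) (fun j => π (edges t j)) ∧ ∃ (Λ : X →ₗ[ℝ] V) (c : V),
      (∀ j, c + Λ (π (t j)) = σ (t j)) ∧
      ∀ z ∈ Z, ‖σ z - (c + Λ (π z))‖ ^ 2 ≤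
        4 * apxConst n τ κ * s ^ 2 * (∑ z ∈ Z, scaleCurv n μ τ s z).toReal := by
  obtain ⟨S, hS⟩ := H.selection x hx s (H.h_lt hs hh) hsR
  have hcone : ∀ y ∈ E ∩ closedBall x s, ‖σ (y - x)‖ ≤ α * s := fun y hy =>
    H.norm_snd_le hx hy.1 hh (mem_closedBall_iff_norm.1 hy.2)
  obtain ⟨t, ht, Λ, c, hvertex, happrox⟩ := hS.exists_affine_approx H.finrank_eq H.τ_pos H.κ_pos hs
    H.split H.α_le_τ hcone Z (fun z hz => mem_closedBall_iff_norm.2 (hZ z hz))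
    (ne_top_of_le_ne_top (by finiteness) (H.sum_scaleCurv_le_card s hZE))
  exact ⟨t, fun j => ⟨(hS.subset j (ht j)).1, mem_closedBall_iff_norm.1 (hS.subset j (ht j)).2⟩,
    hS.linIndepWith_fst hs H.split H.α_le_τ hcone ht, Λ, c, hvertex, happrox⟩

lemma exists_node (H : Scene n μ E π σ h R α τ κ η) {p : X} {s : ℝ} (hs : 0 < s) (hsR : s ≤ R)
    (hp : Near E π h α p s) : ∃ (x : V) (t : Fin (n + 1) → V) (w : Fin (n + 1) → ℝ),
      IsNode E π α (1 + 8 * n / τ) p s x t w := by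
  obtain ⟨x, hx, hxp, hhx⟩ := hp
  obtain ⟨t, ht, hindep, -⟩ := H.exists_affine hx hs hsR hhx ∅ (by simp) (by simp)
  have hτ := H.τ_pos
  have hedges : LinIndepWith (τ * s / 2) (edges fun j => π (t j)) := by
    rwa [show edges (fun j => π (t j)) = fun j => π (edges t j) by funext j; simp [edges]]
  obtain ⟨w, hw, hcomb, habs⟩ := hedges.exists_weights (by positivity) H.finrank_eq p
  refine ⟨x, t, w, hx, hxp, fun j => (ht j).1, fun j => (ht j).2, hw, hcomb, habs.trans ?_⟩
  have hvertex : ‖p - π (t 0)‖ ≤ 2 * s := by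
    have hπ := (H.split.norm_fst_le (t 0 - x)).trans (ht 0).2
    rw [map_sub] at hπ
    rw [norm_sub_rev]
    nlinarith [norm_sub_le_norm_sub_add_norm_sub (π (t 0)) (π x) p, H.α_le]
  calc 1 + 2 * n * (‖p - π (t 0)‖ / (τ * s / 2)) ≤ 1 + 2 * n * (2 * s / (τ * s / 2)) := by gcongr
    _ = 1 + 8 * n / τ := by field_simp; ring

/-- The node chosen over `p` is the one of the finest admissible scale, so that it serves all the
coarser scales as well. -/
lemma exists_isNodeFamily (H : Scene n μ E π σ h R α τ κ η) (M : ℕ) :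
    ∃ (x : X → V) (t : X → Fin (n + 1) → V) (w : X → Fin (n + 1) → ℝ),
      IsNodeFamily E π h α (1 + 8 * n / τ) R M x t w := by
  have hR := H.R_pos
  suffices ∀ p, ∃ (x : V) (t : Fin (n + 1) → V) (w : Fin (n + 1) → ℝ), ∀ k ≤ M,
      Near E π h α p (R * (1 / 2) ^ k) →
        IsNode E π α (1 + 8 * n / τ) p (R * (1 / 2) ^ k) x t w by
    choose x t w hN using this
    exact ⟨x, t, w, hN⟩
  intro p
  let P : ℕ → Prop := fun k => Near E π h α p (R * (1 / 2) ^ k)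
  by_cases hp : ∃ k ≤ M, P k
  · obtain ⟨k, hkM, hk⟩ := hp
    obtain ⟨x, t, w, hN⟩ := H.exists_node (by positivity)
      (mul_le_of_le_one_right hR.le (pow_le_one₀ (by norm_num) (by norm_num)))
      (Nat.findGreatest_spec (P := P) hkM hk)
    refine ⟨x, t, w, fun j hj hnear => hN.mono H.α_pos.le ?_⟩
    gcongr ?_ * ?_
    exact pow_le_pow_of_le_one (by norm_num) (by norm_num)
      (Nat.le_findGreatest (P := P) hj hnear)
  · push Not at hp
    exact ⟨0, 0, 0, fun k hk hnear => (hp k hk hnear).elim⟩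

end Scene

end Scene

/-! ### Slopes of approximating planes -/

lemma sum_image_le_sum_comp {ι β : Type*} [Fintype ι] [DecidableEq β] (g : ι → β)
    (F : β → ℝ≥0∞) : ∑ z ∈ Finset.univ.image g, F z ≤ ∑ i, F (g i) := by
  rw [Finset.sum_comp F g]
  refine Finset.sum_le_sum fun z hz => ?_
  obtain ⟨i, -, rfl⟩ := Finset.mem_image.1 hz
  have hcard : 1 ≤ (Finset.univ.filter fun a => g a = g i).card :=
    Finset.card_pos.2 ⟨i, by simp⟩
  rw [nsmul_eq_mul]
  exact le_mul_of_one_le_left zero_le (by exact_mod_cast hcard)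

section AffineApprox

variable {V X : Type*} [NormedAddCommGroup V] [NormedSpace ℝ V] [AddCommGroup X] [Module ℝ X]
  {Λ : X →ₗ[ℝ] V} {c : V} {B : ℝ}

lemma norm_second_difference_le {p₀ p₁ p₂ : X} {f₀ f₁ f₂ : V} (hmid : p₀ + p₂ = p₁ + p₁)
    (h₀ : ‖f₀ - (c + Λ p₀)‖ ≤ B) (h₁ : ‖f₁ - (c + Λ p₁)‖ ≤ B) (h₂ : ‖f₂ - (c + Λ p₂)‖ ≤ B) :
    ‖(f₁ - f₀) - (f₂ - f₁)‖ ≤ 4 * B := by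
  have hΛ : Λ p₂ = Λ p₁ + Λ p₁ - Λ p₀ := by rw [← map_add, ← hmid, map_add]; abel
  have hdecomp : (f₁ - f₀) - (f₂ - f₁) = (f₁ - (c + Λ p₁)) + (f₁ - (c + Λ p₁))
      - (f₀ - (c + Λ p₀)) - (f₂ - (c + Λ p₂)) := by
    rw [hΛ]; abel
  rw [hdecomp]
  linarith [norm_sub_le ((f₁ - (c + Λ p₁)) + (f₁ - (c + Λ p₁)) - (f₀ - (c + Λ p₀)))
      (f₂ - (c + Λ p₂)),
    norm_sub_le ((f₁ - (c + Λ p₁)) + (f₁ - (c + Λ p₁))) (f₀ - (c + Λ p₀)),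
    norm_add_le (f₁ - (c + Λ p₁)) (f₁ - (c + Λ p₁))]

lemma norm_slope_le {p e : X} {f₁ f₂ : V} {ℓ : ℝ} (hℓ : 0 < ℓ) (h₁ : ‖f₁ - (c + Λ p)‖ ≤ B)
    (h₂ : ‖f₂ - (c + Λ (p + ℓ • e))‖ ≤ B) : ‖Λ e‖ ≤ ℓ⁻¹ * ‖f₂ - f₁‖ + 2 * B / ℓ := by
  have hdecomp : ℓ • Λ e = (f₂ - f₁) + (f₁ - (c + Λ p)) - (f₂ - (c + Λ (p + ℓ • e))) := by
    rw [map_add, map_smul]; abel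
  have hle : ℓ * ‖Λ e‖ ≤ ‖f₂ - f₁‖ + 2 * B := by
    rw [← Real.norm_of_nonneg hℓ.le, ← norm_smul, hdecomp]
    linarith [norm_sub_le ((f₂ - f₁) + (f₁ - (c + Λ p))) (f₂ - (c + Λ (p + ℓ • e))),
      norm_add_le (f₂ - f₁) (f₁ - (c + Λ p))]
  rw [inv_mul_eq_div, ← add_div, le_div_iff₀ hℓ]
  linarith

lemma exists_div_le_norm_apply_single {n : ℕ} (Λ : EuclideanSpace ℝ (Fin n) →ₗ[ℝ] V)
    {q : EuclideanSpace ℝ (Fin n)} (h : B * ‖q‖ < ‖Λ q‖) :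
    ∃ d, B / n ≤ ‖Λ (EuclideanSpace.single d 1)‖ := by
  by_contra! hlt
  have hbasis : LinIndepWith 1 fun d : Fin n => EuclideanSpace.single d (1 : ℝ) := by
    intro a i
    have hsum : (∑ j, a j • EuclideanSpace.single j (1 : ℝ)) i = a i := by
      simp [Pi.single_apply]
    rw [one_mul, ← hsum]
    exact PiLp.norm_apply_le (p := 2) (∑ j, a j • EuclideanSpace.single j (1 : ℝ)) i
  have hle := hbasis.norm_map_le one_pos (finrank_euclideanSpace_fin) (fun d => (hlt d).le) q
  rcases Nat.eq_zero_or_pos n with rfl | hn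
  · simp [Subsingleton.elim q 0] at h
  · have : (n : ℝ) ≠ 0 := by positivity
    rw [div_one, mul_div_cancel₀ _ this] at hle
    linarith

end AffineApprox

/-- The height over the point represented by a node: the affine combination, with the weights of
the node, of the second components of its vertices. -/
def nodeValue {V : Type*} [AddCommGroup V] [Module ℝ V] {n : ℕ} (σ : V →ₗ[ℝ] V)
    (t : Fin (n + 1) → V) (w : Fin (n + 1) → ℝ) : V :=
  ∑ j, w j • σ (t j)

lemma IsNode.norm_nodeValue_sub_le {V X : Type*} [NormedAddCommGroup V] [NormedSpace ℝ V]
    [NormedAddCommGroup X] [NormedSpace ℝ X] {n : ℕ} {E : Set V} {π : V →ₗ[ℝ] X} {σ : V →ₗ[ℝ] V}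
    {α A s B : ℝ} {p : X} {x : V} {t : Fin (n + 1) → V} {w : Fin (n + 1) → ℝ}
    (hN : IsNode E π α A p s x t w) {Λ : X →ₗ[ℝ] V} {c : V} (hB : 0 ≤ B)
    (h : ∀ j, ‖σ (t j) - (c + Λ (π (t j)))‖ ≤ B) :
    ‖nodeValue σ t w - (c + Λ p)‖ ≤ A * B := by
  simpa only [nodeValue, hN.combination] using
    norm_sum_sub_affine_le hN.sum_eq hN.sum_abs_le Λ c hB h

namespace Scene

variable {V X : Type*} [NormedAddCommGroup V] [InnerProductSpace ℝ V] [MeasurableSpace V]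
  [NormedAddCommGroup X] [NormedSpace ℝ X] {n : ℕ} {μ : Measure V} {E : Set V}
  {π : V →ₗ[ℝ] X} {σ : V →ₗ[ℝ] V} {h : V → ℝ} {R α τ κ η : ℝ}

lemma sum_scaleCurv_tuples_le (H : Scene n μ E π σ h R α τ κ η) (s : ℝ) {ι : Type*} [Fintype ι]
    {T : ι → Fin (n + 1) → V} (hTE : ∀ i j, T i j ∈ E) :
    ∑ i, ∑ j, scaleCurv n μ τ s (T i j) ≤
      ENNReal.ofReal (Fintype.card ι * (n + 1) * η) := by
  calc ∑ i, ∑ j, scaleCurv n μ τ s (T i j) ≤ ∑ _i : ι, ∑ _j : Fin (n + 1), ENNReal.ofReal η := by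
        gcongr with i _ j _
        exact (scaleCurv_le_pointCurv n μ τ s (T i j)).trans (H.curvature _ (hTE i j))
    _ = _ := by
      have := H.η_pos
      rw [Finset.sum_const, Finset.sum_const, ← ENNReal.ofReal_nsmul, ← ENNReal.ofReal_nsmul]
      congr 1
      simp [mul_assoc]

variable [BorelSpace V] [SecondCountableTopology V] [FiniteDimensional ℝ X] [IsFiniteMeasure μ]

lemma exists_affine_tuples (H : Scene n μ E π σ h R α τ κ η) {x : V} {s : ℝ} (hx : x ∈ E)
    (hs : 0 < s) (hsR : s ≤ R) (hh : h x ≤ α * s) {ι : Type*} [Fintype ι]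
    {T : ι → Fin (n + 1) → V} (hTE : ∀ i j, T i j ∈ E) (hT : ∀ i j, ‖T i j - x‖ ≤ 2 * s) :
    ∃ (Λ : X →ₗ[ℝ] V) (c : V), ∀ i j, ‖σ (T i j) - (c + Λ (π (T i j)))‖ ^ 2 ≤
        4 * apxConst n τ κ * s ^ 2 * (∑ i, ∑ j, scaleCurv n μ τ s (T i j)).toReal := by
  let g : ι × Fin (n + 1) → V := fun q => T q.1 q.2
  obtain ⟨-, -, -, Λ, c, -, happrox⟩ := H.exists_affine hx hs hsR hh (Finset.univ.image g)
    (Finset.forall_mem_image.2 fun q _ => hTE q.1 q.2)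
    (Finset.forall_mem_image.2 fun q _ => hT q.1 q.2)
  refine ⟨Λ, c, fun i j =>
    (happrox _ (Finset.mem_image_of_mem g (Finset.mem_univ (i, j)))).trans ?_⟩
  have := apxConst_pos n H.τ_pos H.κ_pos
  gcongr
  · exact ne_top_of_le_ne_top ENNReal.ofReal_ne_top (H.sum_scaleCurv_tuples_le s hTE)
  · rw [← Fintype.sum_prod_type' (f := fun i j => scaleCurv n μ τ s (T i j))]
    exact sum_image_le_sum_comp g _

lemma exists_affine_tuples_of_curvature (H : Scene n μ E π σ h R α τ κ η) {x : V} {s : ℝ}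
    (hx : x ∈ E) (hs : 0 < s) (hsR : s ≤ R) (hh : h x ≤ α * s) {ι : Type*} [Fintype ι]
    {T : ι → Fin (n + 1) → V} (hTE : ∀ i j, T i j ∈ E) (hT : ∀ i j, ‖T i j - x‖ ≤ 2 * s) :
    ∃ (Λ : X →ₗ[ℝ] V) (c : V), ∀ i j, ‖σ (T i j) - (c + Λ (π (T i j)))‖ ≤
        s * √(4 * apxConst n τ κ * (Fintype.card ι * (n + 1) * η)) := by
  obtain ⟨Λ, c, happrox⟩ := H.exists_affine_tuples hx hs hsR hh hTE hT
  refine ⟨Λ, c, fun i j => le_of_sq_le_sq ((happrox i j).trans ?_) (by positivity)⟩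
  have := apxConst_pos n H.τ_pos H.κ_pos
  have := H.η_pos
  rw [mul_pow, Real.sq_sqrt (by positivity)]
  calc _ ≤ 4 * apxConst n τ κ * s ^ 2 * (Fintype.card ι * (n + 1) * η) := by
        gcongr
        exact ENNReal.toReal_le_of_le_ofReal (by positivity) (H.sum_scaleCurv_tuples_le s hTE)
    _ = _ := by ring

lemma sq_norm_second_difference_le (H : Scene n μ E π σ h R α τ κ η) {x : V} {s A : ℝ}
    (hx : x ∈ E) (hs : 0 < s) (hsR : s ≤ R) (hh : h x ≤ α * s) {p : Fin 3 → X} {y : Fin 3 → V}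
    {t : Fin 3 → Fin (n + 1) → V} {w : Fin 3 → Fin (n + 1) → ℝ}
    (hN : ∀ i, IsNode E π α A (p i) s (y i) (t i) (w i)) (hp : ∀ i, ‖π x - p i‖ ≤ 2 * α * s)
    (hmid : p 0 + p 2 = p 1 + p 1) :
    ‖(nodeValue σ (t 1) (w 1) - nodeValue σ (t 0) (w 0)) -
      (nodeValue σ (t 2) (w 2) - nodeValue σ (t 1) (w 1))‖ ^ 2 ≤
      64 * A ^ 2 * apxConst n τ κ * s ^ 2 * (∑ i, ∑ j, scaleCurv n μ τ s (t i j)).toReal := by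
  obtain ⟨Λ, c, happrox⟩ := H.exists_affine_tuples hx hs hsR hh (fun i j => (hN i).vertex_mem j)
    (fun i j => H.vertex_dist_le hx hs hh (hN i) (hp i) j)
  set Q := 4 * apxConst n τ κ * s ^ 2 * (∑ i, ∑ j, scaleCurv n μ τ s (t i j)).toReal
  have hQ : 0 ≤ Q := (sq_nonneg _).trans (happrox 0 0)
  have hvalue : ∀ i, ‖nodeValue σ (t i) (w i) - (c + Λ (p i))‖ ≤ A * √Q := fun i =>
    (hN i).norm_nodeValue_sub_le (Real.sqrt_nonneg Q) fun j => Real.le_sqrt_of_sq_le (happrox i j)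
  calc _ ≤ (4 * (A * √Q)) ^ 2 := by
        gcongr
        exact norm_second_difference_le hmid (hvalue 0) (hvalue 1) (hvalue 2)
    _ = 16 * A ^ 2 * Q := by rw [mul_pow, mul_pow, Real.sq_sqrt hQ]; ring
    _ = _ := by ring

/-- The slope of the plane spanned by `t` is close to the difference quotients between nodes: both
are close to the slope of a plane approximating `t` and the two nodes simultaneously. -/
lemma norm_slope_le (H : Scene n μ E π σ h R α τ κ η) {x : V} {s A ℓ : ℝ} (hx : x ∈ E)
    (hs : 0 < s) (hsR : s ≤ R) (hh : h x ≤ α * s) (hℓ : 0 < ℓ)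
    {t : Fin (n + 1) → V} (ht : ∀ j, t j ∈ E ∧ ‖t j - x‖ ≤ s)
    (hindep : LinIndepWith (τ * s / 2) (fun j => π (edges t j))) {Λ : X →ₗ[ℝ] V} {c : V}
    (hΛ : ∀ j, c + Λ (π (t j)) = σ (t j)) {e p : X} (he : ‖e‖ = 1)
    {y₁ y₂ : V} {t₁ t₂ : Fin (n + 1) → V} {w₁ w₂ : Fin (n + 1) → ℝ}
    (hN₁ : IsNode E π α A p s y₁ t₁ w₁) (hN₂ : IsNode E π α A (p + ℓ • e) s y₂ t₂ w₂)
    (hp₁ : ‖π x - p‖ ≤ 2 * α * s) (hp₂ : ‖π x - (p + ℓ • e)‖ ≤ 2 * α * s) :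
    ‖Λ e‖ ≤ ℓ⁻¹ * ‖nodeValue σ t₂ w₂ - nodeValue σ t₁ w₁‖ +
      (4 * n / (τ * s) + 2 * A / ℓ) * (s * √(4 * apxConst n τ κ * (3 * (n + 1) * η))) := by
  have hτ := H.τ_pos
  let T : Fin 3 → Fin (n + 1) → V := ![t, t₁, t₂]
  have hTE : ∀ i j, T i j ∈ E := Fin.forall_fin_succ.2 ⟨fun j => (ht j).1,
    Fin.forall_fin_two.2 ⟨hN₁.vertex_mem, hN₂.vertex_mem⟩⟩
  have hT : ∀ i j, ‖T i j - x‖ ≤ 2 * s := Fin.forall_fin_succ.2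
    ⟨fun j => (ht j).2.trans (by linarith), Fin.forall_fin_two.2
      ⟨H.vertex_dist_le hx hs hh hN₁ hp₁, H.vertex_dist_le hx hs hh hN₂ hp₂⟩⟩
  obtain ⟨Λ', c', happrox⟩ := H.exists_affine_tuples_of_curvature hx hs hsR hh hTE hT
  rw [Fintype.card_fin, Nat.cast_ofNat] at happrox
  set Q := s * √(4 * apxConst n τ κ * (3 * (n + 1) * η))
  have hQ0 : 0 ≤ Q := by positivity
  have hΛ' : ‖Λ' e‖ ≤ ℓ⁻¹ * ‖nodeValue σ t₂ w₂ - nodeValue σ t₁ w₁‖ + 2 * (A * Q) / ℓ :=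
    Menger.norm_slope_le hℓ (hN₁.norm_nodeValue_sub_le hQ0 (happrox 1))
      (hN₂.norm_nodeValue_sub_le hQ0 (happrox 2))
  have hedges : ∀ j, ‖(Λ - Λ') (π (edges t j))‖ ≤ 2 * Q := by
    intro j
    have hdecomp : (Λ - Λ') (π (edges t j)) =
        (σ (t j.succ) - (c' + Λ' (π (t j.succ)))) - (σ (t 0) - (c' + Λ' (π (t 0)))) := by
      rw [← hΛ, ← hΛ 0]; simp only [edges, map_sub, LinearMap.sub_apply]; abel
    rw [hdecomp, two_mul]
    exact (norm_sub_le _ _).trans (add_le_add (happrox 0 j.succ) (happrox 0 0))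
  have hdiff : ‖(Λ - Λ') e‖ ≤ n * (2 * Q) / (τ * s / 2) * ‖e‖ :=
    hindep.norm_map_le (by positivity) H.finrank_eq hedges e
  calc ‖Λ e‖ ≤ ‖(Λ - Λ') e‖ + ‖Λ' e‖ := by
        simpa using norm_add_le ((Λ - Λ') e) (Λ' e)
    _ ≤ n * (2 * Q) / (τ * s / 2) * 1 +
        (ℓ⁻¹ * ‖nodeValue σ t₂ w₂ - nodeValue σ t₁ w₁‖ + 2 * (A * Q) / ℓ) := by
      rw [← he]; gcongr
    _ = _ := by field_simp; ring

end Scene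

lemma Scene.exists_direction {V : Type*} [NormedAddCommGroup V] [InnerProductSpace ℝ V]
    [MeasurableSpace V] [BorelSpace V] [SecondCountableTopology V] {n : ℕ} {μ : Measure V}
    [IsFiniteMeasure μ] {E : Set V} {π : V →ₗ[ℝ] EuclideanSpace ℝ (Fin n)}
    {σ : V →ₗ[ℝ] V} {h : V → ℝ} {R α τ κ η : ℝ} (H : Scene n μ E π σ h R α τ κ η)
    {x y : V} {s : ℝ} (hx : x ∈ E) (hy : y ∈ E)
    (hs : 0 < s) (hsR : s ≤ R) (hh : h x ≤ α * s) (hxy : ‖y - x‖ ≤ 2 * s)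
    (hσ : α * ‖y - x‖ < ‖σ (y - x)‖)
    (hη : 8 * apxConst n τ κ * s ^ 2 * η ≤ (α * ‖y - x‖ / 4) ^ 2) :
    ∃ t : Fin (n + 1) → V, (∀ j, t j ∈ E ∧ ‖t j - x‖ ≤ s) ∧
      LinIndepWith (τ * s / 2) (fun j => π (edges t j)) ∧
      ∃ (Λ : EuclideanSpace ℝ (Fin n) →ₗ[ℝ] V) (c : V), (∀ j, c + Λ (π (t j)) = σ (t j)) ∧
      ∃ d : Fin n, α / (2 * n) ≤ ‖Λ (EuclideanSpace.single d 1)‖ := by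
  have hxyE : ∀ z ∈ ({x, y} : Finset V), z ∈ E := by simp [hx, hy]
  obtain ⟨t, ht, hindep, Λ, c, hΛ, happrox⟩ := H.exists_affine hx hs hsR hh {x, y} hxyE
    (by simp [hxy, hs.le])
  have := apxConst_pos n H.τ_pos H.κ_pos
  have := H.α_pos
  have hsum : (∑ z ∈ ({x, y} : Finset V), scaleCurv n μ τ s z).toReal ≤ 2 * η := by
    refine ENNReal.toReal_le_of_le_ofReal (by linarith [H.η_pos])
      ((H.sum_scaleCurv_le_card s hxyE).trans ?_)
    rw [ENNReal.ofReal_mul zero_le_two, ENNReal.ofReal_ofNat]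
    gcongr
    exact_mod_cast Finset.card_le_two
  have herror : ∀ z ∈ ({x, y} : Finset V), ‖σ z - (c + Λ (π z))‖ ≤ α * ‖y - x‖ / 4 := by
    intro z hz
    refine le_of_sq_le_sq ((happrox z hz).trans (le_trans ?_ hη)) (by positivity)
    calc _ ≤ 4 * apxConst n τ κ * s ^ 2 * (2 * η) := by gcongr
      _ = _ := by ring
  have hsteep : α / 2 * ‖y - x‖ < ‖Λ (π (y - x))‖ := by
    have hdecomp :
        σ (y - x) = Λ (π (y - x)) + (σ y - (c + Λ (π y))) - (σ x - (c + Λ (π x))) := by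
      simp only [map_sub]; abel
    rw [hdecomp] at hσ
    linarith [norm_sub_le (Λ (π (y - x)) + (σ y - (c + Λ (π y)))) (σ x - (c + Λ (π x))),
      norm_add_le (Λ (π (y - x))) (σ y - (c + Λ (π y))), herror x (by simp), herror y (by simp)]
  obtain ⟨d, hd⟩ := exists_div_le_norm_apply_single Λ (lt_of_le_of_lt
    (mul_le_mul_of_nonneg_left (H.split.norm_fst_le (y - x)) (by positivity)) hsteep)
  exact ⟨t, ht, hindep, Λ, c, hΛ, d, by rwa [div_div] at hd⟩

/-! ### Dyadic averages -/

section Dyadic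

variable {T : Type*} [AddCommGroup T] {φ : T → ℝ≥0∞} {e : T}

/-- The average of `φ` over the `2 ^ r` points `v`, `v + e`, `v + 2 • e`, …. -/
def dyadicAvg (φ : T → ℝ≥0∞) (e : T) : ℕ → T → ℝ≥0∞
  | 0, v => φ v
  | r + 1, v => (dyadicAvg φ e r v + dyadicAvg φ e r (v + 2 ^ r • e)) / 2

/-- The sum over `k < r` of the averages of `q (k + 1)` over the starting points of the dyadic
intervals of length `2 ^ (k + 1)` contained in the interval of length `2 ^ r` starting at `v`. -/
def dyadicSum (q : ℕ → T → ℝ≥0∞) (e : T) : ℕ → T → ℝ≥0∞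
  | 0, _ => 0
  | r + 1, v => q (r + 1) v + (dyadicSum q e r v + dyadicSum q e r (v + 2 ^ r • e)) / 2

lemma tsum_half_add_translate (g : T → ℝ≥0∞) (a : T) :
    ∑' v, (g v + g (v + a)) / 2 = ∑' v, g v := by
  have htranslate : ∑' v, g (v + a) = ∑' v, g v := (Equiv.addRight a).tsum_eq g
  simp only [div_eq_mul_inv]
  rw [ENNReal.tsum_mul_right, ENNReal.tsum_add, htranslate, ← div_eq_mul_inv, ENNReal.add_div,
    ENNReal.add_halves]

lemma tsum_dyadicAvg (φ : T → ℝ≥0∞) (e : T) (r : ℕ) :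
    ∑' v, dyadicAvg φ e r v = ∑' v, φ v := by
  induction r with
  | zero => rfl
  | succ r ih => simp only [dyadicAvg, tsum_half_add_translate, ih]

lemma tsum_dyadicSum (q : ℕ → T → ℝ≥0∞) (e : T) (r : ℕ) :
    ∑' v, dyadicSum q e r v = ∑ k ∈ Finset.range r, ∑' v, q (k + 1) v := by
  induction r with
  | zero => simp [dyadicSum]
  | succ r ih =>
    simp only [dyadicSum]
    rw [ENNReal.tsum_add, tsum_half_add_translate, ih, Finset.sum_range_succ, add_comm]

lemma dyadicAvg_eq_zero (r : ℕ) (v : T) (h : ∀ j < 2 ^ r, φ (v + j • e) = 0) :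
    dyadicAvg φ e r v = 0 := by
  induction r generalizing v with
  | zero => simpa [dyadicAvg] using h 0 (by simp)
  | succ r ih =>
    have hleft := ih v fun j hj => h j (hj.trans (by rw [pow_succ]; lia))
    have hright := ih (v + 2 ^ r • e) fun j hj => by
      rw [add_assoc, ← add_smul]; exact h _ (by rw [pow_succ]; lia)
    simp [dyadicAvg, hleft, hright]

lemma dyadicAvg_le_of_forall_le {M : ℝ≥0∞} (h : ∀ v, φ v ≤ M) (r : ℕ) (v : T) :
    dyadicAvg φ e r v ≤ M := by
  induction r generalizing v with
  | zero => exact h v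
  | succ r ih =>
    calc _ ≤ (M + M) / 2 := ENNReal.div_le_div_right (add_le_add (ih _) (ih _)) _
      _ = M := by rw [ENNReal.add_div, ENNReal.add_halves]

variable {V : Type*} [NormedAddCommGroup V] [InnerProductSpace ℝ V]

lemma half_add_ofReal_sq_norm (a b : V) :
    (ENNReal.ofReal (‖a‖ ^ 2) + ENNReal.ofReal (‖b‖ ^ 2)) / 2 =
      ENNReal.ofReal (‖(1 / 2 : ℝ) • (a + b)‖ ^ 2) +
        ENNReal.ofReal (‖(1 / 2 : ℝ) • (a - b)‖ ^ 2) := by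
  have hreal : (‖a‖ ^ 2 + ‖b‖ ^ 2) / 2 =
      ‖(1 / 2 : ℝ) • (a + b)‖ ^ 2 + ‖(1 / 2 : ℝ) • (a - b)‖ ^ 2 := by
    rw [norm_smul, norm_smul, mul_pow, mul_pow, Real.norm_of_nonneg (by norm_num : (0:ℝ) ≤ 1 / 2)]
    linarith [parallelogram_law_with_norm ℝ a b]
  rw [← ENNReal.ofReal_add (by positivity) (by positivity),
    ← ENNReal.ofReal_add (by positivity) (by positivity), ← hreal,
    ENNReal.ofReal_div_of_pos two_pos, ENNReal.ofReal_ofNat]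

/-- If `G (r + 1) v` is the mean of two values of `G r`, then by the parallelogram law the mean of
their squares exceeds `‖G (r + 1) v‖ ^ 2` by the square of their half-difference. The hypothesis
`hP` lets the descent stop at any interval where the average is already controlled. -/
lemma dyadicAvg_le_add {q : ℕ → T → ℝ≥0∞} {G : ℕ → T → V}
    (hG : ∀ r v, G (r + 1) v = (1 / 2 : ℝ) • (G r v + G r (v + 2 ^ r • e)))
    {P : ℕ → T → Prop}
    (hP : ∀ r v, P r v → dyadicAvg φ e r v = 0 ∨
      dyadicAvg φ e r v ≤ ENNReal.ofReal (‖G r v‖ ^ 2) ∨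
      ∃ r', r = r' + 1 ∧ P r' v ∧ P r' (v + 2 ^ r' • e) ∧
        ENNReal.ofReal (‖(1 / 2 : ℝ) • (G r' v - G r' (v + 2 ^ r' • e))‖ ^ 2) ≤ q r v)
    (r : ℕ) (v : T) (h : P r v) :
    dyadicAvg φ e r v ≤ ENNReal.ofReal (‖G r v‖ ^ 2) + dyadicSum q e r v := by
  induction r generalizing v with
  | zero =>
    rcases hP 0 v h with hzero | hle | ⟨r', hr', -⟩
    · rw [hzero]; exact zero_le
    · exact hle.trans le_self_add
    · simp at hr'
  | succ r ih =>
    rcases hP (r + 1) v h with hzero | hle | ⟨r', hr', hleft, hright, hosc⟩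
    · rw [hzero]; exact zero_le
    · exact hle.trans le_self_add
    obtain rfl : r = r' := by lia
    simp only [dyadicAvg, dyadicSum]
    set g₁ := G r v
    set g₂ := G r (v + 2 ^ r • e)
    calc _ ≤ ((ENNReal.ofReal (‖g₁‖ ^ 2) + dyadicSum q e r v) +
          (ENNReal.ofReal (‖g₂‖ ^ 2) + dyadicSum q e r (v + 2 ^ r • e))) / 2 :=
          ENNReal.div_le_div_right (add_le_add (ih _ hleft) (ih _ hright)) _
      _ = (ENNReal.ofReal (‖g₁‖ ^ 2) + ENNReal.ofReal (‖g₂‖ ^ 2)) / 2 +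
          (dyadicSum q e r v + dyadicSum q e r (v + 2 ^ r • e)) / 2 := by
          rw [← ENNReal.add_div, add_add_add_comm]
      _ ≤ (ENNReal.ofReal (‖G (r + 1) v‖ ^ 2) + q (r + 1) v) +
          (dyadicSum q e r v + dyadicSum q e r (v + 2 ^ r • e)) / 2 := by
          rw [half_add_ofReal_sq_norm, hG]; gcongr
      _ = _ := add_assoc _ _ _

end Dyadic

/-! ### Lattice points -/

lemma card_Icc_ceil_floor_le {a b : ℝ} (h : 0 ≤ b - a + 1) :
    ((Finset.Icc ⌈a⌉ ⌊b⌋).card : ℝ) ≤ b - a + 1 := by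
  rw [Int.card_Icc, ← Int.cast_natCast, Int.toNat_eq_max]
  push_cast
  exact max_le (by linarith [Int.le_ceil a, Int.floor_le b]) h

lemma le_card_Icc_ceil_floor (a b : ℝ) :
    b - a - 1 ≤ ((Finset.Icc ⌈a⌉ ⌊b⌋).card : ℝ) := by
  rw [Int.card_Icc, ← Int.cast_natCast, Int.toNat_eq_max]
  push_cast
  exact le_max_of_le_left (by linarith [Int.ceil_lt_add_one a, Int.lt_floor_add_one b])

lemma euclidean_norm_le_sum {ι : Type*} [Fintype ι] (q : EuclideanSpace ℝ ι) :
    ‖q‖ ≤ ∑ j, |q j| := by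
  rw [EuclideanSpace.norm_eq]
  exact Real.sqrt_le_iff.2 ⟨by positivity,
    Finset.sum_sq_le_sq_sum_of_nonneg fun j _ => norm_nonneg (q j)⟩

section Lattice

variable {ι : Type*}

/-- The embedding of `ℤ ^ ι` in Euclidean space as the lattice of mesh `ω`. -/
def latticePoint (ω : ℝ) (v : ι → ℤ) : EuclideanSpace ℝ ι :=
  WithLp.toLp 2 fun j => ω * v j

lemma latticePoint_add_nsmul_single [DecidableEq ι] (ω : ℝ) (v : ι → ℤ) (d : ι) (k : ℕ) :
    latticePoint ω (v + k • Pi.single d 1) =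
      latticePoint ω v + (k * ω) • EuclideanSpace.single d (1 : ℝ) := by
  ext j
  by_cases h : j = d
  · subst h; simp [latticePoint]; ring
  · simp [latticePoint, h]

variable [Fintype ι]

/-- The indices of the lattice points of mesh `ω` in the cube with centre `q` and half-side `ρ`. -/
def latticeCube (ω ρ : ℝ) (q : EuclideanSpace ℝ ι) : Finset (ι → ℤ) :=
  Fintype.piFinset fun j => Finset.Icc ⌈(q j - ρ) / ω⌉ ⌊(q j + ρ) / ω⌋

variable {ω ρ : ℝ} {q : EuclideanSpace ℝ ι}

lemma mem_latticeCube (hω : 0 < ω) {v : ι → ℤ} :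
    v ∈ latticeCube ω ρ q ↔ ∀ j, |(latticePoint ω v - q) j| ≤ ρ := by
  simp only [latticeCube, Fintype.mem_piFinset, Finset.mem_Icc, Int.ceil_le, Int.le_floor,
    div_le_iff₀ hω, le_div_iff₀ hω, latticePoint, PiLp.sub_apply, abs_le]
  exact forall_congr' fun j => ⟨fun h => ⟨by linarith, by linarith⟩,
    fun h => ⟨by linarith, by linarith⟩⟩

lemma card_latticeCube (q : EuclideanSpace ℝ ι) : ((latticeCube ω ρ q).card : ℝ) =
    ∏ j, ((Finset.Icc ⌈(q j - ρ) / ω⌉ ⌊(q j + ρ) / ω⌋).card : ℝ) := by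
  rw [latticeCube, Fintype.card_piFinset, Nat.cast_prod]

lemma mem_latticeCube_of_norm_le (hω : 0 < ω) {v : ι → ℤ} (h : ‖latticePoint ω v - q‖ ≤ ρ) :
    v ∈ latticeCube ω ρ q :=
  (mem_latticeCube hω).2 fun j => (PiLp.norm_apply_le (latticePoint ω v - q) j).trans h

lemma card_latticeCube_le (hω : 0 < ω) (hρ : 0 ≤ ρ) (q : EuclideanSpace ℝ ι) :
    ((latticeCube ω ρ q).card : ℝ) ≤ (2 * ρ / ω + 1) ^ Fintype.card ι := by
  rw [card_latticeCube, ← Finset.card_univ, ← Finset.prod_const]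
  refine Finset.prod_le_prod (fun _ _ => Nat.cast_nonneg _) fun j _ => ?_
  have hside : (q j + ρ) / ω - (q j - ρ) / ω = 2 * ρ / ω := by ring
  rw [← hside]
  exact card_Icc_ceil_floor_le (by rw [hside]; positivity)

lemma norm_latticePoint_sub_le (hω : 0 < ω) {v : ι → ℤ} (h : v ∈ latticeCube ω ρ q) :
    ‖latticePoint ω v - q‖ ≤ Fintype.card ι * ρ := by
  refine (euclidean_norm_le_sum _).trans ?_
  rw [← nsmul_eq_mul, ← Finset.card_univ]
  exact Finset.sum_le_card_nsmul _ _ _ fun j _ => (mem_latticeCube hω).1 h j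

lemma le_card_latticeCube (hω : 0 < ω) (hρ : ω ≤ ρ) (q : EuclideanSpace ℝ ι) :
    (ρ / ω) ^ Fintype.card ι ≤ ((latticeCube ω ρ q).card : ℝ) := by
  rw [card_latticeCube, ← Finset.card_univ, ← Finset.prod_const]
  have hρω : 1 ≤ ρ / ω := (one_le_div hω).2 hρ
  refine Finset.prod_le_prod (fun _ _ => by positivity) fun j _ =>
    le_trans ?_ (le_card_Icc_ceil_floor _ _)
  linarith [show (q j + ρ) / ω - (q j - ρ) / ω = 2 * (ρ / ω) by ring]

end Lattice

/-! ### Steep directions -/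

lemma exists_level {a b : ℝ} (ha : 0 < a) (hb : 0 < b) (hab : 4 * a ≤ b) :
    ∃ k : ℕ, 2 * a ≤ b * (1 / 2) ^ (k + 1) ∧ b * (1 / 2) ^ k < 8 * a := by
  obtain ⟨k, hlow, hhigh⟩ := exists_nat_pow_near_of_lt_one (x := 4 * a / b) (y := 1 / 2)
    (by positivity) ((div_le_one hb).2 hab) (by norm_num) (by norm_num)
  rw [lt_div_iff₀ hb, pow_succ] at hlow
  rw [div_le_iff₀ hb] at hhigh
  exact ⟨k, by rw [pow_succ]; linarith, by linarith⟩

/-- In direction `d`, all difference quotients of step `α * s / 4` between nodes near `x` at scale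
`s` are steep. -/
def SteepAt {V : Type*} [NormedAddCommGroup V] [NormedSpace ℝ V] {n : ℕ} (E : Set V)
    (π : V →ₗ[ℝ] EuclideanSpace ℝ (Fin n)) (σ : V →ₗ[ℝ] V) (α A s : ℝ) (x : V) (d : Fin n) :
    Prop :=
  ∀ (p : EuclideanSpace ℝ (Fin n)) (y₁ y₂ : V) (t₁ t₂ : Fin (n + 1) → V)
    (w₁ w₂ : Fin (n + 1) → ℝ), IsNode E π α A p s y₁ t₁ w₁ →
    IsNode E π α A (p + (α * s / 4) • EuclideanSpace.single d (1 : ℝ)) s y₂ t₂ w₂ →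
    ‖π x - p‖ ≤ α * s →
    α / (4 * n) ≤ (α * s / 4)⁻¹ * ‖nodeValue σ t₂ w₂ - nodeValue σ t₁ w₁‖

namespace Scene

variable {V : Type*} [NormedAddCommGroup V] [InnerProductSpace ℝ V] [MeasurableSpace V]
  {n : ℕ} {μ : Measure V} {E : Set V} {π : V →ₗ[ℝ] EuclideanSpace ℝ (Fin n)} {σ : V →ₗ[ℝ] V}
  {h : V → ℝ} {R α τ κ η : ℝ}

lemma apxConst_mul_sq_le (H : Scene n μ E π σ h R α τ κ η) {x : V} {s d : ℝ} (hs : 0 ≤ s)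
    (hsh : α * s ≤ 8 * h x) (hd : h x / 20 ≤ d) (hη : 2 ^ 22 * apxConst n τ κ * η ≤ α ^ 4) :
    8 * apxConst n τ κ * s ^ 2 * η ≤ (α * d / 4) ^ 2 := by
  have hα := H.α_pos
  have hη₀ := H.η_pos
  have hapx := apxConst_pos n H.τ_pos H.κ_pos
  have hh := H.h_nonneg x
  have hscaled : α ^ 2 * (8 * apxConst n τ κ * s ^ 2 * η) ≤ α ^ 2 * (α * d / 4) ^ 2 := by
    calc _ = 8 * apxConst n τ κ * η * (α * s) ^ 2 := by ring
      _ ≤ 8 * apxConst n τ κ * η * (8 * h x) ^ 2 := by gcongr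
      _ ≤ (2 ^ 22 * apxConst n τ κ * η) * (h x / 20) ^ 2 / 16 := by
        have : 0 ≤ apxConst n τ κ * η * h x ^ 2 := by positivity
        linarith
      _ ≤ α ^ 4 * d ^ 2 / 16 := by gcongr
      _ = _ := by ring
  exact le_of_mul_le_mul_left hscaled (by positivity)

lemma exists_steepAt [BorelSpace V] [SecondCountableTopology V] [IsFiniteMeasure μ]
    (H : Scene n μ E π σ h R α τ κ η) {A : ℝ} {x y : V} {s : ℝ} (hx : x ∈ E) (hy : y ∈ E)
    (hs : 0 < s) (hsR : s ≤ R) (hh : 2 * h x ≤ α * s) (hsh : α * s < 8 * h x)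
    (hxy : h x / 20 ≤ ‖y - x‖) (hxy' : ‖y - x‖ ≤ h x / 10)
    (hσ : α * ‖y - x‖ < ‖σ (y - x)‖)
    (hη : 2 ^ 22 * apxConst n τ κ * η ≤ α ^ 4)
    (hη' : (4 * n / τ + 8 * A / α) * √(4 * apxConst n τ κ * (3 * (n + 1) * η)) ≤ α / (4 * n)) :
    ∃ d : Fin n, SteepAt E π σ α A s x d := by
  have hα := H.α_pos
  have hτ := H.τ_pos
  have hhs : h x ≤ α * s := by linarith [H.h_nonneg x]
  obtain ⟨t, ht, hindep, Λ, c, hΛ, d, hd⟩ := H.exists_direction hx hy hs hsR hhs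
    (by nlinarith [H.α_le]) hσ (H.apxConst_mul_sq_le hs.le hsh.le hxy hη)
  refine ⟨d, fun p y₁ y₂ t₁ t₂ w₁ w₂ hN₁ hN₂ hp => ?_⟩
  have hℓ : 0 < α * s / 4 := by positivity
  have hstep : ‖(α * s / 4) • EuclideanSpace.single d (1 : ℝ)‖ = α * s / 4 := by
    simp [norm_smul, abs_of_pos hα, abs_of_pos hs]
  have hslope := H.norm_slope_le hx hs hsR hhs hℓ ht hindep hΛ
    (by simp : ‖EuclideanSpace.single d (1 : ℝ)‖ = 1) hN₁ hN₂ (by nlinarith) (by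
      rw [← sub_sub]
      refine (norm_sub_le _ _).trans ?_
      rw [hstep]
      nlinarith)
  have herror : (4 * n / (τ * s) + 2 * A / (α * s / 4)) *
      (s * √(4 * apxConst n τ κ * (3 * (n + 1) * η))) =
      (4 * n / τ + 8 * A / α) * √(4 * apxConst n τ κ * (3 * (n + 1) * η)) := by
    field_simp; ring
  rw [herror] at hslope
  linarith [show α / (2 * n) = α / (4 * n) + α / (4 * n) by ring]

end Scene

/-! ### Steep directions are rare -/

section DyadicSlope

variable {T V : Type*} [AddCommGroup T] [NormedAddCommGroup V] [NormedSpace ℝ V]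

/-- The difference quotient of `f` over the `2 ^ r` steps, of length `ω` each, from `v` in
direction `e`. -/
def dyadicSlope (ω : ℝ) (e : T) (f : T → V) (r : ℕ) (v : T) : V :=
  ((2 : ℝ) ^ r * ω)⁻¹ • (f (v + 2 ^ r • e) - f v)

lemma add_two_pow_nsmul_add_two_pow_nsmul (v e : T) (r : ℕ) :
    v + 2 ^ r • e + 2 ^ r • e = v + 2 ^ (r + 1) • e := by
  rw [add_assoc, ← add_smul, pow_succ, mul_two]

lemma inv_two_pow_succ_mul (ω : ℝ) (r : ℕ) :
    ((2 : ℝ) ^ (r + 1) * ω)⁻¹ = 1 / 2 * ((2 : ℝ) ^ r * ω)⁻¹ := by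
  rw [pow_succ, mul_right_comm, mul_inv_rev, one_div]

lemma dyadicSlope_succ (ω : ℝ) (e : T) (f : T → V) (r : ℕ) (v : T) :
    dyadicSlope ω e f (r + 1) v =
      (1 / 2 : ℝ) • (dyadicSlope ω e f r v + dyadicSlope ω e f r (v + 2 ^ r • e)) := by
  simp only [dyadicSlope, add_two_pow_nsmul_add_two_pow_nsmul, inv_two_pow_succ_mul]
  rw [← smul_add, smul_smul]
  congr 1
  abel

lemma norm_dyadicSlope {ω : ℝ} (hω : 0 ≤ ω) (e : T) (f : T → V) (r : ℕ) (v : T) :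
    ‖dyadicSlope ω e f r v‖ = (2 ^ r * ω)⁻¹ * ‖f (v + 2 ^ r • e) - f v‖ := by
  rw [dyadicSlope, norm_smul, Real.norm_of_nonneg (by positivity)]

lemma sq_norm_half_sub_dyadicSlope (ω : ℝ) (e : T) (f : T → V) (r : ℕ) (v : T) :
    ‖(1 / 2 : ℝ) • (dyadicSlope ω e f r v - dyadicSlope ω e f r (v + 2 ^ r • e))‖ ^ 2 =
      ((2 ^ (r + 1) * ω)⁻¹) ^ 2 * ‖(f (v + 2 ^ r • e) - f v) -
        (f (v + 2 ^ (r + 1) • e) - f (v + 2 ^ r • e))‖ ^ 2 := by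
  simp only [dyadicSlope, add_two_pow_nsmul_add_two_pow_nsmul]
  rw [← smul_sub, smul_smul, ← inv_two_pow_succ_mul, norm_smul, mul_pow, Real.norm_eq_abs, sq_abs]

end DyadicSlope

/-- The sum of `g` over the endpoints and the midpoint of the dyadic interval of length `2 ^ r`
starting at `v`. -/
def tripleSum {T : Type*} [AddCommGroup T] (g : T → ℝ≥0∞) (e : T) (r : ℕ) (v : T) : ℝ≥0∞ :=
  g v + g (v + 2 ^ (r - 1) • e) + g (v + 2 ^ r • e)

lemma tsum_tripleSum {T : Type*} [AddCommGroup T] (g : T → ℝ≥0∞) (e : T) (r : ℕ) :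
    ∑' v, tripleSum g e r v = 3 * ∑' v, g v := by
  have htranslate : ∀ a, ∑' v, g (v + a) = ∑' v, g v := fun a => (Equiv.addRight a).tsum_eq g
  simp only [tripleSum]
  rw [ENNReal.tsum_add, ENNReal.tsum_add, htranslate, htranslate]
  ring

/-- The mesh of the lattice used to test slopes at the scales `R / 2 ^ k`, `k ≤ M`. -/
def gridMesh (α R : ℝ) (M : ℕ) : ℝ := α * (R * (1 / 2) ^ M) / 4

lemma gridMesh_pos {α R : ℝ} (hα : 0 < α) (hR : 0 < R) (M : ℕ) : 0 < gridMesh α R M := by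
  rw [gridMesh]; positivity

lemma two_pow_mul_gridMesh (α R : ℝ) {r M : ℕ} (hr : r ≤ M) :
    (2 : ℝ) ^ r * gridMesh α R M = gridMesh α R (M - r) := by
  obtain ⟨m, rfl⟩ := Nat.exists_eq_add_of_le' hr
  rw [Nat.add_sub_cancel, gridMesh, gridMesh, pow_add, one_div, inv_pow, inv_pow]
  field_simp

/-- `I` is a finite part of `E` whose points `x` have a level `k x ≤ M` such that `E` is steep near
`x` in direction `d` at the scale `R / 2 ^ k x`, which exceeds the stopping scale. -/
structure SteepFamily {V : Type*} [NormedAddCommGroup V] [NormedSpace ℝ V] {n : ℕ} (E : Set V)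
    (π : V →ₗ[ℝ] EuclideanSpace ℝ (Fin n)) (σ : V →ₗ[ℝ] V) (h : V → ℝ) (R α A : ℝ) (M : ℕ)
    (I : Finset V) (k : V → ℕ) (d : Fin n) : Prop where
  mem : ∀ x ∈ I, x ∈ E
  level_le : ∀ x ∈ I, k x ≤ M
  stopping_le : ∀ x ∈ I, 2 * h x ≤ α * (R * (1 / 2) ^ (k x + 1))
  steep : ∀ x ∈ I, SteepAt E π σ α A (R * (1 / 2) ^ k x) x d

section Grid

variable {V : Type*} [NormedAddCommGroup V] [NormedSpace ℝ V] {n : ℕ} {E : Set V}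
  {π : V →ₗ[ℝ] EuclideanSpace ℝ (Fin n)} {σ : V →ₗ[ℝ] V} {h : V → ℝ} {R α A ω : ℝ}
  {d : Fin n} {v : Fin n → ℤ} {r j : ℕ} {x : V}

lemma norm_latticePoint_add_sub_le (hω : 0 ≤ ω) (v : Fin n → ℤ) (d : Fin n) (j : ℕ)
    (q : EuclideanSpace ℝ (Fin n)) :
    ‖latticePoint ω (v + j • Pi.single d 1) - q‖ ≤ ‖latticePoint ω v - q‖ + j * ω := by
  rw [latticePoint_add_nsmul_single, add_sub_right_comm]
  refine (norm_add_le _ _).trans_eq ?_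
  rw [norm_smul, Real.norm_of_nonneg (by positivity), PiLp.norm_single, norm_one, mul_one]

lemma norm_latticePoint_sub_le_add (hω : 0 ≤ ω) (v : Fin n → ℤ) (d : Fin n) (j : ℕ)
    (q : EuclideanSpace ℝ (Fin n)) :
    ‖latticePoint ω v - q‖ ≤ ‖latticePoint ω (v + j • Pi.single d 1) - q‖ + j * ω := by
  rw [latticePoint_add_nsmul_single, add_sub_right_comm]
  refine (norm_le_add_norm_add _ ((j * ω) • EuclideanSpace.single d (1 : ℝ))).trans_eq ?_
  rw [norm_smul, Real.norm_of_nonneg (by positivity), PiLp.norm_single, norm_one, mul_one]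

/-- The interval of length `2 ^ r * ω` starting at `latticePoint ω v` may meet the ball of radius
`h x / 2` around the projection of `x`. -/
def Reaches (π : V →ₗ[ℝ] EuclideanSpace ℝ (Fin n)) (h : V → ℝ) (ω : ℝ) (r : ℕ)
    (v : Fin n → ℤ) (x : V) : Prop :=
  ‖latticePoint ω v - π x‖ ≤ h x / 2 + 2 ^ r * ω

lemma Reaches.succ (hω : 0 ≤ ω) (hv : Reaches π h ω r v x) : Reaches π h ω (r + 1) v x := by
  rw [Reaches, pow_succ] at *
  linarith [show 0 ≤ (2 : ℝ) ^ r * ω by positivity]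

lemma Reaches.succ_of_translate (hω : 0 ≤ ω)
    (hv : Reaches π h ω r (v + 2 ^ r • Pi.single d 1) x) : Reaches π h ω (r + 1) v x := by
  rw [Reaches, pow_succ] at *
  have := norm_latticePoint_sub_le_add hω v d (2 ^ r) (π x)
  push_cast at this
  linarith

/-- The weight `c` at the lattice points in the balls of radius `h x / 2` around the projections of
the points `x ∈ I`. -/
def ballWeight (π : V →ₗ[ℝ] EuclideanSpace ℝ (Fin n)) (h : V → ℝ) (ω : ℝ) (I : Finset V)
    (c : ℝ≥0∞) (v : Fin n → ℤ) : ℝ≥0∞ :=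
  if ∃ x ∈ I, ‖latticePoint ω v - π x‖ ≤ h x / 2 then c else 0

lemma ballWeight_le (π : V →ₗ[ℝ] EuclideanSpace ℝ (Fin n)) (h : V → ℝ) (ω : ℝ) (I : Finset V)
    (c : ℝ≥0∞) (v : Fin n → ℤ) : ballWeight π h ω I c v ≤ c := by
  rw [ballWeight]
  split_ifs
  exacts [le_rfl, zero_le]

lemma dyadicAvg_ballWeight_eq_zero (hω : 0 ≤ ω) {I : Finset V} (c : ℝ≥0∞)
    (hv : ∀ x ∈ I, ¬ Reaches π h ω r v x) :
    dyadicAvg (ballWeight π h ω I c) (Pi.single d 1) r v = 0 := by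
  refine dyadicAvg_eq_zero r v fun j hj => if_neg ?_
  rintro ⟨x, hx, hxv⟩
  have hjω : (j : ℝ) * ω ≤ 2 ^ r * ω := by gcongr; exact_mod_cast hj.le
  refine hv x hx ?_
  rw [Reaches]
  linarith [norm_latticePoint_sub_le_add hω v d j (π x)]

variable {M : ℕ} {I : Finset V} {k : V → ℕ} {y : EuclideanSpace ℝ (Fin n) → V}
  {t : EuclideanSpace ℝ (Fin n) → Fin (n + 1) → V}
  {w : EuclideanSpace ℝ (Fin n) → Fin (n + 1) → ℝ}

lemma SteepFamily.near (hI : SteepFamily E π σ h R α A M I k d) (hα : 0 < α) (hR : 0 < R)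
    (hx : x ∈ I) (hr : r ≤ M) (hkr : M ≤ k x + r) (hv : Reaches π h (gridMesh α R M) r v x)
    (hj : j ≤ 2 ^ r) :
    ‖π x - latticePoint (gridMesh α R M) (v + j • Pi.single d 1)‖ ≤
        α * (R * (1 / 2) ^ (M - r)) ∧ h x ≤ α * (R * (1 / 2) ^ (M - r)) := by
  have hω := gridMesh_pos hα hR M
  set s := R * (1 / 2) ^ (M - r) with hs
  have hs₀ : 0 < α * s := by positivity
  have hlevel : R * (1 / 2) ^ (k x + 1) ≤ s / 2 := by
    rw [hs, pow_succ, ← mul_assoc, mul_one_div]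
    gcongr R * ?_ / 2
    exact pow_le_pow_of_le_one (by norm_num) (by norm_num) (by lia)
  have hstopping : 2 * h x ≤ α * (s / 2) := (hI.stopping_le x hx).trans (by gcongr)
  have hjω : (j : ℝ) * gridMesh α R M ≤ 2 ^ r * gridMesh α R M := by
    gcongr; exact_mod_cast hj
  have hdist := norm_latticePoint_add_sub_le hω.le v d j (π x)
  have hmesh : (2 : ℝ) ^ r * gridMesh α R M = α * s / 4 := two_pow_mul_gridMesh α R hr
  rw [Reaches] at hv
  exact ⟨by rw [norm_sub_rev]; linarith, by linarith⟩

/-- The heights over the lattice points given by the chosen nodes. -/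
def gridValue (σ : V →ₗ[ℝ] V) (t : EuclideanSpace ℝ (Fin n) → Fin (n + 1) → V)
    (w : EuclideanSpace ℝ (Fin n) → Fin (n + 1) → ℝ) (ω : ℝ) (v : Fin n → ℤ) : V :=
  nodeValue σ (t (latticePoint ω v)) (w (latticePoint ω v))

lemma SteepFamily.isNode (hI : SteepFamily E π σ h R α A M I k d) (hα : 0 < α) (hR : 0 < R)
    (hN : IsNodeFamily E π h α A R M y t w) (hx : x ∈ I) (hr : r ≤ M) (hkr : M ≤ k x + r)
    (hv : Reaches π h (gridMesh α R M) r v x) (hj : j ≤ 2 ^ r) :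
    IsNode E π α A (latticePoint (gridMesh α R M) (v + j • Pi.single d 1))
      (R * (1 / 2) ^ (M - r)) (y (latticePoint (gridMesh α R M) (v + j • Pi.single d 1)))
      (t (latticePoint (gridMesh α R M) (v + j • Pi.single d 1)))
      (w (latticePoint (gridMesh α R M) (v + j • Pi.single d 1))) :=
  hN _ _ (Nat.sub_le M r) ⟨x, hI.mem x hx, hI.near hα hR hx hr hkr hv hj⟩

lemma SteepFamily.le_norm_dyadicSlope (hI : SteepFamily E π σ h R α A M I k d) (hα : 0 < α)
    (hR : 0 < R) (hN : IsNodeFamily E π h α A R M y t w) (hx : x ∈ I) (hkr : k x + r = M)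
    (hv : Reaches π h (gridMesh α R M) r v x) :
    α / (4 * n) ≤ ‖dyadicSlope (gridMesh α R M) (Pi.single d 1)
      (gridValue σ t w (gridMesh α R M)) r v‖ := by
  have hr : r ≤ M := by lia
  have hlevel : M - r = k x := by lia
  have hmesh : (2 : ℝ) ^ r * gridMesh α R M = α * (R * (1 / 2) ^ k x) / 4 := by
    rw [two_pow_mul_gridMesh α R hr, hlevel, gridMesh]
  have hleft := hI.isNode hα hR hN hx hr hkr.ge hv (Nat.zero_le _)
  have hright := hI.isNode hα hR hN hx hr hkr.ge hv le_rfl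
  have hdist := (hI.near hα hR hx hr hkr.ge hv (Nat.zero_le _)).1
  have hstep : latticePoint (gridMesh α R M) (v + 2 ^ r • Pi.single d 1) =
      latticePoint (gridMesh α R M) v +
        (α * (R * (1 / 2) ^ k x) / 4) • EuclideanSpace.single d (1 : ℝ) := by
    rw [latticePoint_add_nsmul_single, Nat.cast_pow, Nat.cast_ofNat, hmesh]
  rw [hlevel, hstep] at hright
  rw [zero_smul, add_zero, hlevel] at hleft hdist
  rw [norm_dyadicSlope (gridMesh_pos hα hR M).le, hmesh, gridValue, gridValue, hstep]
  exact hI.steep x hx _ _ _ _ _ _ _ hleft hright hdist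

lemma IsNode.norm_nodeValue_sub_apply_le {p : EuclideanSpace ℝ (Fin n)} {s B : ℝ} {x' : V}
    {t : Fin (n + 1) → V} {w : Fin (n + 1) → ℝ} (hN : IsNode E π α A p s x' t w) (hB : 0 ≤ B)
    (hflat : ∀ z ∈ E, ‖σ (z - x)‖ ≤ B) : ‖nodeValue σ t w - σ x‖ ≤ A * B := by
  simpa using hN.norm_nodeValue_sub_le (σ := σ) (Λ := 0) (c := σ x) hB fun j => by
    simpa using hflat _ (hN.vertex_mem j)

lemma SteepFamily.norm_dyadicSlope_le (hI : SteepFamily E π σ h R α A M I k d) (hα : 0 < α)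
    (hR : 0 < R) (hN : IsNodeFamily E π h α A R M y t w) {ε : ℝ} (hε : 0 ≤ ε)
    (hflat : ∀ z ∈ E, ∀ x ∈ E, ‖σ (z - x)‖ ≤ ε * R) (hx : x ∈ I)
    (hv : Reaches π h (gridMesh α R M) M v x) :
    ‖dyadicSlope (gridMesh α R M) (Pi.single d 1) (gridValue σ t w (gridMesh α R M)) M v‖ ≤
      8 * A * ε / α := by
  have hvalue : ∀ j ≤ 2 ^ M, ‖gridValue σ t w (gridMesh α R M) (v + j • Pi.single d 1) - σ x‖ ≤
      A * (ε * R) := fun j hj =>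
    (hI.isNode hα hR hN hx le_rfl (Nat.le_add_left M (k x)) hv hj).norm_nodeValue_sub_apply_le
      (by positivity) fun z hz => hflat z hz x (hI.mem x hx)
  have hleft := hvalue 0 (Nat.zero_le _)
  rw [zero_smul, add_zero, norm_sub_rev] at hleft
  rw [norm_dyadicSlope (gridMesh_pos hα hR M).le, two_pow_mul_gridMesh α R le_rfl, Nat.sub_self,
    gridMesh, pow_zero, mul_one]
  calc _ ≤ (α * R / 4)⁻¹ * (A * (ε * R) + A * (ε * R)) := by
        gcongr
        exact (norm_sub_le_norm_sub_add_norm_sub _ (σ x) _).trans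
          (add_le_add (hvalue _ le_rfl) hleft)
    _ = _ := by field_simp; ring

end Grid

section GridCurv

variable {V : Type*} [NormedAddCommGroup V] [InnerProductSpace ℝ V] [MeasurableSpace V]
  {n : ℕ}

/-- The curvature, at the scale `R / 2 ^ (M - r)`, of the vertices of the node over the lattice
point with index `v`, if that point is near `E`. -/
def gridCurv (μ : Measure V) (τ : ℝ) (E : Set V) (π : V →ₗ[ℝ] EuclideanSpace ℝ (Fin n))
    (h : V → ℝ) (α R : ℝ) (t : EuclideanSpace ℝ (Fin n) → Fin (n + 1) → V) (M r : ℕ)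
    (v : Fin n → ℤ) : ℝ≥0∞ :=
  if Near E π h α (latticePoint (gridMesh α R M) v) R then
    ∑ j, scaleCurv n μ τ (R * (1 / 2) ^ (M - r)) (t (latticePoint (gridMesh α R M) v) j)
  else 0

/-- The constant controlling the oscillation of dyadic slopes by the curvature. -/
def oscConst (n : ℕ) (τ κ α A : ℝ) : ℝ := 1024 * A ^ 2 * apxConst n τ κ / α ^ 2

lemma oscConst_nonneg (n : ℕ) {τ κ : ℝ} (hτ : 0 < τ) (hκ : 0 < κ) (α A : ℝ) :
    0 ≤ oscConst n τ κ α A := by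
  have := apxConst_pos n hτ hκ
  rw [oscConst]; positivity

end GridCurv

namespace Scene

variable {V : Type*} [NormedAddCommGroup V] [InnerProductSpace ℝ V] [MeasurableSpace V]
  {n : ℕ} {μ : Measure V} {E : Set V} {π : V →ₗ[ℝ] EuclideanSpace ℝ (Fin n)} {σ : V →ₗ[ℝ] V}
  {h : V → ℝ} {R α τ κ η A : ℝ} {M : ℕ} {I : Finset V} {k : V → ℕ} {d : Fin n}
  {y : EuclideanSpace ℝ (Fin n) → V} {t : EuclideanSpace ℝ (Fin n) → Fin (n + 1) → V}
  {w : EuclideanSpace ℝ (Fin n) → Fin (n + 1) → ℝ}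

lemma gridMesh_le (H : Scene n μ E π σ h R α τ κ η) (M : ℕ) : gridMesh α R M ≤ R := by
  have hR := H.R_pos
  have hle : R * (1 / 2) ^ M ≤ R :=
    mul_le_of_le_one_right hR.le (pow_le_one₀ (by norm_num) (by norm_num))
  rw [gridMesh]
  nlinarith [H.α_le, H.α_pos]

lemma exists_near_finset (H : Scene n μ E π σ h R α τ κ η) {x₀ : V} (hE : ∀ x ∈ E, ‖x - x₀‖ ≤ R)
    {ω : ℝ} (hω : 0 < ω) (hωR : ω ≤ R) : ∃ F : Finset (Fin n → ℤ),
      (∀ v, Near E π h α (latticePoint ω v) R → v ∈ F) ∧ (F.card : ℝ) ≤ (5 * R / ω) ^ n := by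
  have hR := H.R_pos
  refine ⟨latticeCube ω (2 * R) (π x₀), fun v ⟨x, hx, hxv, _⟩ => mem_latticeCube_of_norm_le hω ?_,
    (card_latticeCube_le hω (by positivity) (π x₀)).trans ?_⟩
  · have hproj := (H.split.norm_fst_le (x - x₀)).trans (hE x hx)
    rw [map_sub] at hproj
    rw [norm_sub_rev] at hxv
    nlinarith [norm_sub_le_norm_sub_add_norm_sub (latticePoint ω v) (π x) (π x₀), H.α_le]
  · rw [Fintype.card_fin]
    gcongr
    have : 1 ≤ R / ω := (one_le_div hω).2 hωR
    linarith [show 2 * (2 * R) / ω = 4 * (R / ω) by ring, mul_div_assoc 5 R ω]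

variable [BorelSpace V] [SecondCountableTopology V]

lemma sum_tsum_gridCurv_le (H : Scene n μ E π σ h R α τ κ η) (hn : 1 ≤ n)
    (hN : IsNodeFamily E π h α A R M y t w) {F : Finset (Fin n → ℤ)}
    (hF : ∀ v, Near E π h α (latticePoint (gridMesh α R M) v) R → v ∈ F)
    {J : ℕ} (hJ : 2 / τ < 2 ^ J) :
    ∑ r ∈ Finset.range M, ∑' v, gridCurv μ τ E π h α R t M (r + 1) v ≤
      F.card * ((n + 1) * (J * ENNReal.ofReal η)) := by
  have hsupp : ∀ r, ∑' v, gridCurv μ τ E π h α R t M r v =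
      ∑ v ∈ F, gridCurv μ τ E π h α R t M r v :=
    fun r => tsum_eq_sum fun v hv => if_neg fun hnear => hv (hF v hnear)
  simp only [hsupp]
  rw [Finset.sum_comm, ← nsmul_eq_mul]
  refine Finset.sum_le_card_nsmul _ _ _ fun v _ => ?_
  by_cases hv : Near E π h α (latticePoint (gridMesh α R M) v) R
  swap
  · simp [gridCurv, hv]
  have hE : ∀ j, t (latticePoint (gridMesh α R M) v) j ∈ E :=
    (hN _ 0 (Nat.zero_le M) (by simpa using hv)).vertex_mem
  simp only [gridCurv, if_pos hv]
  rw [Finset.sum_comm]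
  have hvertex : ∀ j ∈ Finset.univ, ∑ r ∈ Finset.range M, scaleCurv n μ τ
      (R * (1 / 2) ^ (M - (r + 1))) (t (latticePoint (gridMesh α R M) v) j) ≤
      J * ENNReal.ofReal η := by
    intro j _
    have hsum := sum_scaleCurv_le hn H.τ_pos H.R_pos hJ μ M (t (latticePoint (gridMesh α R M) v) j)
    rw [← Finset.sum_range_reflect] at hsum
    simp only [Nat.sub_sub, add_comm 1] at hsum
    exact hsum.trans (mul_le_mul_right (H.curvature _ (hE j)) _)
  simpa using Finset.sum_le_card_nsmul _ _ _ hvertex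

variable [IsFiniteMeasure μ]

lemma ofReal_sq_norm_half_sub_dyadicSlope_le (H : Scene n μ E π σ h R α τ κ η)
    (hI : SteepFamily E π σ h R α A M I k d) (hN : IsNodeFamily E π h α A R M y t w)
    {x : V} (hx : x ∈ I) {r : ℕ} (hr : r + 1 ≤ M) (hkr : M ≤ k x + (r + 1)) {v : Fin n → ℤ}
    (hv : Reaches π h (gridMesh α R M) (r + 1) v x) :
    ENNReal.ofReal (‖(1 / 2 : ℝ) • (dyadicSlope (gridMesh α R M) (Pi.single d 1)
        (gridValue σ t w (gridMesh α R M)) r v - dyadicSlope (gridMesh α R M) (Pi.single d 1)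
        (gridValue σ t w (gridMesh α R M)) r (v + 2 ^ r • Pi.single d 1))‖ ^ 2) ≤
      ENNReal.ofReal (oscConst n τ κ α A) *
        tripleSum (gridCurv μ τ E π h α R t M (r + 1)) (Pi.single d 1) (r + 1) v := by
  have hα := H.α_pos
  have hR := H.R_pos
  set ω := gridMesh α R M
  set s := R * (1 / 2) ^ (M - (r + 1)) with hs
  have hs₀ : 0 < s := by positivity
  have hsR : s ≤ R := mul_le_of_le_one_right hR.le (pow_le_one₀ (by norm_num) (by norm_num))
  let u : Fin 3 → Fin n → ℤ :=
    ![v, v + 2 ^ r • Pi.single d 1, v + 2 ^ (r + 1) • Pi.single d 1]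
  have hu : ∀ i, ∃ j ≤ 2 ^ (r + 1), u i = v + j • Pi.single d 1 := Fin.forall_fin_succ.2
    ⟨⟨0, Nat.zero_le _, by simp [u]⟩, Fin.forall_fin_two.2
      ⟨⟨2 ^ r, Nat.pow_le_pow_right two_pos r.le_succ, rfl⟩, ⟨2 ^ (r + 1), le_rfl, rfl⟩⟩⟩
  have hnear : ∀ i, ‖π x - latticePoint ω (u i)‖ ≤ α * s ∧ h x ≤ α * s := fun i => by
    obtain ⟨j, hj, hij⟩ := hu i
    exact hij ▸ hI.near hα hR hx hr hkr hv hj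
  have hmid : latticePoint ω (u 0) + latticePoint ω (u 2) =
      latticePoint ω (u 1) + latticePoint ω (u 1) := by
    simp only [u, Matrix.cons_val_zero, Matrix.cons_val_one, Matrix.cons_val]
    rw [latticePoint_add_nsmul_single, latticePoint_add_nsmul_single]
    push_cast
    module
  have hdiff := H.sq_norm_second_difference_le (hI.mem x hx) hs₀ hsR (hnear 0).2
    (p := fun i => latticePoint ω (u i))
    (fun i => hN _ _ (Nat.sub_le M _) ⟨x, hI.mem x hx, hnear i⟩)
    (fun i => (hnear i).1.trans (by nlinarith)) hmid
  set S := ∑ i, ∑ j, scaleCurv n μ τ s (t (latticePoint ω (u i)) j) with hS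
  have htriple : tripleSum (gridCurv μ τ E π h α R t M (r + 1)) (Pi.single d 1) (r + 1) v = S := by
    have hgrid : ∀ i, gridCurv μ τ E π h α R t M (r + 1) (u i) =
        ∑ j, scaleCurv n μ τ s (t (latticePoint ω (u i)) j) := fun i =>
      if_pos (Near.mono ⟨x, hI.mem x hx, hnear i⟩ hα.le hsR)
    rw [hS, ← Finset.sum_congr rfl fun i _ => hgrid i, Fin.sum_univ_three, tripleSum]
    rfl
  have hosc := oscConst_nonneg n H.τ_pos H.κ_pos α A
  rw [htriple, sq_norm_half_sub_dyadicSlope, two_pow_mul_gridMesh α R hr]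
  calc _ ≤ ENNReal.ofReal (oscConst n τ κ α A * S.toReal) := by
        refine ENNReal.ofReal_le_ofReal ?_
        calc _ ≤ (gridMesh α R (M - (r + 1)))⁻¹ ^ 2 *
              (64 * A ^ 2 * apxConst n τ κ * s ^ 2 * S.toReal) := by gcongr; exact hdiff
          _ = _ := by rw [oscConst, gridMesh, ← hs]; field_simp; ring
    _ = ENNReal.ofReal (oscConst n τ κ α A) * ENNReal.ofReal S.toReal := ENNReal.ofReal_mul hosc
    _ ≤ _ := by gcongr; exact ENNReal.ofReal_toReal_le

/-- Descend from a dyadic interval to its halves as long as the interval is long compared to the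
levels of all the points it reaches. When it has the level of one of them, steepness there bounds
the weight by the slope. -/
lemma dyadicAvg_ballWeight_le (H : Scene n μ E π σ h R α τ κ η)
    (hI : SteepFamily E π σ h R α A M I k d) (hN : IsNodeFamily E π h α A R M y t w)
    {r : ℕ} (hr : r ≤ M) {v : Fin n → ℤ}
    (hv : ∀ x ∈ I, Reaches π h (gridMesh α R M) r v x → M ≤ k x + r) :
    dyadicAvg (ballWeight π h (gridMesh α R M) I (ENNReal.ofReal ((α / (4 * n)) ^ 2)))
        (Pi.single d 1) r v ≤
      ENNReal.ofReal (‖dyadicSlope (gridMesh α R M) (Pi.single d 1)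
        (gridValue σ t w (gridMesh α R M)) r v‖ ^ 2) +
      dyadicSum (fun r v => ENNReal.ofReal (oscConst n τ κ α A) *
        tripleSum (gridCurv μ τ E π h α R t M r) (Pi.single d 1) r v) (Pi.single d 1) r v := by
  have hα := H.α_pos
  have hω := (gridMesh_pos hα H.R_pos M).le
  refine dyadicAvg_le_add (dyadicSlope_succ _ _ _) (P := fun r v => r ≤ M ∧
    ∀ x ∈ I, Reaches π h (gridMesh α R M) r v x → M ≤ k x + r) ?_ r v ⟨hr, hv⟩
  clear! r v
  rintro r v ⟨hr, hv⟩
  by_cases hnone : ∀ x ∈ I, ¬ Reaches π h (gridMesh α R M) r v x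
  · exact Or.inl (dyadicAvg_ballWeight_eq_zero hω _ hnone)
  by_cases hlevel : ∃ x ∈ I, Reaches π h (gridMesh α R M) r v x ∧ k x + r = M
  · obtain ⟨x, hx, hxv, hkr⟩ := hlevel
    refine Or.inr (Or.inl ((dyadicAvg_le_of_forall_le (ballWeight_le _ _ _ _ _) r v).trans
      (ENNReal.ofReal_le_ofReal ?_)))
    gcongr
    exact hI.le_norm_dyadicSlope hα H.R_pos hN hx hkr hxv
  push Not at hnone hlevel
  obtain ⟨x, hx, hxv⟩ := hnone
  have hlt : ∀ z ∈ I, Reaches π h (gridMesh α R M) r v z → M < k z + r := fun z hz hzv =>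
    lt_of_le_of_ne (hv z hz hzv) (hlevel z hz hzv).symm
  obtain ⟨r, rfl⟩ : ∃ r', r = r' + 1 :=
    ⟨r - 1, by have := hI.level_le x hx; have := hlt x hx hxv; lia⟩
  refine Or.inr (Or.inr ⟨r, rfl,
    ⟨by lia, fun z hz hzv => Nat.lt_succ_iff.1 (hlt z hz (hzv.succ hω))⟩,
    ⟨by lia, fun z hz hzv => Nat.lt_succ_iff.1 (hlt z hz (hzv.succ_of_translate hω))⟩,
    H.ofReal_sq_norm_half_sub_dyadicSlope_le hI hN hx hr (hlt x hx hxv).le hxv⟩)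

lemma dyadicAvg_ballWeight_top_le (H : Scene n μ E π σ h R α τ κ η)
    (hI : SteepFamily E π σ h R α A M I k d) (hN : IsNodeFamily E π h α A R M y t w)
    {ε : ℝ} (hε : 0 ≤ ε) (hflat : ∀ z ∈ E, ∀ x ∈ E, ‖σ (z - x)‖ ≤ ε * R)
    {F : Finset (Fin n → ℤ)}
    (hF : ∀ v, Near E π h α (latticePoint (gridMesh α R M) v) R → v ∈ F) (v : Fin n → ℤ) :
    dyadicAvg (ballWeight π h (gridMesh α R M) I (ENNReal.ofReal ((α / (4 * n)) ^ 2)))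
        (Pi.single d 1) M v ≤
      (if v ∈ F then ENNReal.ofReal ((8 * A * ε / α) ^ 2) else 0) +
      dyadicSum (fun r v => ENNReal.ofReal (oscConst n τ κ α A) *
        tripleSum (gridCurv μ τ E π h α R t M r) (Pi.single d 1) r v) (Pi.single d 1) M v := by
  have hα := H.α_pos
  by_cases hnone : ∀ x ∈ I, ¬ Reaches π h (gridMesh α R M) M v x
  · rw [dyadicAvg_ballWeight_eq_zero (gridMesh_pos hα H.R_pos M).le _ hnone]
    exact zero_le
  push Not at hnone
  obtain ⟨x, hx, hxv⟩ := hnone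
  have hnear := hI.near hα H.R_pos hx le_rfl (Nat.le_add_left M (k x)) hxv (Nat.zero_le _)
  rw [zero_smul, add_zero, Nat.sub_self, pow_zero, mul_one] at hnear
  rw [if_pos (hF v ⟨x, hI.mem x hx, hnear⟩)]
  refine (H.dyadicAvg_ballWeight_le hI hN le_rfl fun z _ _ => Nat.le_add_left M (k z)).trans ?_
  gcongr
  exact hI.norm_dyadicSlope_le hα H.R_pos hN hε hflat hx hxv

lemma tsum_ballWeight_le (H : Scene n μ E π σ h R α τ κ η) (hn : 1 ≤ n) {x₀ : V}
    (hE : ∀ x ∈ E, ‖x - x₀‖ ≤ R) {ε : ℝ} (hε : 0 ≤ ε)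
    (hflat : ∀ z ∈ E, ∀ x ∈ E, ‖σ (z - x)‖ ≤ ε * R) {J : ℕ} (hJ : 2 / τ < 2 ^ J)
    (hI : SteepFamily E π σ h R α (1 + 8 * n / τ) M I k d) :
    ∑' v, ballWeight π h (gridMesh α R M) I (ENNReal.ofReal ((α / (4 * n)) ^ 2)) v ≤
      ENNReal.ofReal ((5 * R / gridMesh α R M) ^ n * ((8 * (1 + 8 * n / τ) * ε / α) ^ 2 +
        oscConst n τ κ α (1 + 8 * n / τ) * (3 * ((n + 1) * (J * η))))) := by
  set A : ℝ := 1 + 8 * n / τ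
  set C := oscConst n τ κ α A
  have hη := H.η_pos
  have hC : 0 ≤ C := oscConst_nonneg n H.τ_pos H.κ_pos α A
  obtain ⟨y, t, w, hN⟩ := H.exists_isNodeFamily M
  obtain ⟨F, hF, hcard⟩ :=
    H.exists_near_finset hE (gridMesh_pos H.α_pos H.R_pos M) (H.gridMesh_le M)
  rw [← tsum_dyadicAvg _ (Pi.single d 1) M]
  calc _ ≤ ∑' v, ((if v ∈ F then ENNReal.ofReal ((8 * A * ε / α) ^ 2) else 0) +
        dyadicSum (fun r v => ENNReal.ofReal C *
          tripleSum (gridCurv μ τ E π h α R t M r) (Pi.single d 1) r v) (Pi.single d 1) M v) :=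
      ENNReal.tsum_le_tsum (H.dyadicAvg_ballWeight_top_le hI hN hε hflat hF)
    _ = F.card * ENNReal.ofReal ((8 * A * ε / α) ^ 2) + ENNReal.ofReal C *
        (3 * ∑ r ∈ Finset.range M, ∑' v, gridCurv μ τ E π h α R t M (r + 1) v) := by
      rw [ENNReal.tsum_add, tsum_dyadicSum]
      simp only [ENNReal.tsum_mul_left, tsum_tripleSum, ← Finset.mul_sum]
      congr 1
      rw [tsum_eq_sum (s := F) fun v hv => if_neg hv, Finset.sum_congr rfl fun v hv => if_pos hv,
        Finset.sum_const, nsmul_eq_mul]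
    _ ≤ F.card * ENNReal.ofReal ((8 * A * ε / α) ^ 2) +
        ENNReal.ofReal C * (3 * (F.card * ((n + 1) * (J * ENNReal.ofReal η)))) := by
      gcongr
      exact H.sum_tsum_gridCurv_le hn hN hF hJ
    _ = ENNReal.ofReal (F.card * ((8 * A * ε / α) ^ 2 + C * (3 * ((n + 1) * (J * η))))) := by
      rw [ENNReal.ofReal_mul (by positivity), ENNReal.ofReal_add (by positivity) (by positivity),
        ENNReal.ofReal_mul hC, ENNReal.ofReal_mul (by norm_num),
        ENNReal.ofReal_mul (by positivity), ENNReal.ofReal_mul (by positivity),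
        ENNReal.ofReal_add (by positivity) (by positivity)]
      simp only [ENNReal.ofReal_natCast, ENNReal.ofReal_ofNat, ENNReal.ofReal_one]
      ring
    _ ≤ _ := by gcongr

end Scene

/-! ### Content of the steep part -/

lemma norm_latticePoint_sub_le_of_mem_latticeCube {n : ℕ} (hn : 1 ≤ n) {ω ρ : ℝ} (hω : 0 < ω)
    {q : EuclideanSpace ℝ (Fin n)} {v : Fin n → ℤ} (hv : v ∈ latticeCube ω (ρ / n) q) :
    ‖latticePoint ω v - q‖ ≤ ρ := by
  have hn₀ : (n : ℝ) ≠ 0 := by positivity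
  simpa [mul_div_cancel₀ ρ hn₀] using norm_latticePoint_sub_le hω hv

lemma sum_pow_le_tsum_ballWeight {V : Type*} [NormedAddCommGroup V] [NormedSpace ℝ V] {n : ℕ}
    (hn : 1 ≤ n) {π : V →ₗ[ℝ] EuclideanSpace ℝ (Fin n)} {h : V → ℝ} {ω : ℝ} (hω : 0 < ω)
    {I : Finset V} (hh : ∀ x ∈ I, n * ω ≤ h x / 2)
    (hsep : ∀ x ∈ I, ∀ y ∈ I, x ≠ y → h x / 2 + h y / 2 < ‖π x - π y‖) {c : ℝ} (hc : 0 ≤ c) :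
    ENNReal.ofReal ((∑ x ∈ I, (h x / 2 / n / ω) ^ n) * c) ≤
      ∑' v, ballWeight π h ω I (ENNReal.ofReal c) v := by
  set cube : V → Finset (Fin n → ℤ) := fun x => latticeCube ω (h x / 2 / n) (π x) with hcube
  have hnorm : ∀ x, ∀ v ∈ cube x, ‖latticePoint ω v - π x‖ ≤ h x / 2 := fun x v hv =>
    norm_latticePoint_sub_le_of_mem_latticeCube hn hω hv
  have hdisj : (I : Set V).PairwiseDisjoint cube := by
    refine fun x hx y hy hxy => Finset.disjoint_left.2 fun v hvx hvy => ?_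
    have hdist := norm_sub_le_norm_sub_add_norm_sub (π x) (latticePoint ω v) (π y)
    rw [norm_sub_rev (π x) (latticePoint ω v)] at hdist
    linarith [hnorm x v hvx, hnorm y v hvy, hsep x hx y hy hxy]
  have hcard : ∑ x ∈ I, (h x / 2 / n / ω) ^ n ≤ ((I.biUnion cube).card : ℝ) := by
    rw [Finset.card_biUnion hdisj, Nat.cast_sum]
    refine Finset.sum_le_sum fun x hx => ?_
    have hωx : ω ≤ h x / 2 / n := by
      rw [le_div_iff₀ (by positivity), mul_comm]
      exact hh x hx
    simpa using le_card_latticeCube hω hωx (π x)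
  calc _ ≤ ENNReal.ofReal ((I.biUnion cube).card * c) := by gcongr
    _ = ∑ _v ∈ I.biUnion cube, ENNReal.ofReal c := by
      rw [Finset.sum_const, nsmul_eq_mul, ENNReal.ofReal_mul (by positivity),
        ENNReal.ofReal_natCast]
    _ = ∑ v ∈ I.biUnion cube, ballWeight π h ω I (ENNReal.ofReal c) v := by
      refine Finset.sum_congr rfl fun v hv => ?_
      obtain ⟨x, hx, hxv⟩ := Finset.mem_biUnion.1 hv
      rw [ballWeight, if_pos ⟨x, hx, hnorm x v hxv⟩]
    _ ≤ _ := ENNReal.sum_le_tsum _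

/-- The stopping scale at `x` is caused by a point of `E` outside the cone of slope `α` at `x`. -/
structure IsSteepStop {V : Type*} [NormedAddCommGroup V] [NormedSpace ℝ V] (E : Set V)
    (σ : V →ₗ[ℝ] V) (h : V → ℝ) (R α : ℝ) (x : V) : Prop where
  mem : x ∈ E
  pos : 0 < h x
  le : 4 * h x ≤ α * R
  exists_steep : ∃ y ∈ E, h x / 20 ≤ ‖y - x‖ ∧ ‖y - x‖ ≤ h x / 10 ∧
    α * ‖y - x‖ < ‖σ (y - x)‖

/-- The bound for the energy of the slopes, per unit volume of the base, which is furnished by the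
flatness `ε` at the top scale and by the curvature `η`. -/
def slopeEnergyBound (n J : ℕ) (α τ κ ε η : ℝ) : ℝ :=
  (8 * (1 + 8 * n / τ) * ε / α) ^ 2 +
    oscConst n τ κ α (1 + 8 * n / τ) * (3 * ((n + 1) * (J * η)))

lemma slopeEnergyBound_nonneg (n J : ℕ) (α : ℝ) {τ κ : ℝ} (hτ : 0 < τ) (hκ : 0 < κ) (ε : ℝ) {η : ℝ}
    (hη : 0 ≤ η) : 0 ≤ slopeEnergyBound n J α τ κ ε η := by
  have := oscConst_nonneg n hτ hκ α (1 + 8 * n / τ)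
  rw [slopeEnergyBound]
  positivity

/-- The bound for the content of the steep part, relative to `R ^ n`. The first factor counts the
coordinate directions, and `α / (4 * n)` is the slope of a steep direction. -/
def steepBound (n J : ℕ) (α τ κ ε η : ℝ) : ℝ :=
  n * ((10 * n) ^ n * (4 * n / α) ^ 2 * slopeEnergyBound n J α τ κ ε η)

namespace Scene

variable {V : Type*} [NormedAddCommGroup V] [InnerProductSpace ℝ V] [MeasurableSpace V]
  [BorelSpace V] [SecondCountableTopology V] {n : ℕ} {μ : Measure V} [IsFiniteMeasure μ]
  {E : Set V} {π : V →ₗ[ℝ] EuclideanSpace ℝ (Fin n)} {σ : V →ₗ[ℝ] V} {h : V → ℝ}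
  {R α τ κ η : ℝ}

lemma sum_pow_le_of_steepFamily (H : Scene n μ E π σ h R α τ κ η) (hn : 1 ≤ n) {x₀ : V}
    (hE : ∀ x ∈ E, ‖x - x₀‖ ≤ R) {ε : ℝ} (hε : 0 ≤ ε)
    (hflat : ∀ z ∈ E, ∀ x ∈ E, ‖σ (z - x)‖ ≤ ε * R) {J : ℕ} (hJ : 2 / τ < 2 ^ J)
    {M : ℕ} {I : Finset V} {k : V → ℕ} {d : Fin n}
    (hI : SteepFamily E π σ h R α (1 + 8 * n / τ) M I k d)
    (hh : ∀ x ∈ I, n * gridMesh α R M ≤ h x / 2)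
    (hsep : ∀ x ∈ I, ∀ y ∈ I, x ≠ y → h x / 2 + h y / 2 < ‖π x - π y‖) :
    ∑ x ∈ I, h x ^ n ≤
      (10 * n) ^ n * (4 * n / α) ^ 2 * slopeEnergyBound n J α τ κ ε η * R ^ n := by
  have hα := H.α_pos
  have hR := H.R_pos
  have hω := gridMesh_pos hα hR M
  have hB := slopeEnergyBound_nonneg n J α H.τ_pos H.κ_pos ε H.η_pos.le
  set ω := gridMesh α R M
  set B := slopeEnergyBound n J α τ κ ε η
  have hcontent : (∑ x ∈ I, (h x / 2 / n / ω) ^ n) * (α / (4 * n)) ^ 2 ≤ (5 * R / ω) ^ n * B := by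
    refine (ENNReal.ofReal_le_ofReal_iff (by positivity)).1 ?_
    exact (sum_pow_le_tsum_ballWeight hn hω hh hsep (by positivity)).trans
      (H.tsum_ballWeight_le hn hE hε hflat hJ hI)
  have hrescale : ∀ x, (h x / 2 / n / ω) ^ n = h x ^ n * (1 / (2 * n * ω)) ^ n := fun x => by
    rw [← mul_pow]; congr 1; field_simp
  simp only [hrescale] at hcontent
  rw [← Finset.sum_mul] at hcontent
  have hvolume : (5 * R / ω) ^ n = (10 * n) ^ n * R ^ n * (1 / (2 * n * ω)) ^ n := by
    rw [← mul_pow, ← mul_pow]; congr 1; field_simp; norm_num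
  have hslope : (4 * n / α) ^ 2 * (α / (4 * n)) ^ 2 = 1 := by
    rw [← mul_pow]; field_simp
  refine le_of_mul_le_mul_right (a := (1 / (2 * n * ω)) ^ n * (α / (4 * n)) ^ 2) ?_ (by positivity)
  calc _ = (∑ x ∈ I, h x ^ n) * (1 / (2 * n * ω)) ^ n * (α / (4 * n)) ^ 2 := by ring
    _ ≤ (5 * R / ω) ^ n * B * 1 := by rwa [mul_one]
    _ = (10 * n) ^ n * R ^ n * (1 / (2 * n * ω)) ^ n * B *
        ((4 * n / α) ^ 2 * (α / (4 * n)) ^ 2) := by rw [hvolume, hslope]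
    _ = _ := by ring

lemma exists_steepAt_level (H : Scene n μ E π σ h R α τ κ η) {A : ℝ} {x : V}
    (hx : IsSteepStop E σ h R α x) (hη : 2 ^ 22 * apxConst n τ κ * η ≤ α ^ 4)
    (hη' : (4 * n / τ + 8 * A / α) * √(4 * apxConst n τ κ * (3 * (n + 1) * η)) ≤ α / (4 * n)) :
    ∃ (k : ℕ) (d : Fin n), 2 * h x ≤ α * (R * (1 / 2) ^ (k + 1)) ∧
      SteepAt E π σ α A (R * (1 / 2) ^ k) x d := by
  have hα := H.α_pos
  have hR := H.R_pos
  obtain ⟨k, hlow, hhigh⟩ := exists_level hx.pos (mul_pos hα hR) hx.le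
  rw [mul_assoc] at hlow hhigh
  obtain ⟨y, hy, hxy, hxy', hσ⟩ := hx.exists_steep
  have hhalf : α * (R * (1 / 2) ^ (k + 1)) ≤ α * (R * (1 / 2) ^ k) := by
    gcongr ?_ * (?_ * ?_)
    exact pow_le_pow_of_le_one (by norm_num) (by norm_num) k.le_succ
  obtain ⟨d, hd⟩ := H.exists_steepAt hx.mem hy (by positivity)
    (mul_le_of_le_one_right hR.le (pow_le_one₀ (by norm_num) (by norm_num)))
    (hlow.trans hhalf) hhigh hxy hxy' hσ hη hη'
  exact ⟨k, d, hlow, hd⟩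

omit [BorelSpace V] [SecondCountableTopology V] [IsFiniteMeasure μ] in
lemma exists_gridMesh_le (H : Scene n μ E π σ h R α τ κ η) {x : V} (hx : 0 < h x) :
    ∃ m : ℕ, ∀ M ≥ m, n * gridMesh α R M ≤ h x / 2 := by
  have hα := H.α_pos
  have hR := H.R_pos
  obtain ⟨m, hm⟩ := exists_pow_lt_of_lt_one (x := h x / (α * R * n + 1)) (y := (1 / 2 : ℝ))
    (by positivity) (by norm_num)
  refine ⟨m, fun M hM => ?_⟩
  rw [lt_div_iff₀ (by positivity)] at hm
  have hpow : (0 : ℝ) < (1 / 2) ^ m := by positivity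
  calc n * gridMesh α R M = n * (α * (R * (1 / 2) ^ M) / 4) := rfl
    _ ≤ n * (α * (R * (1 / 2) ^ m) / 4) := by
      gcongr n * (α * (R * ?_) / 4)
      exact pow_le_pow_of_le_one (by norm_num) (by norm_num) hM
    _ ≤ h x / 2 := by linarith

/-- The points are sorted by the direction in which the set is steep near them. -/
lemma sum_pow_le_of_isSteepStop (H : Scene n μ E π σ h R α τ κ η) (hn : 1 ≤ n) {x₀ : V}
    (hE : ∀ x ∈ E, ‖x - x₀‖ ≤ R) {ε : ℝ} (hε : 0 ≤ ε)
    (hflat : ∀ z ∈ E, ∀ x ∈ E, ‖σ (z - x)‖ ≤ ε * R) {J : ℕ} (hJ : 2 / τ < 2 ^ J)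
    {I : Finset V} (hI : ∀ x ∈ I, IsSteepStop E σ h R α x)
    (hsep : ∀ x ∈ I, ∀ y ∈ I, x ≠ y → h x / 2 + h y / 2 < ‖π x - π y‖)
    (hη : 2 ^ 22 * apxConst n τ κ * η ≤ α ^ 4)
    (hη' : (4 * n / τ + 8 * (1 + 8 * n / τ) / α) * √(4 * apxConst n τ κ * (3 * (n + 1) * η)) ≤
      α / (4 * n)) :
    ∑ x ∈ I, h x ^ n ≤ steepBound n J α τ κ ε η * R ^ n := by
  have : Nonempty (Fin n) := ⟨⟨0, hn⟩⟩
  choose! k d hk hd using fun x hx => H.exists_steepAt_level (hI x hx) hη hη'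
  choose! m hm using fun x hx => H.exists_gridMesh_le (hI x hx).pos
  set M : ℕ := I.sup fun x => max (k x) (m x)
  have hM : ∀ x ∈ I, max (k x) (m x) ≤ M := fun x hx =>
    Finset.le_sup (f := fun x => max (k x) (m x)) hx
  have hdirection : ∀ c : Fin n, ∑ x ∈ I with d x = c, h x ^ n ≤
      (10 * n) ^ n * (4 * n / α) ^ 2 * slopeEnergyBound n J α τ κ ε η * R ^ n := by
    intro c
    have hsub : ∀ x ∈ I.filter (d · = c), x ∈ I := fun x hx => Finset.mem_of_mem_filter x hx
    refine H.sum_pow_le_of_steepFamily hn hE hε hflat hJ (M := M) (k := k) (d := c)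
      { mem := fun x hx => (hI x (hsub x hx)).mem
        level_le := fun x hx => (le_max_left _ _).trans (hM x (hsub x hx))
        stopping_le := fun x hx => hk x (hsub x hx)
        steep := fun x hx => (Finset.mem_filter.1 hx).2 ▸ hd x (hsub x hx) }
      (fun x hx => hm x (hsub x hx) M ((le_max_right _ _).trans (hM x (hsub x hx))))
      fun x hx y hy hxy => hsep x (hsub x hx) y (hsub y hy) hxy
  calc ∑ x ∈ I, h x ^ n = ∑ c, ∑ x ∈ I with d x = c, h x ^ n :=
        (Finset.sum_fiberwise I d _).symm
    _ ≤ ∑ _ : Fin n, (10 * n) ^ n * (4 * n / α) ^ 2 * slopeEnergyBound n J α τ κ ε η * R ^ n :=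
      Finset.sum_le_sum fun c _ => hdirection c
    _ = _ := by
      rw [Finset.sum_const, Finset.card_univ, Fintype.card_fin, nsmul_eq_mul, steepBound,
        mul_assoc (n : ℝ)]

end Scene

/-! ### Flatness at the top scale -/

lemma exists_isSplit_of_submodule {V : Type*} [NormedAddCommGroup V] [InnerProductSpace ℝ V]
    {n : ℕ} (W : Submodule ℝ V) [FiniteDimensional ℝ W] (hW : Module.finrank ℝ W = n) :
    ∃ (π : V →ₗ[ℝ] EuclideanSpace ℝ (Fin n)) (σ : V →ₗ[ℝ] V), IsSplit π σ ∧
      ∀ v, ∀ w ∈ W, ‖σ v‖ ≤ ‖v - w‖ := by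
  let b := (stdOrthonormalBasis ℝ W).reindex (finCongr hW)
  refine ⟨b.repr.toLinearEquiv.toLinearMap ∘ₗ W.orthogonalProjectionOnto.toLinearMap,
    Wᗮ.starProjection, fun v => ?_, fun v w hw => ?_⟩
  · rw [W.norm_sq_eq_add_norm_sq_projection v]
    simp
  · have hσ : Wᗮ.starProjection v = v - W.starProjection v := by
      simp [Submodule.starProjection_orthogonal']
    rw [ContinuousLinearMap.coe_coe, hσ, W.starProjection_minimal v]
    exact ciInf_le ⟨0, by rintro _ ⟨i, rfl⟩; positivity⟩ (⟨w, hw⟩ : W)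

lemma LinIndepWith.exists_mem_span_norm_sub_le {V : Type*} [NormedAddCommGroup V]
    [NormedSpace ℝ V] {n : ℕ} {c e : ℝ} {u : Fin n → V} (hu : LinIndepWith c u) (hc : 0 < c)
    (hce : n * e ≤ c / 2) {P : Submodule ℝ V} [FiniteDimensional ℝ P]
    (hP : Module.finrank ℝ P ≤ n) (huP : ∀ i, ∃ p ∈ P, ‖u i - p‖ ≤ e) {y : V}
    (hy : ∃ p ∈ P, ‖y - p‖ ≤ e) :
    ∃ w ∈ Submodule.span ℝ (range u), ‖y - w‖ ≤ e * (1 + n * ((‖y‖ + e) / (c / 2))) := by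
  choose v hvP hv using huP
  obtain ⟨p, hpP, hp⟩ := hy
  have hvI : LinIndepWith (c / 2) v := hu.perturb hv (by simpa using hce)
  have hspan : Submodule.span ℝ (range v) = P := by
    refine Submodule.eq_of_le_of_finrank_le (Submodule.span_le.2 (range_subset_iff.2 hvP)) ?_
    rwa [finrank_span_eq_card (hvI.linearIndependent (by positivity)), Fintype.card_fin]
  obtain ⟨b, rfl⟩ := (Submodule.mem_span_range_iff_exists_fun ℝ).1 (hspan ▸ hpP)
  have hb : ∀ i, |b i| ≤ (‖y‖ + e) / (c / 2) := fun i => by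
    rw [le_div_iff₀ (by positivity), mul_comm]
    refine (hvI b i).trans ((norm_le_norm_add_norm_sub' _ y).trans ?_)
    rw [norm_sub_rev]
    gcongr
  have hdiff : ‖∑ i, b i • (v i - u i)‖ ≤ ∑ _i : Fin n, (‖y‖ + e) / (c / 2) * e :=
    norm_sum_le_of_le _ fun i _ => by
      rw [norm_smul, Real.norm_eq_abs, norm_sub_rev]
      exact mul_le_mul (hb i) (hv i) (norm_nonneg _) ((abs_nonneg _).trans (hb i))
  rw [Finset.sum_const, Finset.card_univ, Fintype.card_fin, nsmul_eq_mul] at hdiff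
  refine ⟨∑ i, b i • u i,
    Submodule.sum_mem _ fun i _ => Submodule.smul_mem _ _ (Submodule.subset_span ⟨i, rfl⟩), ?_⟩
  refine (norm_sub_le_norm_sub_add_norm_sub y (∑ i, b i • v i) _).trans ?_
  rw [← Finset.sum_sub_distrib]
  simp only [← smul_sub]
  linarith

/-- The relative distance of `n + 2` points from an `n`-plane through `n + 1` others, when the
pointwise curvature is at most `η`. -/
def planeGap (n : ℕ) (τ m η : ℝ) : ℝ := √(apxConst n τ m * ((n + 2) * η))

lemma planeGap_nonneg (n : ℕ) (τ m η : ℝ) : 0 ≤ planeGap n τ m η := Real.sqrt_nonneg _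

/-- The relative width of a set with pointwise curvature at most `η` in the directions orthogonal
to the plane of a nondegenerate simplex. -/
def flatness (n : ℕ) (τ m η : ℝ) : ℝ := 4 * planeGap n τ m η * (1 + 6 * n / τ)

lemma flatness_nonneg (n : ℕ) {τ : ℝ} (hτ : 0 ≤ τ) (m η : ℝ) : 0 ≤ flatness n τ m η := by
  have := planeGap_nonneg n τ m η
  rw [flatness]; positivity

lemma sum_scaleCurv_insert_image_le {V : Type*} [NormedAddCommGroup V] [InnerProductSpace ℝ V]
    [MeasurableSpace V] {n : ℕ} {μ : Measure V} {E : Set V} {η : ℝ}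
    (hcurv : ∀ z ∈ E, pointCurv n μ z ≤ ENNReal.ofReal η)
    {t : Fin (n + 1) → V} (ht : ∀ j, t j ∈ E) {z : V} (hz : z ∈ E) (τ s : ℝ) :
    ∑ w ∈ insert z (Finset.univ.image t), scaleCurv n μ τ s w ≤
      ENNReal.ofReal ((n + 2) * η) := by
  have hcard : (insert z (Finset.univ.image t)).card ≤ n + 2 :=
    (Finset.card_insert_le _ _).trans (Nat.succ_le_succ
      (Finset.card_image_le.trans_eq (Finset.card_fin (n + 1))))
  calc _ ≤ (insert z (Finset.univ.image t)).card • ENNReal.ofReal η := by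
        refine Finset.sum_le_card_nsmul _ _ _ fun w hw => ?_
        refine (scaleCurv_le_pointCurv n μ τ s w).trans (hcurv w ?_)
        rcases Finset.mem_insert.1 hw with rfl | hw
        · exact hz
        · obtain ⟨j, -, rfl⟩ := Finset.mem_image.1 hw
          exact ht j
    _ ≤ (n + 2) • ENNReal.ofReal η := by gcongr
    _ = _ := by
      rw [nsmul_eq_mul, ENNReal.ofReal_mul (by positivity), ← ENNReal.ofReal_natCast]
      push_cast
      rfl

namespace IsSelection

variable {V : Type*} [NormedAddCommGroup V] [InnerProductSpace ℝ V] [MeasurableSpace V]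
  [BorelSpace V] [SecondCountableTopology V] {n : ℕ} {μ : Measure V} [IsFiniteMeasure μ]
  {E : Set V} {τ m : ℝ} {x : V} {s : ℝ} {S : Fin (n + 1) → Set V} {η : ℝ}

lemma exists_submodule_near (hS : IsSelection n τ m μ E x s S) (hτ : 0 < τ) (hm : 0 < m)
    (hs : 0 < s) {Z : Finset V} (hZ : ∀ z ∈ Z, z ∈ closedBall x (2 * s)) {B : ℝ} (hB : 0 ≤ B)
    (hsum : ∑ z ∈ Z, scaleCurv n μ τ s z ≤ ENNReal.ofReal B) :
    ∃ P : Submodule ℝ V, FiniteDimensional ℝ P ∧ Module.finrank ℝ P ≤ n ∧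
      ∀ y ∈ Z, ∀ z ∈ Z, ∃ p ∈ P, ‖y - z - p‖ ≤ 2 * √(apxConst n τ m * B) * s := by
  obtain ⟨t, -, happrox⟩ := hS.exists_good_simplex hτ hm hs hZ
    (ne_top_of_le_ne_top ENNReal.ofReal_ne_top hsum)
  have hnear : ∀ z ∈ Z, ∃ p ∈ Submodule.span ℝ (range (edges t)),
      ‖z - t 0 - p‖ ≤ √(apxConst n τ m * B) * s := by
    intro z hz
    obtain ⟨a, ha⟩ := happrox z hz
    refine ⟨∑ j, a j • edges t j, Submodule.sum_mem _ fun j _ =>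
      Submodule.smul_mem _ (a j) (Submodule.subset_span ⟨j, rfl⟩), ?_⟩
    have hapx := apxConst_pos n hτ hm
    refine le_of_sq_le_sq (ha.trans ?_) (by positivity)
    rw [mul_pow, Real.sq_sqrt (by positivity), mul_right_comm]
    gcongr
    exact ENNReal.toReal_le_of_le_ofReal hB hsum
  refine ⟨Submodule.span ℝ (range (edges t)), .span_of_finite ℝ (finite_range _),
    (finrank_range_le_card (edges t)).trans_eq (Fintype.card_fin n), fun y hy z hz => ?_⟩
  obtain ⟨p, hp, hyp⟩ := hnear y hy
  obtain ⟨q, hq, hzq⟩ := hnear z hz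
  refine ⟨p - q, Submodule.sub_mem _ hp hq, ?_⟩
  rw [show y - z - (p - q) = (y - t 0 - p) - (z - t 0 - q) by abel]
  exact (norm_sub_le _ _).trans (by linarith)

lemma exists_mem_span_edges_norm_sub_le (hS : IsSelection n τ m μ E x s S) (hτ : 0 < τ)
    (hm : 0 < m) (hs : 0 < s) (hE : E ⊆ closedBall x s) (hη : 0 ≤ η)
    (hcurv : ∀ z ∈ E, pointCurv n μ z ≤ ENNReal.ofReal η)
    (hτη : 4 * n * planeGap n τ m η ≤ τ) (hη₁ : 2 * planeGap n τ m η ≤ 1)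
    {t : Fin (n + 1) → V} (ht : ∀ j, t j ∈ S j) {z : V} (hz : z ∈ E) :
    ∃ w ∈ Submodule.span ℝ (range (edges t)), ‖z - t 0 - w‖ ≤ flatness n τ m η / 2 * s := by
  have htE : ∀ j, t j ∈ E := fun j => (hS.subset j (ht j)).1
  have hgap := planeGap_nonneg n τ m η
  set Q := planeGap n τ m η with hQ
  set Z : Finset V := insert z (Finset.univ.image t)
  have htZ : ∀ j, t j ∈ Z := fun j =>
    Finset.mem_insert_of_mem (Finset.mem_image_of_mem _ (Finset.mem_univ j))
  have hZ : ∀ w ∈ Z, w ∈ closedBall x (2 * s) := fun w hw => by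
    refine closedBall_subset_closedBall (by linarith) (hE ?_)
    rcases Finset.mem_insert.1 hw with rfl | hw
    · exact hz
    · obtain ⟨j, -, rfl⟩ := Finset.mem_image.1 hw
      exact htE j
  obtain ⟨P, _, hP, hnear⟩ := hS.exists_submodule_near hτ hm hs hZ (by positivity)
    (sum_scaleCurv_insert_image_le hcurv htE hz τ s)
  rw [← planeGap, ← hQ] at hnear
  obtain ⟨w, hw, hzw⟩ := (hS.linIndepWith t ht).exists_mem_span_norm_sub_le (by positivity)
    (by nlinarith) hP (fun i => hnear _ (htZ i.succ) _ (htZ 0))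
    (hnear z (Finset.mem_insert_self _ _) _ (htZ 0))
  refine ⟨w, hw, hzw.trans ?_⟩
  have hdist : ‖z - t 0‖ ≤ 2 * s := by
    rw [← dist_eq_norm]
    linarith [dist_triangle_right z (t 0) x, mem_closedBall.1 (hE hz), hS.dist_le ht 0]
  have hratio : (‖z - t 0‖ + 2 * Q * s) / (τ * s / 2) ≤ 6 / τ := by
    have hsum : ‖z - t 0‖ + 2 * Q * s ≤ 3 * s := by
      linarith [mul_le_mul_of_nonneg_right hη₁ hs.le]
    rw [div_le_div_iff₀ (by positivity) hτ]
    linarith [mul_le_mul_of_nonneg_right hsum hτ.le]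
  calc _ ≤ 2 * Q * s * (1 + n * (6 / τ)) := by gcongr
    _ = _ := by rw [flatness]; ring

lemma exists_flat_split (hS : IsSelection n τ m μ E x s S) (hτ : 0 < τ) (hm : 0 < m)
    (hs : 0 < s) (hE : E ⊆ closedBall x s) (hη : 0 ≤ η)
    (hcurv : ∀ z ∈ E, pointCurv n μ z ≤ ENNReal.ofReal η)
    (hτη : 4 * n * planeGap n τ m η ≤ τ) (hη₁ : 2 * planeGap n τ m η ≤ 1) :
    ∃ (π : V →ₗ[ℝ] EuclideanSpace ℝ (Fin n)) (σ : V →ₗ[ℝ] V), IsSplit π σ ∧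
      ∀ y ∈ E, ∀ z ∈ E, ‖σ (y - z)‖ ≤ flatness n τ m η * s := by
  choose t ht using hS.nonempty hm hs
  have hfinrank : Module.finrank ℝ (Submodule.span ℝ (range (edges t))) = n := by
    rw [finrank_span_eq_card ((hS.linIndepWith t ht).linearIndependent (by positivity)),
      Fintype.card_fin]
  have : FiniteDimensional ℝ (Submodule.span ℝ (range (edges t))) :=
    .span_of_finite ℝ (finite_range _)
  obtain ⟨π, σ, hsplit, hσ⟩ := exists_isSplit_of_submodule _ hfinrank
  refine ⟨π, σ, hsplit, fun y hy z hz => ?_⟩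
  have hbase : ∀ z ∈ E, ‖σ (z - t 0)‖ ≤ flatness n τ m η / 2 * s := fun z hz => by
    obtain ⟨w, hw, hzw⟩ :=
      hS.exists_mem_span_edges_norm_sub_le hτ hm hs hE hη hcurv hτη hη₁ ht hz
    exact (hσ _ w hw).trans hzw
  rw [← sub_sub_sub_cancel_right y z (t 0), map_sub]
  exact (norm_sub_le _ _).trans (by linarith [hbase y hy, hbase z hz])

end IsSelection

/-! ### Stopping scales and covering by balls -/

lemma exists_countable_closedBall_cover {X : Type*} [PseudoMetricSpace X]
    [TopologicalSpace.SeparableSpace X] {A : Set X} {r : X → ℝ} {ρ : ℝ} (hr : ∀ x ∈ A, 0 < r x)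
    (hρ : ∀ x ∈ A, r x ≤ ρ) :
    ∃ u ⊆ A, u.Countable ∧ u.PairwiseDisjoint (fun x => closedBall x (r x)) ∧
      A ⊆ ⋃ x ∈ u, closedBall x (5 * r x) := by
  obtain ⟨u, huA, hdisj, hcov⟩ := Vitali.exists_disjoint_subfamily_covering_enlargement_closedBall
    A id r ρ hρ 5 (by norm_num)
  refine ⟨u, huA, hdisj.countable_of_nonempty_interior fun x hx =>
    ⟨x, ball_subset_interior_closedBall (mem_ball_self (hr x (huA hx)))⟩, hdisj, fun a ha => ?_⟩
  obtain ⟨b, hb, hab⟩ := hcov a ha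
  exact mem_iUnion₂.2 ⟨b, hb, hab (mem_closedBall_self (hr a ha).le)⟩

lemma measure_le_of_sum_measure_closedBall_le {X : Type*} [PseudoMetricSpace X]
    [TopologicalSpace.SeparableSpace X] [MeasurableSpace X] {μ : Measure X} {A : Set X}
    {r : X → ℝ} {ρ : ℝ} {B : ℝ≥0∞} (hr : ∀ x ∈ A, 0 < r x) (hρ : ∀ x ∈ A, r x ≤ ρ)
    (hB : ∀ I : Finset X, ↑I ⊆ A → (I : Set X).PairwiseDisjoint (fun x => closedBall x (r x)) →
      ∑ x ∈ I, μ (closedBall x (5 * r x)) ≤ B) :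
    μ A ≤ B := by
  obtain ⟨u, huA, hcount, hdisj, hcov⟩ := exists_countable_closedBall_cover hr hρ
  calc μ A ≤ ∑' x : u, μ (closedBall (x : X) (5 * r x)) :=
        (measure_mono hcov).trans (measure_biUnion_le μ hcount _)
    _ ≤ B := by
      rw [ENNReal.tsum_eq_iSup_sum]
      refine iSup_le fun I => ?_
      have hIu : (↑(I.map (Function.Embedding.subtype _)) : Set X) ⊆ u := by
        simpa only [Finset.coe_map] using! image_subset_iff.2 fun x _ => x.2
      simpa only [Finset.sum_map] using! hB _ (hIu.trans huA) (hdisj.subset hIu)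

/-- The largest scale up to `R` at which `μ` is sparse around `x`. -/
def sparseScale {V : Type*} [PseudoMetricSpace V] [MeasurableSpace V] (n : ℕ) (μ : Measure V)
    (R δ : ℝ) (x : V) : ℝ :=
  sSup {t | 0 < t ∧ t ≤ R ∧ μ (closedBall x t) < ENNReal.ofReal (δ * t ^ n)}

/-- The largest distance from `x` to a point of `E` outside the cone of slope `α` at `x`. -/
def steepScale {V : Type*} [NormedAddCommGroup V] [NormedSpace ℝ V] (E : Set V) (σ : V →ₗ[ℝ] V)
    (α : ℝ) (x : V) : ℝ :=
  sSup {t | ∃ y ∈ E, t = ‖y - x‖ ∧ α * ‖y - x‖ < ‖σ (y - x)‖}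

lemma exists_half_sSup_lt {S : Set ℝ} (hS : 0 < sSup S) : ∃ t ∈ S, sSup S / 2 < t := by
  refine exists_lt_of_lt_csSup (nonempty_iff_ne_empty.2 ?_) (half_lt_self hS)
  rintro rfl
  exact hS.ne' Real.sSup_empty

section SparseScale

variable {V : Type*} [PseudoMetricSpace V] [MeasurableSpace V]

lemma sparseScale_nonneg (n : ℕ) (μ : Measure V) (R δ : ℝ) (x : V) : 0 ≤ sparseScale n μ R δ x :=
  Real.sSup_nonneg fun _ ht => ht.1.le

variable {n : ℕ} {μ : Measure V} {R δ : ℝ} {x : V}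

lemma le_measure_of_sparseScale_lt {s : ℝ} (hs : sparseScale n μ R δ x < s) (hsR : s ≤ R) :
    ENNReal.ofReal (δ * s ^ n) ≤ μ (closedBall x s) := by
  by_contra! hsparse
  exact hs.not_ge (le_csSup ⟨R, fun t ht => ht.2.1⟩
    ⟨(sparseScale_nonneg n μ R δ x).trans_lt hs, hsR, hsparse⟩)

lemma exists_sparse (h : 0 < sparseScale n μ R δ x) :
    ∃ t, sparseScale n μ R δ x / 2 < t ∧ t ≤ R ∧
      μ (closedBall x t) < ENNReal.ofReal (δ * t ^ n) := by
  obtain ⟨t, ⟨-, htR, hsparse⟩, hlt⟩ := exists_half_sSup_lt h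
  exact ⟨t, hlt, htR, hsparse⟩

end SparseScale

section SteepScale

variable {V : Type*} [NormedAddCommGroup V] [NormedSpace ℝ V]

variable {E : Set V} {σ : V →ₗ[ℝ] V} {α D : ℝ} {x : V}

lemma norm_le_steepScale (hα : 0 < α) (hD : ∀ y ∈ E, ‖σ (y - x)‖ ≤ D) {y : V} (hy : y ∈ E)
    (hsteep : α * ‖y - x‖ < ‖σ (y - x)‖) : ‖y - x‖ ≤ steepScale E σ α x := by
  refine le_csSup ⟨D / α, ?_⟩ ⟨y, hy, rfl, hsteep⟩
  rintro _ ⟨z, hz, rfl, hlt⟩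
  exact (le_div_iff₀' hα).2 (hlt.le.trans (hD z hz))

lemma cone_of_steepScale_lt (hα : 0 < α) (hD : ∀ y ∈ E, ‖σ (y - x)‖ ≤ D) {y : V} (hy : y ∈ E)
    (h : steepScale E σ α x < ‖y - x‖) : ‖σ (y - x)‖ ≤ α * ‖y - x‖ :=
  not_lt.1 fun hsteep => h.not_ge (norm_le_steepScale hα hD hy hsteep)

lemma steepScale_le (hα : 0 < α) (hD₀ : 0 ≤ D) (hD : ∀ y ∈ E, ‖σ (y - x)‖ ≤ D) :
    steepScale E σ α x ≤ D / α := by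
  refine Real.sSup_le ?_ (by positivity)
  rintro _ ⟨z, hz, rfl, hlt⟩
  exact (le_div_iff₀' hα).2 (hlt.le.trans (hD z hz))

lemma exists_steep (hα : 0 < α) (hD : ∀ y ∈ E, ‖σ (y - x)‖ ≤ D) (h : 0 < steepScale E σ α x) :
    ∃ y ∈ E, steepScale E σ α x / 2 ≤ ‖y - x‖ ∧ ‖y - x‖ ≤ steepScale E σ α x ∧
      α * ‖y - x‖ < ‖σ (y - x)‖ := by
  obtain ⟨_, ⟨y, hy, rfl, hsteep⟩, hlt⟩ := exists_half_sSup_lt h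
  exact ⟨y, hy, hlt.le, norm_le_steepScale hα hD hy hsteep, hsteep⟩

end SteepScale

lemma exists_lipschitz_of_antilipschitzWith {V X : Type*} [NormedAddCommGroup V] [NormedSpace ℝ V]
    [FiniteDimensional ℝ V] [PseudoMetricSpace X] {p : V → X} {F : Set V} {K : ℝ≥0}
    (hp : AntilipschitzWith K (F.domRestrict p)) :
    ∃ f : X → V, (∃ L : ℝ≥0, LipschitzWith L f) ∧ F ⊆ range f := by
  have hinj : InjOn p F := injOn_iff_injective.2 hp.injective
  have hleft : LeftInvOn (Function.invFunOn p F) p F := hinj.leftInvOn_invFunOn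
  have hlip : LipschitzOnWith K (Function.invFunOn p F) (p '' F) :=
    lipschitzOnWith_iff_restrict.2 <|
      hp.to_rightInvOn' (fun _ ⟨x, hx, hxy⟩ => hxy ▸ (hleft hx).symm ▸ hx)
        fun _ ⟨x, hx, hxy⟩ => hxy ▸ congrArg p (hleft hx)
  obtain ⟨f, hf, hfg⟩ := hlip.extend_finite_dimension
  exact ⟨f, ⟨_, hf⟩, fun x hx => ⟨p x, (hfg ⟨x, hx, rfl⟩).symm.trans (hleft hx)⟩⟩

namespace Scene

variable {V X : Type*} [NormedAddCommGroup V] [InnerProductSpace ℝ V] [MeasurableSpace V]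
  [NormedAddCommGroup X] [NormedSpace ℝ X] {n : ℕ} {μ : Measure V} {E : Set V} {π : V →ₗ[ℝ] X}
  {σ : V →ₗ[ℝ] V} {h : V → ℝ} {R α τ κ η : ℝ}

lemma dist_le_two_mul (H : Scene n μ E π σ h R α τ κ η) {x y : V} (hx : x ∈ E) (hy : y ∈ E)
    (hxy : h x / 10 < dist x y) : dist x y ≤ 2 * ‖π x - π y‖ := by
  rw [dist_comm, dist_eq_norm] at hxy ⊢
  rw [norm_sub_rev (π x), ← map_sub]
  exact H.split.norm_le_two_mul (by linarith [H.α_le]) (H.cone x hx y hy hxy)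

/-- Disjoint balls which are large compared to the stopping scale project to separated points. -/
lemma sum_pow_le_of_sparse [FiniteDimensional ℝ X] (H : Scene n μ E π σ h R α τ κ η) {x₀ : V}
    (hE : ∀ x ∈ E, ‖x - x₀‖ ≤ R) {t : V → ℝ} {I : Finset V} (hI : ↑I ⊆ E)
    (ht₀ : ∀ x ∈ I, 0 < t x) (hth : ∀ x ∈ I, h x / 2 < t x) (htR : ∀ x ∈ I, t x ≤ R)
    (hsep : ∀ x ∈ I, ∀ y ∈ I, x ≠ y → t x / 5 + t y / 5 < dist x y) :
    ∑ x ∈ I, t x ^ n ≤ (20 * R) ^ n := by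
  have hR := H.R_pos
  have hproj : ∑ x ∈ I, (t x / 10) ^ n ≤ (2 * R) ^ n := by
    have hball : ∀ x ∈ I, dist (π x) (π x₀) + t x / 10 ≤ 2 * R := fun x hx => by
      have := (H.split.norm_fst_le (x - x₀)).trans (hE x (hI hx))
      rw [dist_eq_norm, ← map_sub]
      linarith [htR x hx]
    have hπsep : ∀ x ∈ I, ∀ y ∈ I, x ≠ y → t x / 10 + t y / 10 < dist (π x) (π y) := by
      intro x hx y hy hxy
      have hdist := hsep x hx y hy hxy
      have := H.dist_le_two_mul (hI hx) (hI hy) (by linarith [ht₀ y hy, hth x hx])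
      rw [dist_eq_norm (π x)]
      linarith
    simpa only [H.finrank_eq] using sum_pow_finrank_le_of_separated (by positivity)
      (fun x hx => (div_pos (ht₀ x hx) (by norm_num)).le) hπsep hball
  calc ∑ x ∈ I, t x ^ n = 10 ^ n * ∑ x ∈ I, (t x / 10) ^ n := by
        rw [Finset.mul_sum]
        exact Finset.sum_congr rfl fun x _ => by rw [← mul_pow, mul_div_cancel₀ _ (by norm_num)]
    _ ≤ 10 ^ n * (2 * R) ^ n := by gcongr
    _ = (20 * R) ^ n := by rw [← mul_pow]; congr 1; ring

lemma measure_sparse_le [FiniteDimensional ℝ X] [TopologicalSpace.SeparableSpace V]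
    (H : Scene n μ E π σ h R α τ κ η) {x₀ : V} (hE : ∀ x ∈ E, ‖x - x₀‖ ≤ R) {δ : ℝ} (hδ : 0 ≤ δ)
    {A : Set V} (hA : A ⊆ E)
    (hsparse : ∀ x ∈ A, ∃ t, 0 < t ∧ h x / 2 < t ∧ t ≤ R ∧
      μ (closedBall x t) ≤ ENNReal.ofReal (δ * t ^ n)) :
    μ A ≤ ENNReal.ofReal (δ * (20 * R) ^ n) := by
  choose! t ht₀ hth htR htμ using hsparse
  refine measure_le_of_sum_measure_closedBall_le (r := fun x => t x / 5) (ρ := R / 5)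
    (fun x hx => div_pos (ht₀ x hx) (by norm_num))
    (fun x hx => by have := htR x hx; gcongr) fun I hI hdisj => ?_
  have hpos : ∀ x ∈ I, 0 ≤ t x / 5 := fun x hx => (div_pos (ht₀ x (hI hx)) (by norm_num)).le
  have hsum : ∑ x ∈ I, t x ^ n ≤ (20 * R) ^ n :=
    H.sum_pow_le_of_sparse hE (hI.trans hA) (fun x hx => ht₀ x (hI hx)) (fun x hx => hth x (hI hx))
      (fun x hx => htR x (hI hx)) fun x hx y hy hxy =>
        (disjoint_closedBall_closedBall_iff (hpos x hx) (hpos y hy)).1 (hdisj hx hy hxy)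
  calc ∑ x ∈ I, μ (closedBall x (5 * (t x / 5))) ≤ ∑ x ∈ I, ENNReal.ofReal (δ * t x ^ n) :=
        Finset.sum_le_sum fun x hx => by
          rw [mul_div_cancel₀ _ (by norm_num)]
          exact htμ x (hI hx)
    _ = ENNReal.ofReal (δ * ∑ x ∈ I, t x ^ n) := by
      rw [Finset.mul_sum, ENNReal.ofReal_sum_of_nonneg fun x hx => ?_]
      have := ht₀ x (hI hx)
      positivity
    _ ≤ _ := by gcongr

end Scene

namespace Scene

variable {V : Type*} [NormedAddCommGroup V] [InnerProductSpace ℝ V] [SecondCountableTopology V]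
  [MeasurableSpace V] [BorelSpace V] {n : ℕ} {μ : Measure V} [IsFiniteMeasure μ] {E : Set V}
  {π : V →ₗ[ℝ] EuclideanSpace ℝ (Fin n)} {σ : V →ₗ[ℝ] V} {h : V → ℝ} {R α τ κ η : ℝ}

lemma measure_steep_le (H : Scene n μ E π σ h R α τ κ η) (hn : 1 ≤ n) {x₀ : V}
    (hE : ∀ x ∈ E, ‖x - x₀‖ ≤ R) {ε : ℝ} (hε : 0 ≤ ε)
    (hflat : ∀ y ∈ E, ∀ z ∈ E, ‖σ (y - z)‖ ≤ ε * R) {J : ℕ} (hJ : 2 / τ < 2 ^ J)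
    {C₀ : ℝ} (hC₀ : 0 ≤ C₀) (hup : UpperRegular n C₀ μ) {A : Set V}
    (hA : ∀ x ∈ A, IsSteepStop E σ h R α x) (hη : 2 ^ 22 * apxConst n τ κ * η ≤ α ^ 4)
    (hη' : (4 * n / τ + 8 * (1 + 8 * n / τ) / α) * √(4 * apxConst n τ κ * (3 * (n + 1) * η)) ≤
      α / (4 * n)) :
    μ A ≤ ENNReal.ofReal (C₀ * 5 ^ n * (steepBound n J α τ κ ε η * R ^ n)) := by
  refine measure_le_of_sum_measure_closedBall_le (ρ := α * R / 4) (fun x hx => (hA x hx).pos)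
    (fun x hx => by linarith [(hA x hx).le]) fun I hI hdisj => ?_
  have hπsep : ∀ x ∈ I, ∀ y ∈ I, x ≠ y → h x / 2 + h y / 2 < ‖π x - π y‖ := by
    intro x hx y hy hxy
    have hdist := (disjoint_closedBall_closedBall_iff (H.h_nonneg x) (H.h_nonneg y)).1
      (hdisj hx hy hxy)
    have := H.dist_le_two_mul (hA x (hI hx)).mem (hA y (hI hy)).mem
      (by linarith [(hA x (hI hx)).pos, H.h_nonneg y])
    linarith
  have hsum := H.sum_pow_le_of_isSteepStop hn hE hε hflat hJ (fun x hx => hA x (hI hx)) hπsep hη hη'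
  calc ∑ x ∈ I, μ (closedBall x (5 * h x))
      ≤ ∑ x ∈ I, ENNReal.ofReal (C₀ * 5 ^ n * h x ^ n) := Finset.sum_le_sum fun x hx => by
        rw [mul_assoc, ← mul_pow]
        exact hup x _ (mul_pos (by norm_num) (hA x (hI hx)).pos)
    _ = ENNReal.ofReal (C₀ * 5 ^ n * ∑ x ∈ I, h x ^ n) := by
      rw [Finset.mul_sum, ENNReal.ofReal_sum_of_nonneg fun x _ => ?_]
      have := H.h_nonneg x
      positivity
    _ ≤ _ := by gcongr

end Scene

/-! ### A Lipschitz piece of a dense set with small curvature -/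

lemma exists_isSelection_of_conull (V : Type*) [NormedAddCommGroup V] [InnerProductSpace ℝ V]
    [FiniteDimensional ℝ V] [MeasurableSpace V] [BorelSpace V] (n : ℕ) {δ C₀ : ℝ} (hδ : 0 < δ)
    (hC₀ : 0 ≤ C₀) :
    ∃ τ m : ℝ, 0 < τ ∧ 0 < m ∧ ∀ (μ : Measure V) (E : Set V), MeasurableSet E → μ Eᶜ = 0 →
      UpperRegular n C₀ μ → ∀ (x : V) (s : ℝ), 0 < s →
      ENNReal.ofReal (δ * s ^ n) ≤ μ (closedBall x s) →
      ∃ S : Fin (n + 1) → Set V, IsSelection n τ m μ E x s S := by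
  obtain ⟨τ, hτ, hsel⟩ := exists_isSelection V n hδ hC₀ le_rfl
  obtain ⟨m, hm, hsel⟩ := hsel 1 one_pos
  refine ⟨τ, m, hτ, hm, fun μ E hE hμE hup x s hs hx => ?_⟩
  obtain ⟨S, hS, -⟩ := hsel μ E hE hup x s hs (by rwa [inter_comm, measure_inter_conull hμE])
  exact ⟨S, hS⟩

/-- Smallness of the curvature bound `η` relative to the other parameters. Here `τ'`, `m'` are the
constants of a selection at the top scale, whose diameter is `2 * R`, and `τ`, `m` those of the
selections at smaller scales. -/
structure IsSmallCurvature (n J : ℕ) (C₀ c₀ α τ m τ' m' η : ℝ) : Prop where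
  pos : 0 < η
  planeGap_le : 4 * n * planeGap n τ' m' η ≤ τ'
  planeGap_le_one : 2 * planeGap n τ' m' η ≤ 1
  flatness_le : 40 * (2 * flatness n τ' m' η) ≤ α ^ 2
  apxConst_mul_le : 2 ^ 22 * apxConst n τ m * η ≤ α ^ 4
  sqrt_le : (4 * n / τ + 8 * (1 + 8 * n / τ) / α) * √(4 * apxConst n τ m * (3 * (n + 1) * η)) ≤
    α / (4 * n)
  steepBound_le : C₀ * 5 ^ n * steepBound n J α τ m (2 * flatness n τ' m' η) η ≤ c₀

lemma exists_isSmallCurvature {n : ℕ} (hn : 1 ≤ n) (J : ℕ) (C₀ : ℝ) {c₀ α τ' : ℝ} (τ m m' : ℝ)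
    (hc₀ : 0 < c₀) (hα : 0 < α) (hτ' : 0 < τ') :
    ∃ η, IsSmallCurvature n J C₀ c₀ α τ m τ' m' η := by
  have hsmall : ∀ f : ℝ → ℝ, Continuous f → f 0 = 0 → ∀ b > 0,
      ∀ᶠ η in nhdsWithin 0 (Ioi 0), f η ≤ b := fun f hf hf₀ b hb =>
    ((hf.tendsto' 0 0 hf₀).mono_left nhdsWithin_le_nhds).eventually_le_const hb
  have hgap : Continuous (planeGap n τ' m') := by unfold planeGap; fun_prop
  have hgap₀ : planeGap n τ' m' 0 = 0 := by simp [planeGap]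
  have hflat : Continuous (flatness n τ' m') := by unfold flatness; fun_prop
  have hflat₀ : flatness n τ' m' 0 = 0 := by simp [flatness, hgap₀]
  have hsteep : Continuous fun η => steepBound n J α τ m (2 * flatness n τ' m' η) η := by
    unfold steepBound slopeEnergyBound; fun_prop
  have hsteep₀ : steepBound n J α τ m (2 * flatness n τ' m' 0) 0 = 0 := by
    simp [steepBound, slopeEnergyBound, hflat₀]
  have : (0 : ℝ) < n := by exact_mod_cast hn
  have hbounds :=
    (hsmall (fun η => 4 * n * planeGap n τ' m' η) (by fun_prop) (by simp [hgap₀]) τ' hτ').and <|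
    (hsmall (fun η => 2 * planeGap n τ' m' η) (by fun_prop) (by simp [hgap₀]) 1 one_pos).and <|
    (hsmall (fun η => 40 * (2 * flatness n τ' m' η)) (by fun_prop) (by simp [hflat₀]) (α ^ 2)
      (by positivity)).and <|
    (hsmall (fun η => 2 ^ 22 * apxConst n τ m * η) (by fun_prop) (by simp) (α ^ 4)
      (by positivity)).and <|
    (hsmall (fun η => (4 * n / τ + 8 * (1 + 8 * n / τ) / α) *
      √(4 * apxConst n τ m * (3 * (n + 1) * η))) (by fun_prop) (by simp) (α / (4 * n))
      (by positivity)).and <|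
    hsmall (fun η => C₀ * 5 ^ n * steepBound n J α τ m (2 * flatness n τ' m' η) η) (by fun_prop)
      (by simp [hsteep₀]) c₀ hc₀
  obtain ⟨η, ⟨hgap_le, hgap_one, hflat_le, hapx, hsqrt, hsteep_le⟩, hη⟩ :=
    (hbounds.and self_mem_nhdsWithin).exists
  exact ⟨η, hη, hgap_le, hgap_one, hflat_le, hapx, hsqrt, hsteep_le⟩

lemma IsSmallCurvature.ofReal_add_ofReal_lt {n J : ℕ} {C₀ c₀ α τ m τ' m' η R : ℝ}
    (hη : IsSmallCurvature n J C₀ (c₀ / 4) α τ m τ' m' η) (hc₀ : 0 < c₀) (hR : 0 < R) :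
    ENNReal.ofReal (c₀ / (4 * 20 ^ n) * (20 * R) ^ n) + ENNReal.ofReal
      (C₀ * 5 ^ n * (steepBound n J α τ m (2 * flatness n τ' m' η) η * R ^ n)) <
      ENNReal.ofReal (c₀ * R ^ n) := by
  have hsparse : c₀ / (4 * 20 ^ n) * (20 * R) ^ n = c₀ / 4 * R ^ n := by
    rw [mul_pow]; field_simp
  have hsteep : C₀ * 5 ^ n * (steepBound n J α τ m (2 * flatness n τ' m' η) η * R ^ n) ≤
      c₀ / 4 * R ^ n := by
    rw [← mul_assoc]
    exact mul_le_mul_of_nonneg_right hη.steepBound_le (by positivity)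
  have hmass_pos : 0 < c₀ * R ^ n := by positivity
  calc _ ≤ ENNReal.ofReal (c₀ / 4 * R ^ n) + ENNReal.ofReal (c₀ / 4 * R ^ n) := by
        rw [hsparse]; gcongr
    _ = ENNReal.ofReal (c₀ / 4 * R ^ n + c₀ / 4 * R ^ n) :=
      (ENNReal.ofReal_add (by positivity) (by positivity)).symm
    _ < _ := (ENNReal.ofReal_lt_ofReal_iff hmass_pos).2 (by linarith)

/-- The scale at `x` below which `μ` may be sparse around `x`, or `E` may leave the cone of slope
`α` at `x`. -/
def stopScale {V : Type*} [NormedAddCommGroup V] [NormedSpace ℝ V] [MeasurableSpace V] (n : ℕ)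
    (μ : Measure V) (E : Set V) (σ : V →ₗ[ℝ] V) (R α δ : ℝ) (x : V) : ℝ :=
  max (sparseScale n μ R δ x) (10 * steepScale E σ α x)

section StopScale

variable {V : Type*} [NormedAddCommGroup V] [NormedSpace ℝ V] [MeasurableSpace V] {n : ℕ}
  {μ : Measure V} {E : Set V} {σ : V →ₗ[ℝ] V} {R α δ ε : ℝ} {x : V}

lemma sparseScale_le_stopScale : sparseScale n μ R δ x ≤ stopScale n μ E σ R α δ x :=
  le_max_left _ _

lemma steepScale_le_stopScale : 10 * steepScale E σ α x ≤ stopScale n μ E σ R α δ x :=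
  le_max_right _ _

lemma stopScale_nonneg : 0 ≤ stopScale n μ E σ R α δ x :=
  (sparseScale_nonneg n μ R δ x).trans sparseScale_le_stopScale

lemma isSteepStop_of_sparseScale_lt (hR : 0 < R) (hα : 0 < α) (hε : 0 ≤ ε) (hεα : 40 * ε ≤ α ^ 2)
    (hflat : ∀ y ∈ E, ∀ z ∈ E, ‖σ (y - z)‖ ≤ ε * R) (hx : x ∈ E)
    (hlt : sparseScale n μ R δ x < 10 * steepScale E σ α x) :
    IsSteepStop E σ (stopScale n μ E σ R α δ) R α x := by
  have heq : stopScale n μ E σ R α δ x = 10 * steepScale E σ α x := max_eq_right hlt.le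
  have hpos : 0 < steepScale E σ α x := by linarith [sparseScale_nonneg n μ R δ x]
  have hle : steepScale E σ α x ≤ ε * R / α :=
    steepScale_le hα (by positivity) fun z hz => hflat z hz x hx
  obtain ⟨y, hy, hge, hle', hsteep⟩ := exists_steep hα (fun z hz => hflat z hz x hx) hpos
  refine ⟨hx, by linarith, ?_, y, hy, by linarith, by linarith, hsteep⟩
  calc 4 * stopScale n μ E σ R α δ x ≤ 40 * (ε * R / α) := by linarith
    _ = 40 * ε * R / α := by ring
    _ ≤ α ^ 2 * R / α := by gcongr
    _ = α * R := by field_simp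

end StopScale

namespace Scene

section

variable {V X : Type*} [NormedAddCommGroup V] [InnerProductSpace ℝ V] [FiniteDimensional ℝ V]
  [MeasurableSpace V] [NormedAddCommGroup X] [NormedSpace ℝ X] {n : ℕ} {μ : Measure V} {E : Set V}
  {π : V →ₗ[ℝ] X} {σ : V →ₗ[ℝ] V} {h : V → ℝ} {R α τ κ η : ℝ}

/-- The set where the stopping scale vanishes is the Lipschitz piece. -/
lemma exists_lipschitz_piece (H : Scene n μ E π σ h R α τ κ η)
    (hlt : μ {x ∈ E | 0 < h x} < μ E) :
    ∃ F ⊆ E, μ F ≠ 0 ∧ ∃ f : X → V, (∃ L : ℝ≥0, LipschitzWith L f) ∧ F ⊆ range f := by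
  refine ⟨{x ∈ E | h x = 0}, sep_subset _ _, fun hzero => hlt.not_ge ?_, ?_⟩
  · calc μ E ≤ μ ({x ∈ E | h x = 0} ∪ {x ∈ E | 0 < h x}) := measure_mono fun x hx =>
          (H.h_nonneg x).eq_or_lt.imp (fun hhx => ⟨hx, hhx.symm⟩) fun hhx => ⟨hx, hhx⟩
      _ ≤ μ {x ∈ E | 0 < h x} := (measure_union_le _ _).trans_eq (by rw [hzero, zero_add])
  refine exists_lipschitz_of_antilipschitzWith (p := π) (K := 2) (.of_le_mul_dist ?_)
  rintro ⟨x, hx, hhx⟩ ⟨y, hy, -⟩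
  rcases eq_or_ne x y with rfl | hxy
  · simp
  · simpa only [Subtype.dist_eq, domRestrict_apply, dist_eq_norm (π x)] using!
      H.dist_le_two_mul hx hy (by simpa only [hhx, zero_div] using dist_pos.2 hxy)

end

variable {V : Type*} [NormedAddCommGroup V] [InnerProductSpace ℝ V] [SecondCountableTopology V]
  [MeasurableSpace V] [BorelSpace V] {n : ℕ} {μ : Measure V} [IsFiniteMeasure μ] {E : Set V}
  {π : V →ₗ[ℝ] EuclideanSpace ℝ (Fin n)} {σ : V →ₗ[ℝ] V} {R α δ ε τ κ η : ℝ}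

lemma measure_stopScale_pos_le (H : Scene n μ E π σ (stopScale n μ E σ R α δ) R α τ κ η)
    (hn : 1 ≤ n) {x₀ : V} (hE : ∀ x ∈ E, ‖x - x₀‖ ≤ R) (hδ : 0 ≤ δ) (hε : 0 ≤ ε)
    (hεα : 40 * ε ≤ α ^ 2) (hflat : ∀ y ∈ E, ∀ z ∈ E, ‖σ (y - z)‖ ≤ ε * R) {J : ℕ}
    (hJ : 2 / τ < 2 ^ J) {C₀ : ℝ} (hC₀ : 0 ≤ C₀) (hup : UpperRegular n C₀ μ)
    (hη : 2 ^ 22 * apxConst n τ κ * η ≤ α ^ 4)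
    (hη' : (4 * n / τ + 8 * (1 + 8 * n / τ) / α) * √(4 * apxConst n τ κ * (3 * (n + 1) * η)) ≤
      α / (4 * n)) :
    μ {x ∈ E | 0 < stopScale n μ E σ R α δ x} ≤ ENNReal.ofReal (δ * (20 * R) ^ n) +
      ENNReal.ofReal (C₀ * 5 ^ n * (steepBound n J α τ κ ε η * R ^ n)) := by
  set A := {x ∈ E | 0 < stopScale n μ E σ R α δ x}
  set B := {x | sparseScale n μ R δ x < 10 * steepScale E σ α x}
  have hsparse : μ (A \ B) ≤ ENNReal.ofReal (δ * (20 * R) ^ n) := by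
    refine H.measure_sparse_le hE hδ (fun x hx => hx.1.1) fun x ⟨⟨_, hpos⟩, hxB⟩ => ?_
    have heq : stopScale n μ E σ R α δ x = sparseScale n μ R δ x := max_eq_left (not_lt.1 hxB)
    rw [heq] at hpos ⊢
    obtain ⟨t, ht, htR, htμ⟩ := exists_sparse hpos
    exact ⟨t, (half_pos hpos).trans ht, ht, htR, htμ.le⟩
  have hsteep : μ (A ∩ B) ≤ ENNReal.ofReal (C₀ * 5 ^ n * (steepBound n J α τ κ ε η * R ^ n)) :=
    H.measure_steep_le hn hE hε hflat hJ hC₀ hup (fun x hx =>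
      isSteepStop_of_sparseScale_lt H.R_pos H.α_pos hε hεα hflat hx.1.1 hx.2) hη hη'
  calc μ A ≤ μ (A \ B) + μ (A ∩ B) := by
        rw [add_comm]
        exact measure_le_inter_add_sdiff μ A B
    _ ≤ _ := add_le_add hsparse hsteep

end Scene

lemma scene_stopScale {V X : Type*} [NormedAddCommGroup V] [InnerProductSpace ℝ V]
    [MeasurableSpace V] [NormedAddCommGroup X] [NormedSpace ℝ X] {n : ℕ} {μ : Measure V}
    {E : Set V} {π : V →ₗ[ℝ] X} {σ : V →ₗ[ℝ] V} {R α δ D τ κ η : ℝ}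
    (hX : Module.finrank ℝ X = n) (hsplit : IsSplit π σ) (hD : ∀ y ∈ E, ∀ z ∈ E, ‖σ (y - z)‖ ≤ D)
    (hR : 0 < R) (hα : 0 < α) (hα_le : α ≤ 1 / 6) (hτ : 0 < τ) (hκ : 0 < κ) (hη : 0 < η)
    (hατ : 4 * n * α ≤ τ)
    (hsel : ∀ x s, 0 < s → ENNReal.ofReal (δ * s ^ n) ≤ μ (closedBall x s) →
      ∃ S : Fin (n + 1) → Set V, IsSelection n τ κ μ E x s S)
    (hcurv : ∀ z ∈ E, pointCurv n μ z ≤ ENNReal.ofReal η) :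
    Scene n μ E π σ (stopScale n μ E σ R α δ) R α τ κ η where
  finrank_eq := hX
  split := hsplit
  R_pos := hR
  α_pos := hα
  α_le := hα_le
  τ_pos := hτ
  κ_pos := hκ
  η_pos := hη
  α_le_τ := hατ
  h_nonneg _ := stopScale_nonneg
  cone x hx y hy hxy := by
    refine cone_of_steepScale_lt hα (fun z hz => hD z hz x hx) hy ?_
    linarith [steepScale_le_stopScale (n := n) (μ := μ) (E := E) (σ := σ) (R := R) (α := α)
      (δ := δ) (x := x)]
  selection x _ s hs hsR := hsel x s (stopScale_nonneg.trans_lt hs)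
    (le_measure_of_sparseScale_lt (sparseScale_le_stopScale.trans_lt hs) hsR)
  curvature := hcurv

lemma exists_lipschitz_piece (V : Type*) [NormedAddCommGroup V] [InnerProductSpace ℝ V]
    [FiniteDimensional ℝ V] [MeasurableSpace V] [BorelSpace V] {n : ℕ} (hn : 1 ≤ n) {C₀ c₀ : ℝ}
    (hC₀ : 0 ≤ C₀) (hc₀ : 0 < c₀) :
    ∃ η : ℝ, 0 < η ∧ ∀ (μ : Measure V) [IsFiniteMeasure μ] (E : Set V) (x₀ : V) (R : ℝ),
      MeasurableSet E → μ Eᶜ = 0 → UpperRegular n C₀ μ → 0 < R → E ⊆ closedBall x₀ R →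
      ENNReal.ofReal (c₀ * R ^ n) ≤ μ E → (∀ z ∈ E, pointCurv n μ z ≤ ENNReal.ofReal η) →
      ∃ F ⊆ E, μ F ≠ 0 ∧ ∃ f : EuclideanSpace ℝ (Fin n) → V,
        (∃ L : ℝ≥0, LipschitzWith L f) ∧ F ⊆ range f := by
  have : (0 : ℝ) < n := by exact_mod_cast hn
  obtain ⟨τ, m, hτ, hm, hsel⟩ :=
    exists_isSelection_of_conull V n (δ := c₀ / (4 * 20 ^ n)) (by positivity) hC₀
  obtain ⟨τ', m', hτ', hm', hsel'⟩ :=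
    exists_isSelection_of_conull V n (δ := c₀ / 2 ^ n) (by positivity) hC₀
  obtain ⟨J, hJ⟩ := pow_unbounded_of_one_lt (2 / τ) one_lt_two
  set α : ℝ := min (1 / 6) (τ / (4 * n))
  have hα : 0 < α := by positivity
  have hατ : 4 * n * α ≤ τ := (le_div_iff₀' (by positivity)).1 (min_le_right _ _)
  obtain ⟨η, hη⟩ := exists_isSmallCurvature hn J C₀ τ m m' (c₀ := c₀ / 4) (by positivity) hα hτ'
  refine ⟨η, hη.pos, fun μ _ E x₀ R hE hμE hup hR hER hmass hcurv => ?_⟩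
  obtain ⟨x₁, hx₁⟩ := nonempty_of_measure_ne_zero
    ((ENNReal.ofReal_pos.2 (by positivity)).trans_le hmass).ne'
  have hER' : E ⊆ closedBall x₁ (2 * R) := fun x hx => mem_closedBall.2 <| by
    linarith [mem_closedBall.1 (hER hx), mem_closedBall.1 (hER hx₁), dist_triangle_right x x₁ x₀]
  obtain ⟨S, hS⟩ := hsel' μ E hE hμE hup x₁ (2 * R) (by positivity) (by
    rw [mul_pow, ← mul_assoc, div_mul_cancel₀ _ (by positivity)]
    exact hmass.trans (measure_mono hER'))
  obtain ⟨π, σ, hsplit, hflat⟩ := hS.exists_flat_split hτ' hm' (by positivity) hER' hη.pos.le hcurv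
    hη.planeGap_le hη.planeGap_le_one
  simp only [← mul_assoc, mul_comm _ (2 : ℝ)] at hflat
  have H := scene_stopScale finrank_euclideanSpace_fin hsplit hflat hR hα (min_le_left _ _) hτ hm
    hη.pos hατ (hsel μ E hE hμE hup) hcurv
  exact H.exists_lipschitz_piece (lt_of_le_of_lt (H.measure_stopScale_pos_le hn
    (fun x hx => mem_closedBall_iff_norm.1 (hER hx)) (by positivity)
    (mul_nonneg zero_le_two (flatness_nonneg n hτ'.le m' η)) hη.flatness_le hflat hJ hC₀ hup
    hη.apxConst_mul_le hη.sqrt_le) ((hη.ofReal_add_ofReal_lt hc₀ hR).trans_le hmass))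

/-! ### Densities of Hausdorff measures -/

section BoundedDensitySet

variable {X : Type*} [PseudoMetricSpace X] [MeasurableSpace X]

/-- The points around which `μ` has `n`-dimensional density at most `C` at all scales below `ρ`. -/
def boundedDensitySet (n : ℕ) (μ : Measure X) (C ρ : ℝ) : Set X :=
  {x | ∀ r, 0 < r → r < ρ → μ (closedBall x r) ≤ ENNReal.ofReal (C * r ^ n)}

lemma closure_boundedDensitySet_subset (n : ℕ) (μ : Measure X) (C ρ : ℝ) :
    closure (boundedDensitySet n μ C ρ) ⊆ boundedDensitySet n μ (C * 2 ^ n) (ρ / 2) := by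
  intro z hz r hr hrρ
  obtain ⟨y, hy, hzy⟩ := Metric.mem_closure_iff.1 hz r hr
  calc μ (closedBall z r) ≤ μ (closedBall y (2 * r)) :=
        measure_mono (closedBall_subset_closedBall' (by linarith))
    _ ≤ ENNReal.ofReal (C * (2 * r) ^ n) := hy (2 * r) (by positivity) (by linarith)
    _ = ENNReal.ofReal (C * 2 ^ n * r ^ n) := by rw [mul_pow, mul_assoc]

end BoundedDensitySet

section Hausdorff

variable {X : Type*} [MetricSpace X] [MeasurableSpace X] [BorelSpace X] {n : ℕ}

lemma exists_countable_cover_tsum_ediam_pow_le [TopologicalSpace.SeparableSpace X] {μ : Measure X}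
    {A : Set X} {C ρ : ℝ} (hC : 0 < C) (hρ : 0 < ρ)
    (hdense : ∀ x ∈ A, ∀ ρ > 0, ∃ r, 0 < r ∧ r < ρ ∧
      ENNReal.ofReal (C * r ^ n) ≤ μ (closedBall x r)) :
    ∃ (u : Set X) (t : X → Set X), u.Countable ∧ (∀ x ∈ u, ediam (t x) ≤ ENNReal.ofReal ρ) ∧
      A ⊆ ⋃ x : u, t x ∧ ∑' x : u, ediam (t x) ^ n ≤ ENNReal.ofReal (10 ^ n / C) * μ univ := by
  choose! r hr_pos hr_lt hr_dense using fun x hx => hdense x hx (ρ / 10) (by positivity)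
  obtain ⟨u, huA, hcount, hdisj, hcov⟩ :=
    exists_countable_closedBall_cover hr_pos fun x hx => (hr_lt x hx).le
  have hdiam (x : X) : ediam (closedBall x (5 * r x)) ≤ ENNReal.ofReal (10 * r x) :=
    ediam_le_of_forall_dist_le fun y hy z hz => by
      linarith [dist_triangle_right y z x, mem_closedBall.1 hy, mem_closedBall.1 hz]
  refine ⟨u, fun x => closedBall x (5 * r x), hcount, fun x hx => (hdiam x).trans ?_,
    hcov.trans_eq (biUnion_eq_iUnion u fun x _ => closedBall x (5 * r x)), ?_⟩
  · exact ENNReal.ofReal_le_ofReal (by linarith [hr_lt x (huA hx)])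
  have hterm (x : u) : ediam (closedBall (x : X) (5 * r x)) ^ n ≤
      ENNReal.ofReal (10 ^ n / C) * μ (closedBall (x : X) (r x)) := by
    have hx := hr_pos x (huA x.2)
    calc ediam (closedBall (x : X) (5 * r x)) ^ n ≤ ENNReal.ofReal (10 * r x) ^ n := by
          gcongr; exact hdiam x
      _ = ENNReal.ofReal (10 ^ n / C) * ENNReal.ofReal (C * r x ^ n) := by
          rw [← ENNReal.ofReal_pow (by positivity), ← ENNReal.ofReal_mul (by positivity), mul_pow,
            ← mul_assoc, div_mul_cancel₀ _ hC.ne']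
      _ ≤ ENNReal.ofReal (10 ^ n / C) * μ (closedBall (x : X) (r x)) := by
          gcongr; exact hr_dense x (huA x.2)
  calc ∑' x : u, ediam (closedBall (x : X) (5 * r x)) ^ n
      ≤ ENNReal.ofReal (10 ^ n / C) * ∑' x : u, μ (closedBall (x : X) (r x)) :=
        (ENNReal.tsum_le_tsum hterm).trans_eq ENNReal.tsum_mul_left
    _ ≤ ENNReal.ofReal (10 ^ n / C) * μ univ := by
        rw [← measure_biUnion hcount hdisj fun x _ => isClosed_closedBall.measurableSet]
        gcongr
        exact subset_univ _

lemma hausdorffMeasure_le_of_dense [TopologicalSpace.SeparableSpace X] {μ : Measure X} {A : Set X}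
    {C : ℝ} (hC : 0 < C)
    (hdense : ∀ x ∈ A, ∀ ρ > 0, ∃ r, 0 < r ∧ r < ρ ∧
      ENNReal.ofReal (C * r ^ n) ≤ μ (closedBall x r)) :
    μH[(n : ℝ)] A ≤ ENNReal.ofReal (10 ^ n / C) * μ univ := by
  choose u t hcount hdiam hcov hsum using fun k : ℕ =>
    exists_countable_cover_tsum_ediam_pow_le hC (Nat.one_div_pos_of_nat (n := k)) hdense
  have (k : ℕ) : Countable (u k) := (hcount k).to_subtype
  have hlim : Filter.Tendsto (fun k : ℕ => ENNReal.ofReal (1 / ((k : ℝ) + 1))) Filter.atTop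
      (nhds 0) := by
    simpa only [ENNReal.ofReal_zero] using
      ENNReal.tendsto_ofReal (tendsto_one_div_add_atTop_nhds_zero_nat (𝕜 := ℝ))
  refine (Measure.hausdorffMeasure_le_liminf_tsum (n : ℝ) A _ hlim (fun k (x : u k) => t k x)
    (.of_forall fun k x => hdiam k x x.2) (.of_forall hcov)).trans ?_
  simp only [ENNReal.rpow_natCast]
  exact (Filter.liminf_le_liminf (.of_forall hsum)).trans_eq (Filter.liminf_const _)

lemma hausdorffMeasure_compl_iUnion_boundedDensitySet [TopologicalSpace.SeparableSpace X]
    (μ : Measure X) [IsFiniteMeasure μ] :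
    μH[(n : ℝ)] (⋃ j : ℕ, boundedDensitySet n μ (j + 1) (1 / (j + 1)))ᶜ = 0 := by
  have hle (j : ℕ) : μH[(n : ℝ)] (⋃ j : ℕ, boundedDensitySet n μ (j + 1) (1 / (j + 1)))ᶜ ≤
      ENNReal.ofReal (10 ^ n / ((j : ℝ) + 1)) * μ univ := by
    refine hausdorffMeasure_le_of_dense (by positivity) fun x hx ρ hρ => ?_
    obtain ⟨i, hi⟩ := exists_nat_one_div_lt hρ
    have hxmax : x ∉ boundedDensitySet n μ ((max i j : ℕ) + 1) (1 / ((max i j : ℕ) + 1)) :=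
      fun hmem => hx (mem_iUnion.2 ⟨_, hmem⟩)
    simp only [boundedDensitySet, mem_ofPred_eq, not_forall, not_le] at hxmax
    obtain ⟨r, hr_pos, hr_lt, hr_dense⟩ := hxmax
    refine ⟨r, hr_pos, hr_lt.trans_le (le_trans ?_ hi.le), le_trans ?_ hr_dense.le⟩
    · gcongr; exact le_max_left _ _
    · gcongr; exact le_max_right _ _
  have hlim : Filter.Tendsto (fun j : ℕ => ENNReal.ofReal (10 ^ n / ((j : ℝ) + 1)) * μ univ)
      Filter.atTop (nhds 0) := by
    have hreal := (tendsto_one_div_add_atTop_nhds_zero_nat (𝕜 := ℝ)).const_mul (10 ^ n)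
    simpa only [mul_one_div, mul_zero, ENNReal.ofReal_zero, zero_mul] using
      ENNReal.Tendsto.mul_const (ENNReal.tendsto_ofReal hreal) (.inr (measure_ne_top μ univ))
  exact le_antisymm (ge_of_tendsto' hlim hle) zero_le

lemma exists_subset_boundedDensitySet [TopologicalSpace.SeparableSpace X] {E : Set X}
    (hE : MeasurableSet E) (h₀ : μH[(n : ℝ)] E ≠ 0) (μ : Measure X) [IsFiniteMeasure μ] :
    ∃ C ρ : ℝ, 0 < C ∧ 0 < ρ ∧ ∃ A ⊆ E, MeasurableSet A ∧ μH[(n : ℝ)] A ≠ 0 ∧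
      A ⊆ boundedDensitySet n μ C ρ := by
  let G (j : ℕ) : Set X := boundedDensitySet n μ (j + 1) (1 / (j + 1))
  have hcover : E ⊆ (⋃ j, G j)ᶜ ∪ ⋃ j, E ∩ closure (G j) := fun x hx => by
    by_cases hxG : x ∈ ⋃ j, G j
    · obtain ⟨j, hj⟩ := mem_iUnion.1 hxG
      exact .inr (mem_iUnion.2 ⟨j, hx, subset_closure hj⟩)
    · exact .inl hxG
  obtain ⟨j, hj⟩ : ∃ j, μH[(n : ℝ)] (E ∩ closure (G j)) ≠ 0 := by
    by_contra! hnull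
    exact h₀ (measure_mono_null hcover (measure_union_null
      (hausdorffMeasure_compl_iUnion_boundedDensitySet μ) (measure_iUnion_null hnull)))
  exact ⟨_, _, by positivity, by positivity, E ∩ closure (G j), inter_subset_left,
    hE.inter isClosed_closure.measurableSet, hj,
    inter_subset_right.trans (closure_boundedDensitySet_subset n μ _ _)⟩

lemma two_smul_restrict_le_hausdorffMeasure (hn : n ≠ 0) {E : Set X} (hE : MeasurableSet E) {ρ : ℝ}
    (hρ : 0 < ρ)
    (hsparse : ∀ x ∈ E, ∀ r, 0 < r → r ≤ ρ →
      μH[(n : ℝ)] (E ∩ closedBall x r) ≤ ENNReal.ofReal (1 / 2 * r ^ n)) :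
    (2 : ℝ≥0∞) • μH[(n : ℝ)].restrict E ≤ μH[(n : ℝ)] := by
  have : NullSingletonClass (μH[(n : ℝ)] : Measure X) :=
    Measure.nullSingletonClass_hausdorff X (by positivity)
  refine Measure.le_hausdorffMeasure (n : ℝ) _ (ENNReal.ofReal ρ) (by simpa using hρ) fun s hs => ?_
  rw [Measure.smul_apply, Measure.restrict_apply' hE, smul_eq_mul]
  rcases (s ∩ E).eq_empty_or_nonempty with hse | ⟨x, hxs, hxE⟩
  · simp [hse]
  have hne : ediam s ≠ ∞ := ne_top_of_le_ne_top ENNReal.ofReal_ne_top hs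
  have hdist {y} (hy : y ∈ s) : dist y x ≤ diam s := dist_le_diam_of_mem' hne hy hxs
  have hediam : ediam s = ENNReal.ofReal (diam s) := (ENNReal.ofReal_toReal hne).symm
  rcases (diam_nonneg : 0 ≤ diam s).eq_or_lt with hd | hd
  · have hsingle : s ∩ E ⊆ {x} := fun y hy => dist_le_zero.1 ((hdist hy.1).trans hd.ge)
    rw [measure_mono_null hsingle (measure_singleton x), mul_zero]
    exact zero_le
  have hdρ : diam s ≤ ρ := (ENNReal.ofReal_le_ofReal_iff hρ.le).1 (hediam ▸ hs)
  calc 2 * μH[(n : ℝ)] (s ∩ E) ≤ 2 * ENNReal.ofReal (1 / 2 * diam s ^ n) := by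
        gcongr
        have hsub : s ∩ E ⊆ E ∩ closedBall x (diam s) := fun y hy => ⟨hy.2, hdist hy.1⟩
        exact (measure_mono hsub).trans (hsparse x hxE _ hd hdρ)
    _ = ediam s ^ (n : ℝ) := by
        rw [ENNReal.rpow_natCast, hediam, ← ENNReal.ofReal_pow hd.le, ← ENNReal.ofReal_ofNat 2,
          ← ENNReal.ofReal_mul (by norm_num), ← mul_assoc]
        norm_num

lemma exists_dense_closedBall (hn : n ≠ 0) {E : Set X} (hE : MeasurableSet E)
    (h₀ : μH[(n : ℝ)] E ≠ 0) (hfin : μH[(n : ℝ)] E ≠ ∞) {ρ : ℝ} (hρ : 0 < ρ) :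
    ∃ x ∈ E, ∃ r, 0 < r ∧ r ≤ ρ ∧
      ENNReal.ofReal (1 / 2 * r ^ n) ≤ μH[(n : ℝ)] (E ∩ closedBall x r) := by
  by_contra! hsparse
  have hle := two_smul_restrict_le_hausdorffMeasure hn hE hρ
    (fun x hx r hr hrρ => (hsparse x hx r hr hrρ).le) E
  rw [Measure.smul_apply, Measure.restrict_apply_self, smul_eq_mul, two_mul] at hle
  exact hle.not_gt (ENNReal.lt_add_right hfin h₀)

end Hausdorff

/-! ### Localizing the curvature -/

section LocalCurv

variable {V : Type*} [NormedAddCommGroup V] [InnerProductSpace ℝ V] [MeasurableSpace V] {n : ℕ}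

/-- The total squared Menger curvature of a measure, up to the constant factor of `curvSq`. -/
def totalCurv (n : ℕ) (μ : Measure V) : ℝ≥0∞ :=
  ∫⁻ x, ENNReal.ofReal (curvSq x) ∂(Measure.pi fun _ : Fin (n + 2) => μ)

/-- The part of the pointwise curvature at `z` coming from simplices with all their vertices within
distance `ρ` of `z`. -/
def localCurv (n : ℕ) (μ : Measure V) (ρ : ℝ) (z : V) : ℝ≥0∞ :=
  ∫⁻ t in univ.pi fun _ => closedBall z ρ, ENNReal.ofReal (curvSq (Fin.snoc t z : Fin (n + 2) → V))
    ∂(Measure.pi fun _ : Fin (n + 1) => μ)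

lemma pointCurv_restrict_le_localCurv {μ : Measure V} [SigmaFinite μ] {F : Set V} {ρ : ℝ} {z : V}
    (hF : F ⊆ closedBall z ρ) : pointCurv n (μ.restrict F) z ≤ localCurv n μ ρ z := by
  rw [pointCurv, localCurv, ← Measure.restrict_pi_pi]
  exact lintegral_mono_set (pi_mono fun _ _ => hF)

lemma tendsto_localCurv [OpensMeasurableSpace V] {μ : Measure V} [IsFiniteMeasure μ] {z : V}
    (hz : μ {z} = 0) (hcurv : pointCurv n μ z ≠ ∞) :
    Filter.Tendsto (fun k : ℕ => localCurv n μ (1 / ((k : ℝ) + 1)) z) Filter.atTop (nhds 0) := by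
  refine tendsto_setLIntegral_zero hcurv ?_
  have hball : Filter.Tendsto (fun k : ℕ => μ (closedBall z (1 / ((k : ℝ) + 1)))) Filter.atTop
      (nhds 0) := by
    have hthick := (tendsto_measure_cthickening_of_isClosed (μ := μ) (s := {z})
      ⟨1, one_pos, measure_ne_top _ _⟩ isClosed_singleton).comp
      (tendsto_one_div_add_atTop_nhds_zero_nat (𝕜 := ℝ))
    rw [hz] at hthick
    refine hthick.congr fun k => ?_
    rw [Function.comp_apply, cthickening_singleton _ (by positivity)]
  have hpow := ((ENNReal.continuous_pow (n + 1)).tendsto 0).comp hball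
  rw [zero_pow n.succ_ne_zero] at hpow
  refine hpow.congr fun k => ?_
  simp [Measure.pi_pi]

variable [BorelSpace V] [SecondCountableTopology V]

lemma totalCurv_eq_lintegral_pointCurv (n : ℕ) (μ : Measure V) [SigmaFinite μ] :
    totalCurv n μ = ∫⁻ z, pointCurv n μ z ∂μ := by
  have hmp := (measurePreserving_piFinSuccAbove (fun _ : Fin (n + 2) => μ) (Fin.last (n + 1))).symm
  rw [totalCurv, ← hmp.lintegral_comp_emb (MeasurableEquiv.measurableEmbedding _)]
  have hsnoc (p : V × (Fin (n + 1) → V)) :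
      (MeasurableEquiv.piFinSuccAbove (fun _ : Fin (n + 2) => V) (Fin.last (n + 1))).symm p =
        Fin.snoc p.2 p.1 := Fin.insertNth_last' p.1 p.2
  simp only [hsnoc]
  exact lintegral_prod _ measurable_curvSq_snoc_prod.ennreal_ofReal.aemeasurable

lemma ae_pointCurv_ne_top {μ : Measure V} [SigmaFinite μ] (hcurv : totalCurv n μ ≠ ∞) :
    ∀ᵐ z ∂μ, pointCurv n μ z ≠ ∞ := by
  rw [totalCurv_eq_lintegral_pointCurv] at hcurv
  exact (ae_lt_top measurable_curvSq_snoc_prod.ennreal_ofReal.lintegral_prod_right' hcurv).mono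
    fun z hz => hz.ne

lemma measurable_localCurv (n : ℕ) (μ : Measure V) [SigmaFinite μ] (ρ : ℝ) :
    Measurable (localCurv n μ ρ) := by
  have hball : MeasurableSet
      {p : V × (Fin (n + 1) → V) | p.2 ∈ univ.pi fun _ => closedBall p.1 ρ} := by
    simp only [mem_univ_pi, mem_closedBall, ofPred_forall]
    exact MeasurableSet.iInter fun j => (isClosed_le (by fun_prop) continuous_const).measurableSet
  convert (measurable_curvSq_snoc_prod.ennreal_ofReal.indicator hball).lintegral_prod_right'
    (ν := Measure.pi fun _ : Fin (n + 1) => μ) using 2 with z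
  rw [localCurv, ← lintegral_indicator
    (MeasurableSet.univ_pi fun _ => isClosed_closedBall.measurableSet)]
  rfl

lemma exists_localCurv_le {μ : Measure V} [IsFiniteMeasure μ] [NullSingletonClass μ] {A : Set V}
    (hA : μ A ≠ 0) (hcurv : totalCurv n μ ≠ ∞) {η : ℝ≥0∞} (hη : 0 < η) :
    ∃ ρ > 0, μ (A ∩ {z | localCurv n μ ρ z ≤ η}) ≠ 0 := by
  by_contra! hnull
  have hcover : A ⊆ {z | ¬ pointCurv n μ z ≠ ∞} ∪
      ⋃ k : ℕ, A ∩ {z | localCurv n μ (1 / ((k : ℝ) + 1)) z ≤ η} := fun z hz => by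
    by_cases hzcurv : pointCurv n μ z ≠ ∞
    · obtain ⟨k, hk⟩ :=
        ((tendsto_localCurv (measure_singleton z) hzcurv).eventually (ge_mem_nhds hη)).exists
      exact .inr (mem_iUnion.2 ⟨k, hz, hk⟩)
    · exact .inl hzcurv
  exact hA (measure_mono_null hcover (measure_union_null (ae_iff.1 (ae_pointCurv_ne_top hcurv))
    (measure_iUnion_null fun k => hnull _ Nat.one_div_pos_of_nat)))

end LocalCurv

lemma upperRegular_restrict {X : Type*} [PseudoMetricSpace X] [MeasurableSpace X] {n : ℕ}
    {μ : Measure X} {F : Set X} {C ρ d : ℝ} (hC : 0 ≤ C) (hF : MeasurableSet F)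
    (hdens : F ⊆ boundedDensitySet n μ C ρ) (hd : 0 < d) (hdρ : d < ρ)
    (hdiam : ∀ z ∈ F, F ⊆ closedBall z d) : UpperRegular n (C * 2 ^ n) (μ.restrict F) := by
  intro y r hr
  rw [Measure.restrict_apply' hF]
  rcases (closedBall y r ∩ F).eq_empty_or_nonempty with he | ⟨z, hzy, hzF⟩
  · simp [he]
  have hsub : closedBall y r ∩ F ⊆ closedBall z (min (2 * r) d) := fun w ⟨hw, hwF⟩ =>
    mem_closedBall.2 (le_min (by
      linarith [dist_triangle_right w z y, mem_closedBall.1 hw, mem_closedBall.1 hzy])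
      (hdiam z hzF hwF))
  calc μ (closedBall y r ∩ F) ≤ μ (closedBall z (min (2 * r) d)) := measure_mono hsub
    _ ≤ ENNReal.ofReal (C * min (2 * r) d ^ n) :=
      hdens hzF _ (by positivity) ((min_le_right _ _).trans_lt hdρ)
    _ ≤ ENNReal.ofReal (C * 2 ^ n * r ^ n) := by
      rw [mul_assoc, ← mul_pow]
      gcongr
      exact min_le_left _ _

lemma exists_lipschitz_of_totalCurv {V : Type*} [NormedAddCommGroup V] [InnerProductSpace ℝ V]
    [FiniteDimensional ℝ V] [MeasurableSpace V] [BorelSpace V] {n : ℕ} (hn : 1 ≤ n) {E : Set V}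
    (hE : MeasurableSet E) (h₀ : μH[(n : ℝ)] E ≠ 0) (hfin : μH[(n : ℝ)] E ≠ ∞)
    (hcurv : totalCurv n (μH[(n : ℝ)].restrict E) ≠ ∞) :
    ∃ f : EuclideanSpace ℝ (Fin n) → V, (∃ L : ℝ≥0, LipschitzWith L f) ∧
      μH[(n : ℝ)] (E ∩ range f) ≠ 0 := by
  have : NullSingletonClass (μH[(n : ℝ)] : Measure V) :=
    Measure.nullSingletonClass_hausdorff V (by exact_mod_cast hn)
  set μ := μH[(n : ℝ)].restrict E
  have : IsFiniteMeasure μ := isFiniteMeasure_restrict.2 hfin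
  have hμ_sub {F : Set V} (hF : F ⊆ E) : μ F = μH[(n : ℝ)] F := Measure.restrict_eq_self _ hF
  obtain ⟨C, ρ, hC, hρ, A, hAE, hA, hA₀, hdens⟩ := exists_subset_boundedDensitySet hE h₀ μ
  obtain ⟨η, hη, hpiece⟩ := exists_lipschitz_piece V hn (C₀ := C * 2 ^ n) (c₀ := 1 / 2)
    (by positivity) (by norm_num)
  obtain ⟨ρ', hρ', hB₀⟩ := exists_localCurv_le (hμ_sub hAE ▸ hA₀) hcurv (ENNReal.ofReal_pos.2 hη)
  set B := A ∩ {z | localCurv n μ ρ' z ≤ ENNReal.ofReal η}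
  have hB : MeasurableSet B := hA.inter (measurable_localCurv n μ _ measurableSet_Iic)
  have hBE : B ⊆ E := inter_subset_left.trans hAE
  obtain ⟨x₀, -, r, hr, hr_le, hdense⟩ := exists_dense_closedBall (Nat.ne_of_gt hn) hB
    (hμ_sub hBE ▸ hB₀) (hμ_sub hBE ▸ measure_ne_top μ B) (ρ := min (ρ / 3) (ρ' / 2)) (by positivity)
  obtain ⟨hrρ, hrρ'⟩ := le_min_iff.1 hr_le
  set F := B ∩ closedBall x₀ r
  have hF : MeasurableSet F := hB.inter isClosed_closedBall.measurableSet
  have hFE : F ⊆ E := inter_subset_left.trans hBE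
  have hdiam : ∀ z ∈ F, F ⊆ closedBall z (2 * r) := fun z hz y hy => mem_closedBall.2 <| by
    linarith [dist_triangle_right y z x₀, mem_closedBall.1 hy.2, mem_closedBall.1 hz.2]
  have hr_diam : 2 * r ≤ ρ' := by linarith
  have hcurvF : ∀ z ∈ F, pointCurv n (μ.restrict F) z ≤ ENNReal.ofReal η := fun z hz =>
    (pointCurv_restrict_le_localCurv ((hdiam z hz).trans
      (closedBall_subset_closedBall hr_diam))).trans hz.1.2
  obtain ⟨G, hGF, hG₀, f, hf, hGf⟩ := hpiece (μ.restrict F) F x₀ r hF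
    (by rw [Measure.restrict_apply' hF, compl_inter_self, measure_empty])
    (upperRegular_restrict hC.le hF (fun z hz => hdens hz.1.1) (by positivity)
      (by linarith) hdiam)
    hr inter_subset_right (by rwa [Measure.restrict_apply_self, hμ_sub hFE]) hcurvF
  refine ⟨f, hf, fun hnull => hG₀ ?_⟩
  rw [Measure.restrict_eq_self _ hGF, hμ_sub (hGF.trans hFE)]
  exact measure_mono_null (subset_inter (hGF.trans hFE) hGf) hnull

/-! ### Rectifiability -/

section Rectifiable

variable {N n : ℕ}

lemma isNRectifiable_of_countable {ι : Type*} [Countable ι] [Nonempty ι]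
    {E : Set (EuclideanSpace ℝ (Fin N))}
    {f : ι → EuclideanSpace ℝ (Fin n) → EuclideanSpace ℝ (Fin N)}
    (hf : ∀ i, ∃ L : ℝ≥0, LipschitzWith L (f i)) (h : μH[(n : ℝ)] (E \ ⋃ i, range (f i)) = 0) :
    IsNRectifiable N n E := by
  obtain ⟨g, hg⟩ := exists_surjective_nat ι
  exact ⟨f ∘ g, fun k => hf (g k), by
    simpa only [Function.comp_apply, hg.iUnion_comp fun i => range (f i)] using h⟩

lemma isNRectifiable_of_subset_range {E : Set (EuclideanSpace ℝ (Fin N))}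
    {f : EuclideanSpace ℝ (Fin n) → EuclideanSpace ℝ (Fin N)} (hf : ∃ L : ℝ≥0, LipschitzWith L f)
    (hE : E ⊆ range f) : IsNRectifiable N n E :=
  isNRectifiable_of_countable (fun _ : Unit => hf) (by
    rw [iUnion_const, sdiff_eq_empty.2 hE, measure_empty])

lemma isNRectifiable_iUnion {ι : Type*} [Countable ι] [Nonempty ι]
    {E : ι → Set (EuclideanSpace ℝ (Fin N))} (hE : ∀ i, IsNRectifiable N n (E i)) :
    IsNRectifiable N n (⋃ i, E i) := by
  choose f hf hnull using hE
  refine isNRectifiable_of_countable (f := fun p : ι × ℕ => f p.1 p.2) (fun p => hf _ _)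
    (measure_mono_null ?_ (measure_iUnion_null hnull))
  rw [iUnion_sdiff]
  refine iUnion_mono fun i => sdiff_subset_sdiff_right (iUnion_subset fun k => ?_)
  exact subset_iUnion (fun p : ι × ℕ => range (f p.1 p.2)) (i, k)

lemma isNRectifiable_union {E F : Set (EuclideanSpace ℝ (Fin N))} (hE : IsNRectifiable N n E)
    (hF : IsNRectifiable N n F) : IsNRectifiable N n (E ∪ F) := by
  rw [union_eq_iUnion]
  exact isNRectifiable_iUnion (Bool.rec hF hE)

end Rectifiable

section Exhaustion

variable {X : Type*} [MeasurableSpace X]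

lemma exists_seq_forall_measure_union_iUnion_le (ν : Measure X) {𝒞 : Set (Set X)}
    (h𝒞 : 𝒞.Nonempty) :
    ∃ t : ℕ → Set X, (∀ i, t i ∈ 𝒞) ∧ ∀ C ∈ 𝒞, ν (C ∪ ⋃ i, t i) ≤ ν (⋃ i, t i) := by
  let S : Set ℝ≥0∞ := {a | ∃ s : ℕ → Set X, (∀ i, s i ∈ 𝒞) ∧ ν (⋃ i, s i) = a}
  obtain ⟨C₀, hC₀⟩ := h𝒞
  obtain ⟨u, -, hu, huS⟩ :=
    exists_seq_tendsto_sSup (S := S) ⟨_, fun _ => C₀, fun _ => hC₀, rfl⟩ (OrderTop.bddAbove S)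
  choose s hs hsu using huS
  refine ⟨fun i => s i.unpair.1 i.unpair.2, fun i => hs _ _, fun C hC => ?_⟩
  have hsup : sSup S ≤ ν (⋃ i : ℕ, s i.unpair.1 i.unpair.2) := le_of_tendsto' hu fun k => by
    rw [← hsu k, iUnion_unpair s]
    exact measure_mono (subset_iUnion (fun k => ⋃ j, s k j) k)
  let t : ℕ → Set X := fun i => Nat.casesOn i C fun i => s i.unpair.1 i.unpair.2
  have ht : ∀ i, t i ∈ 𝒞 := Nat.rec hC fun i _ => hs _ _
  calc ν (C ∪ ⋃ i : ℕ, s i.unpair.1 i.unpair.2) = ν (⋃ i, t i) :=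
        congrArg ν (union_iUnion_nat_succ t)
    _ ≤ sSup S := le_sSup ⟨t, ht, rfl⟩
    _ ≤ ν (⋃ i : ℕ, s i.unpair.1 i.unpair.2) := hsup

lemma exists_seq_measure_compl_iUnion_eq_zero {ν : Measure X} [IsFiniteMeasure ν]
    {𝒞 : Set (Set X)} (h𝒞 : 𝒞.Nonempty) (hmeas : ∀ C ∈ 𝒞, MeasurableSet C)
    (hmeet : ∀ F, MeasurableSet F → ν F ≠ 0 → ∃ C ∈ 𝒞, ν (F ∩ C) ≠ 0) :
    ∃ t : ℕ → Set X, (∀ i, t i ∈ 𝒞) ∧ ν (⋃ i, t i)ᶜ = 0 := by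
  obtain ⟨t, ht, hmax⟩ := exists_seq_forall_measure_union_iUnion_le ν h𝒞
  have hU : MeasurableSet (⋃ i, t i) := MeasurableSet.iUnion fun i => hmeas _ (ht i)
  refine ⟨t, ht, ?_⟩
  by_contra hpos
  obtain ⟨C, hC, hCpos⟩ := hmeet _ hU.compl hpos
  have hle := hmax C hC
  rw [union_comm, ← union_sdiff_self, measure_union disjoint_sdiff_right ((hmeas C hC).diff hU),
    sdiff_eq, inter_comm] at hle
  exact hle.not_gt (ENNReal.lt_add_right (measure_ne_top ν _) hCpos)

end Exhaustion

lemma measurableSet_range_of_continuous {X Y : Type*} [TopologicalSpace X] [SigmaCompactSpace X]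
    [TopologicalSpace Y] [T2Space Y] [MeasurableSpace Y] [OpensMeasurableSpace Y] {f : X → Y}
    (hf : Continuous f) : MeasurableSet (range f) := by
  obtain ⟨K, hK, hKu⟩ := isSigmaCompact_range hf
  rw [← hKu]
  exact MeasurableSet.iUnion fun k => (hK k).measurableSet

lemma isNRectifiable_of_forall_exists_lipschitz {N n : ℕ} {E : Set (EuclideanSpace ℝ (Fin N))}
    (hE : MeasurableSet E) (hfin : μH[(n : ℝ)] E ≠ ∞)
    (hmeet : ∀ F ⊆ E, MeasurableSet F → μH[(n : ℝ)] F ≠ 0 →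
      ∃ f : EuclideanSpace ℝ (Fin n) → EuclideanSpace ℝ (Fin N),
        (∃ L : ℝ≥0, LipschitzWith L f) ∧ μH[(n : ℝ)] (F ∩ range f) ≠ 0) :
    IsNRectifiable N n E := by
  have : IsFiniteMeasure (μH[(n : ℝ)].restrict E) := isFiniteMeasure_restrict.2 hfin
  let 𝒞 : Set (Set (EuclideanSpace ℝ (Fin N))) := {C | ∃ f : EuclideanSpace ℝ (Fin n) → _,
    (∃ L : ℝ≥0, LipschitzWith L f) ∧ range f = C}
  have h𝒞 : 𝒞.Nonempty := ⟨_, fun _ => 0, ⟨0, LipschitzWith.const 0⟩, rfl⟩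
  have hmeas : ∀ C ∈ 𝒞, MeasurableSet C := by
    rintro _ ⟨f, ⟨L, hf⟩, rfl⟩
    exact measurableSet_range_of_continuous hf.continuous
  obtain ⟨t, ht, hnull⟩ := exists_seq_measure_compl_iUnion_eq_zero (ν := μH[(n : ℝ)].restrict E)
    h𝒞 hmeas fun F hF hF₀ => by
      rw [Measure.restrict_apply hF] at hF₀
      obtain ⟨f, hf, hfF⟩ := hmeet _ inter_subset_right (hF.inter hE) hF₀
      refine ⟨range f, ⟨f, hf, rfl⟩, ?_⟩
      rwa [Measure.restrict_apply' hE, inter_right_comm]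
  choose f hf hft using ht
  refine ⟨f, hf, ?_⟩
  rw [Measure.restrict_apply' hE, inter_comm, ← sdiff_eq] at hnull
  simpa only [hft] using hnull

lemma measure_pi_mono {ι α : Type*} [Fintype ι] [MeasurableSpace α] {μ ν : Measure α}
    (h : μ ≤ ν) : (Measure.pi fun _ : ι => μ) ≤ Measure.pi fun _ : ι => ν := by
  refine Measure.le_iff.2 fun s hs => ?_
  rw [Measure.pi_def, Measure.pi_def, toMeasure_apply _ _ hs, toMeasure_apply _ _ hs]
  refine OuterMeasure.le_boundedBy.2 (fun t => ?_) s
  exact (OuterMeasure.boundedBy_le t).trans (Finset.prod_le_prod' fun i _ => h _)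

lemma totalCurv_mono {V : Type*} [NormedAddCommGroup V] [InnerProductSpace ℝ V] [MeasurableSpace V]
    {n : ℕ} {μ ν : Measure V} (h : μ ≤ ν) : totalCurv n μ ≤ totalCurv n ν :=
  lintegral_mono' (measure_pi_mono h) le_rfl

lemma isNRectifiable_of_measure_ne_top {N n : ℕ} (hn : 1 ≤ n) {E : Set (EuclideanSpace ℝ (Fin N))}
    (hE : MeasurableSet E) (hfin : μH[(n : ℝ)] E ≠ ∞)
    (hcurv : totalCurv n (μH[(n : ℝ)].restrict E) ≠ ∞) : IsNRectifiable N n E :=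
  isNRectifiable_of_forall_exists_lipschitz hE hfin fun _ hFE hF hF₀ =>
    exists_lipschitz_of_totalCurv hn hF hF₀ (ne_top_of_le_ne_top hfin (measure_mono hFE))
      (ne_top_of_le_ne_top hcurv (totalCurv_mono (Measure.restrict_mono hFE le_rfl)))

/-! ### Sets of infinite measure -/

section Pi

variable {ι α : Type*} [Fintype ι] [Nonempty ι] [MeasurableSpace α] {μ : Measure α}

lemma exists_cover_of_measure_pi_ne_top {T : Set (ι → α)} (hT : MeasurableSet T)
    (hfin : (Measure.pi fun _ : ι => μ) T ≠ ∞) :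
    ∃ (S : ℕ → Set (ι → α)) (i : ℕ → ι), T ⊆ ⋃ k, S k ∧
      ∀ k, μ (Function.eval (i k) '' S k) ≠ ∞ := by
  rw [Measure.pi_def, toMeasure_apply _ _ hT, OuterMeasure.pi, OuterMeasure.boundedBy_apply] at hfin
  obtain ⟨S, hS⟩ := iInf_lt_iff.1 (lt_top_iff_ne_top.2 hfin)
  obtain ⟨hTS, hsum⟩ := iInf_lt_iff.1 hS
  have hproj (k : ℕ) : ∃ i, μ (Function.eval i '' S k) ≠ ∞ := by
    by_contra! htop
    rcases (S k).eq_empty_or_nonempty with he | hne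
    · obtain ⟨i⟩ := ‹Nonempty ι›
      simpa [he] using htop i
    · refine ENNReal.ne_top_of_tsum_ne_top hsum.ne k ?_
      have (i : ι) : μ.toOuterMeasure (Function.eval i '' S k) = ∞ := htop i
      simp [iSup_pos hne, piPremeasure, this]
  choose i hi using hproj
  exact ⟨S, i, hTS, hi⟩

/-- The measure `μ` need not be σ-finite: an integrable function on the power can only see a
σ-finite part of `μ`. -/
lemma exists_measure_ne_top_of_lintegral_pi_ne_top {g : (ι → α) → ℝ≥0∞} (hg : Measurable g)
    (hfin : ∫⁻ x, g x ∂(Measure.pi fun _ : ι => μ) ≠ ∞) :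
    ∃ D : ℕ × ℕ → Set α, (∀ p, MeasurableSet (D p)) ∧ (∀ p, μ (D p) ≠ ∞) ∧
      ∀ x : ι → α, (∀ i, x i ∉ ⋃ p, D p) → g x = 0 := by
  have hlevel (j : ℕ) : (Measure.pi fun _ : ι => μ) {x | (j : ℝ≥0∞)⁻¹ ≤ g x} ≠ ∞ :=
    (ENNReal.lt_top_of_mul_ne_top_right
      (ne_top_of_le_ne_top hfin (mul_meas_ge_le_lintegral hg _))
      (ENNReal.inv_ne_zero.2 (ENNReal.natCast_ne_top j))).ne
  choose S i hS hfinS using fun j =>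
    exists_cover_of_measure_pi_ne_top (hg measurableSet_Ici) (hlevel j)
  refine ⟨fun p => toMeasurable μ (Function.eval (i p.1 p.2) '' S p.1 p.2),
    fun p => measurableSet_toMeasurable _ _, fun p => ?_, fun x hx => ?_⟩
  · rw [measure_toMeasurable]
    exact hfinS p.1 p.2
  · by_contra hpos
    obtain ⟨j, hj⟩ := ENNReal.exists_inv_nat_lt hpos
    obtain ⟨k, hk⟩ := mem_iUnion.1 (hS j hj.le)
    exact hx (i j k) (mem_iUnion.2 ⟨(j, k), subset_toMeasurable _ _ (mem_image_of_mem _ hk)⟩)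

end Pi

lemma finrank_vectorSpan_le_of_forall_not_affineIndependent {k V P : Type*} [DivisionRing k]
    [AddCommGroup V] [Module k V] [FiniteDimensional k V] [AddTorsor V P] {n : ℕ} {S : Set P}
    (hS : ∀ x : Fin (n + 2) → P, (∀ i, x i ∈ S) → ¬ AffineIndependent k x) :
    Module.finrank k (vectorSpan k S) ≤ n := by
  obtain ⟨t, htS, hspan, hind⟩ := exists_affineIndependent k V S
  have : Fintype t := @Fintype.ofFinite t (finite_set_of_fin_dim_affineIndependent k hind)
  have hcard : Fintype.card t ≤ n + 1 := by
    by_contra! hlt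
    obtain ⟨e⟩ : Nonempty (Fin (n + 2) ↪ t) :=
      Function.Embedding.nonempty_of_card_le (by rwa [Fintype.card_fin])
    exact hS _ (fun i => htS (e i).2) (hind.comp_embedding e)
  rcases isEmpty_or_nonempty t with htempty | htne
  · rw [← direction_affineSpan, ← hspan, isEmpty_coe_sort.1 htempty, AffineSubspace.span_empty,
      AffineSubspace.direction_bot, finrank_bot]
    exact n.zero_le
  · have hrank := hind.finrank_vectorSpan_add_one
    rw [Subtype.range_coe, ← direction_affineSpan, hspan, direction_affineSpan] at hrank
    exact Nat.le_of_succ_le_succ (hrank.trans_le hcard)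

lemma exists_lipschitz_of_finrank_vectorSpan_le {V : Type*} [NormedAddCommGroup V]
    [NormedSpace ℝ V] [FiniteDimensional ℝ V] {n : ℕ} {S : Set V}
    (hS : Module.finrank ℝ (vectorSpan ℝ S) ≤ n) :
    ∃ f : EuclideanSpace ℝ (Fin n) → V, (∃ L : ℝ≥0, LipschitzWith L f) ∧ S ⊆ range f := by
  rcases S.eq_empty_or_nonempty with rfl | ⟨p, hp⟩
  · exact ⟨fun _ => 0, ⟨0, LipschitzWith.const 0⟩, empty_subset _⟩
  obtain ⟨g, hg⟩ : ∃ g : vectorSpan ℝ S →ₗ[ℝ] EuclideanSpace ℝ (Fin n), Function.Injective g :=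
    finrank_le_iff_exists_linearMap.1 (by rwa [finrank_euclideanSpace_fin])
  obtain ⟨l, hl⟩ := g.exists_leftInverse_of_injective (LinearMap.ker_eq_bot.2 hg)
  let L : EuclideanSpace ℝ (Fin n) →L[ℝ] V :=
    LinearMap.toContinuousLinearMap ((vectorSpan ℝ S).subtype ∘ₗ l)
  refine ⟨fun c => p + L c, ⟨‖L‖₊, ?_⟩, fun q hq => ?_⟩
  · exact LipschitzWith.of_dist_le_mul fun a b => by
      rw [dist_add_left]; exact L.lipschitz.dist_le_mul a b
  · let w : vectorSpan ℝ S := ⟨q - p, vsub_mem_vectorSpan ℝ hq hp⟩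
    have hlw : l (g w) = w := LinearMap.congr_fun hl w
    exact ⟨g w, by simp [L, hlw, w]⟩

lemma isNRectifiable_of_totalCurv {N n : ℕ} (hn : 1 ≤ n) {E : Set (EuclideanSpace ℝ (Fin N))}
    (hE : MeasurableSet E) (hcurv : totalCurv n (μH[(n : ℝ)].restrict E) ≠ ∞) :
    IsNRectifiable N n E := by
  obtain ⟨D, hD, hDfin, hzero⟩ :=
    exists_measure_ne_top_of_lintegral_pi_ne_top measurable_curvSq.ennreal_ofReal hcurv
  have hfinite : IsNRectifiable N n (⋃ p, E ∩ D p) := isNRectifiable_iUnion fun p =>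
    isNRectifiable_of_measure_ne_top hn (hE.inter (hD p))
      (by rw [inter_comm, ← Measure.restrict_apply (hD p)]; exact hDfin p)
      (ne_top_of_le_ne_top hcurv (totalCurv_mono (Measure.restrict_mono inter_subset_left le_rfl)))
  have hflat : ∀ x : Fin (n + 2) → EuclideanSpace ℝ (Fin N), (∀ i, x i ∈ E \ ⋃ p, D p) →
      ¬ AffineIndependent ℝ x := fun x hx hind =>
    (ENNReal.ofReal_pos.2 (curvSq_pos hind)).ne' (hzero x fun i => (hx i).2)
  obtain ⟨f, hf, hrange⟩ := exists_lipschitz_of_finrank_vectorSpan_le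
    (finrank_vectorSpan_le_of_forall_not_affineIndependent hflat)
  rw [← inter_union_sdiff E (⋃ p, D p), inter_iUnion]
  exact isNRectifiable_union hfinite (isNRectifiable_of_subset_range hf hrange)

lemma mengerEnergy_K1_eq (N n : ℕ) (μ : Measure (EuclideanSpace ℝ (Fin N))) :
    MengerEnergy N n 2 (K1 N n) μ =
      ENNReal.ofReal (cornerVolume (n + 1) ^ 2) * totalCurv n μ := by
  simp only [MengerEnergy, Real.rpow_two, K1_sq, ENNReal.ofReal_mul (sq_nonneg _)]
  exact lintegral_const_mul _ measurable_curvSq.ennreal_ofReal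

end Menger

/-- **Theorem.** Let `1 ≤ n < N`. If `E ⊆ ℝ^N` is a Borel set with
`M_{K₁²}(E) = ∫_E ⋯ ∫_E K₁² dH^n ⋯ dH^n < ∞`, then `E` is `n`-rectifiable. -/
theorem menger_rectifiable_K1 {N n : ℕ} (hn : 1 ≤ n) (hnN : n < N)
    (E : Set (EuclideanSpace ℝ (Fin N))) (hE : MeasurableSet E)
    (hfin : MengerEnergy N n 2 (K1 N n) (μH[(n : ℝ)].restrict E) < ⊤) :
    IsNRectifiable N n E := by
  have hconst : ENNReal.ofReal (Menger.cornerVolume (n + 1) ^ 2) ≠ 0 :=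
    (ENNReal.ofReal_pos.2 (pow_pos (Menger.cornerVolume_pos _) 2)).ne'
  rw [Menger.mengerEnergy_K1_eq] at hfin
  exact Menger.isNRectifiable_of_totalCurv hn hE
    (ENNReal.lt_top_of_mul_ne_top_right hfin.ne hconst).ne

end
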